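/- arXiv:2302.00708 — 3 statements merged into one kernel-verified Lean document; each statement's English description precedes it below -/
import Mathlib

section
/- For every natural number n and every B in {1, 3}, the number of 10-regular partitions satisfies b_10(25n + 5B − 1) ≡ p_3(5n + B) (mod 2); and for every B in {1, 2}, the number of 20-regular partitions satisfies b_20(25n + 5B − 1) ≡ p(5n + B) (mod 2). -/
/-- The number of `m`-regular partitions of `n`, i.e. partitions of `n`
in which no part is divisible by `m`. -/
noncomputable def numRegularPartitions (m n : ℕ) : ℕ :=
  Nat.card {π : n.Partition // ∀ j ∈ π.parts, ¬ m ∣ j}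

/-- The number of `t`-multipartitions of `n`, i.e. `t`-tuples of partitions
whose sizes sum to `n`. -/
noncomputable def numMultipartitions (t n : ℕ) : ℕ :=
  Nat.card {f : Fin t → Σ k : ℕ, k.Partition // (∑ i, (f i).1) = n}

/-!
Write `f_k = ∏ (1 - X ^ (k * i))` modulo 2 and `P = 1 / f₁`, so that the `m`-regular partitions have
generating function `f_m * P`. Euler's pentagonal number theorem turns the coefficients of
`f₁ * f₂ = f₁ ^ 3` and of `f₁ * f₅` into counts of representations by `x ^ 2 + 2 * y ^ 2` and
`x ^ 2 + 5 * y ^ 2`; modulo 4 such a count only sees the points on the two axes, which gives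
`f₁ ^ 6 = f₁ * f₅ + X * f₅ ^ 6`.

Let `U` extract the coefficients at multiples of 5. It is linear over the series in `X ^ 5` and
commutes with squaring, so the sextic identity evaluates `U (f₁ ^ 5) = f₁ + X * f₅ ^ 5` and then
`U (X * P) = P ^ 5 + P(X ^ 5)`. As `f₁₀ = f₅ ^ 2` and `f₂₀ = f₅ ^ 4`, this yields
`U (X * f₅ ^ e * P) = P ^ (5 - e) + f_e * P(X ^ 5)` for `e = 2, 4`. The pentagonal numbers are
`0`, `1` or `2` modulo 5, so the last term has no coefficients in the residue classes at hand.
-/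

namespace PartitionParity

open Finset PowerSeries
open scoped PowerSeries.WithPiTopology

section GeneratingFunctions

variable (R : Type*) [CommRing R]

/-- The generating function `∑ p(n) X ^ n` of the partition function. -/
noncomputable def partitionSeries : R⟦X⟧ :=
  mk fun n ↦ (Fintype.card n.Partition : R)

/-- The generating function `∑ b_m(n) X ^ n` of the numbers of `m`-regular partitions. -/
noncomputable def regularPartitionSeries (m : ℕ) : R⟦X⟧ :=
  mk fun n ↦ (numRegularPartitions m n : R)

theorem continuous_expand [TopologicalSpace R] {m : ℕ} (hm : m ≠ 0) :
    Continuous (expand m hm : R⟦X⟧ → R⟦X⟧) := by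
  refine continuous_iff_continuousAt.mpr fun φ ↦ ?_
  refine (WithPiTopology.tendsto_iff_coeff_tendsto R _ _ _).mpr fun d ↦ ?_
  simp only [coeff_expand]
  split_ifs
  · exact (WithPiTopology.continuous_coeff R _).tendsto φ
  · exact tendsto_const_nhds

theorem partitionSeries_mul_pentagonalSeries :
    partitionSeries R * pentagonalSeries R = 1 := by
  let _ : TopologicalSpace R := ⊥
  have _ : DiscreteTopology R := ⟨rfl⟩
  have hpart := Nat.Partition.hasProd_powerSeriesMk_card_restricted R fun _ ↦ True
  have hprod := hpart.mul (WithPiTopology.hasProd_one_sub_X_pow R)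
  simp only [if_true, pow_mul] at hprod
  have hterm (i : ℕ) : (∑' j : ℕ, ((X : R⟦X⟧) ^ (i + 1)) ^ j) * (1 - X ^ (i + 1)) = 1 :=
    WithPiTopology.tsum_pow_mul_one_sub_of_constantCoeff_eq_zero (by simp)
  simp only [hterm] at hprod
  simpa [partitionSeries, Nat.Partition.restricted] using hprod.unique hasProd_one

theorem numRegularPartitions_eq_card_countRestricted {m : ℕ} (hm : 0 < m) (n : ℕ) :
    numRegularPartitions m n = #(Nat.Partition.countRestricted n m) := by
  rw [← Nat.Partition.card_restricted_eq_card_countRestricted n hm, numRegularPartitions,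
    Nat.card_eq_fintype_card, Fintype.card_subtype]
  rfl

theorem regularPartitionSeries_mul_pentagonalSeries {m : ℕ} (hm : m ≠ 0) :
    regularPartitionSeries R m * pentagonalSeries R = expand m hm (pentagonalSeries R) := by
  let _ : TopologicalSpace R := ⊥
  have _ : DiscreteTopology R := ⟨rfl⟩
  have hpos : 0 < m := Nat.pos_of_ne_zero hm
  have heuler := WithPiTopology.hasProd_one_sub_X_pow R
  have hprod := (Nat.Partition.hasProd_powerSeriesMk_card_countRestricted R hpos).mul heuler
  have hexpand := heuler.map (expand m hm : R⟦X⟧ →ₐ[R] R⟦X⟧) (continuous_expand R hm)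
  simp only [pow_mul, geom_sum_mul_neg] at hprod
  simp only [regularPartitionSeries, numRegularPartitions_eq_card_countRestricted hpos]
  refine hprod.unique ?_
  simpa only [Function.comp_def, map_sub, map_one, map_pow, expand_X, ← pow_mul,
    mul_comm m] using hexpand

/-- A multipartition is the tuple of its sizes together with a partition of each of them. -/
noncomputable def multipartitionEquiv (t n : ℕ) :
    {f : Fin t → Σ k : ℕ, k.Partition // (∑ i, (f i).1) = n} ≃
      Σ l : {l : Fin t →₀ ℕ // l ∈ finsuppAntidiag univ n}, ∀ i, (l.1 i).Partition where
  toFun f := ⟨⟨Finsupp.equivFunOnFinite.symm fun i ↦ (f.1 i).1, by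
    simpa [mem_finsuppAntidiag] using f.2⟩, fun i ↦ (f.1 i).2⟩
  invFun x := ⟨fun i ↦ ⟨x.1.1 i, x.2 i⟩, (mem_finsuppAntidiag.mp x.1.2).1⟩
  left_inv _ := rfl
  right_inv := by
    rintro ⟨⟨l, hl⟩, π⟩
    obtain ⟨l, rfl⟩ := Finsupp.equivFunOnFinite.symm.surjective l
    rfl

theorem numMultipartitions_eq_sum_prod (t n : ℕ) :
    numMultipartitions t n =
      ∑ l ∈ finsuppAntidiag univ n, ∏ i : Fin t, Fintype.card (l i).Partition := by
  rw [numMultipartitions, Nat.card_congr (multipartitionEquiv t n), Nat.card_eq_fintype_card,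
    Fintype.card_sigma]
  simp only [Fintype.card_pi]
  exact sum_coe_sort (finsuppAntidiag univ n) fun l ↦ ∏ i, Fintype.card (l i).Partition

theorem coeff_partitionSeries_pow (t n : ℕ) :
    coeff n (partitionSeries R ^ t) = numMultipartitions t n := by
  have hpow : partitionSeries R ^ t = ∏ _i : Fin t, partitionSeries R := by simp
  rw [hpow, coeff_prod, numMultipartitions_eq_sum_prod]
  simp [partitionSeries]

end GeneratingFunctions

section Representations

/-- The representations `(x, y)` of `M` by the quadratic form `x ^ 2 + d * y ^ 2`, for `0 < d`;
the box makes the set finite without excluding any solution. -/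
noncomputable def representations (d M : ℕ) : Finset (ℤ × ℤ) :=
  {z ∈ Icc (-M : ℤ) M ×ˢ Icc (-M : ℤ) M | z.1 ^ 2 + d * z.2 ^ 2 = M}

variable {d e M N : ℕ}

theorem mem_representations (hd : 0 < d) {x y : ℤ} :
    (x, y) ∈ representations d M ↔ x ^ 2 + d * y ^ 2 = M := by
  have hd' : (1 : ℤ) ≤ d := by exact_mod_cast hd
  simp only [representations, mem_filter, mem_product, mem_Icc, and_iff_right_iff_imp]
  intro h
  have hx := Int.le_self_sq x
  have hx' := Int.le_self_sq (-x)
  have hy := Int.le_self_sq y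
  have hy' := Int.le_self_sq (-y)
  have hdy := mul_le_mul_of_nonneg_right hd' (sq_nonneg y)
  refine ⟨⟨?_, ?_⟩, ?_, ?_⟩ <;> nlinarith [sq_nonneg x, sq_nonneg y]

theorem card_filter_eq_two_mul_of_involutive {α : Type*} {s : Finset α} {σ : α → α}
    (hσ : σ.Involutive) (hs : ∀ a ∈ s, σ a ∈ s) {p q : α → Prop} [DecidablePred p]
    [DecidablePred q] (hq : ∀ a ∈ s, q a ↔ p a ∨ p (σ a)) (hp : ∀ a ∈ s, p a → ¬ p (σ a)) :
    #{a ∈ s | q a} = 2 * #{a ∈ s | p a} := by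
  classical
  have hswap : #{a ∈ s | p (σ a)} = #{a ∈ s | p a} :=
    card_nbij' σ σ (fun a ha ↦ by simp_all) (fun a ha ↦ by simp_all [hσ a])
      (fun a _ ↦ hσ a) (fun a _ ↦ hσ a)
  rw [filter_congr hq, filter_or, card_union_of_disjoint (disjoint_filter.mpr hp), hswap, two_mul]

theorem card_of_neg_mem {s : Finset (ℤ × ℤ)} (hfst : ∀ z ∈ s, (-z.1, z.2) ∈ s)
    (hsnd : ∀ z ∈ s, (z.1, -z.2) ∈ s) (hzero : (0, 0) ∉ s) :
    #s = 4 * #{z ∈ s | 0 < z.1 ∧ 0 < z.2} +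
      2 * (#{z ∈ s | 0 < z.1 ∧ z.2 = 0} + #{z ∈ s | z.1 = 0 ∧ 0 < z.2}) := by
  have hfst_inv : (fun z : ℤ × ℤ ↦ (-z.1, z.2)).Involutive := fun z ↦ by simp
  have hsnd_inv : (fun z : ℤ × ℤ ↦ (z.1, -z.2)).Involutive := fun z ↦ by simp
  have hoff : #{z ∈ s | ¬ z.1 = 0} = 2 * #{z ∈ s | 0 < z.1} :=
    card_filter_eq_two_mul_of_involutive hfst_inv hfst (fun _ _ ↦ by grind) (fun _ _ ↦ by grind)
  have haxis : #{z ∈ s | z.1 = 0} = 2 * #{z ∈ s | z.1 = 0 ∧ 0 < z.2} :=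
    card_filter_eq_two_mul_of_involutive hsnd_inv hsnd (fun _ _ ↦ by grind) (fun _ _ ↦ by grind)
  have hquadrant : #{z ∈ s | 0 < z.1 ∧ ¬ z.2 = 0} = 2 * #{z ∈ s | 0 < z.1 ∧ 0 < z.2} :=
    card_filter_eq_two_mul_of_involutive hsnd_inv hsnd (fun _ _ ↦ by grind) (fun _ _ ↦ by grind)
  have hsplit := card_filter_add_card_filter_not (s := s) (fun z ↦ z.1 = 0)
  have hsplit_pos := card_filter_add_card_filter_not (s := {z ∈ s | 0 < z.1}) (fun z ↦ z.2 = 0)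
  simp only [filter_filter] at hsplit_pos
  omega

theorem card_eq_ite_of_subsingleton {α : Type*} {s : Finset α} {p : Prop} [Decidable p]
    (hs : (s : Set α).Subsingleton) (hp : s.Nonempty ↔ p) : #s = if p then 1 else 0 := by
  split_ifs with h
  · obtain ⟨a, ha⟩ := hp.mpr h
    exact card_eq_one.mpr ⟨a, eq_singleton_iff_unique_mem.mpr ⟨ha, fun b hb ↦ hs hb ha⟩⟩
  · exact card_eq_zero.mpr (not_nonempty_iff_eq_empty.mp (hp.not.mpr h))

open Classical in
theorem card_representations_fst_axis (hd : 0 < d) (hM : 0 < M) :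
    #{z ∈ representations d M | 0 < z.1 ∧ z.2 = 0} = if ∃ w, M = w ^ 2 then 1 else 0 := by
  refine card_eq_ite_of_subsingleton ?_ ⟨?_, ?_⟩
  · rintro ⟨x, y⟩ hx ⟨x', y'⟩ hx'
    simp only [coe_filter, Set.mem_ofPred_eq, mem_representations hd] at hx hx'
    obtain ⟨hx, hxpos, rfl⟩ := hx
    obtain ⟨hx', hxpos', rfl⟩ := hx'
    rw [← hx', add_left_inj, sq_eq_sq₀ hxpos.le hxpos'.le] at hx
    rw [hx]
  · rintro ⟨⟨x, y⟩, hx⟩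
    simp only [mem_filter, mem_representations hd] at hx
    obtain ⟨hx, hxpos, rfl⟩ := hx
    lift x to ℕ using hxpos.le
    exact ⟨x, by exact_mod_cast (by simpa using hx.symm : (M : ℤ) = x ^ 2)⟩
  · rintro ⟨w, rfl⟩
    have hw : 0 < w := Nat.pos_of_ne_zero (by rintro rfl; simp at hM)
    exact ⟨(w, 0), by simp [mem_representations hd, hw]⟩

open Classical in
theorem card_representations_snd_axis (hd : 0 < d) (hM : 0 < M) :
    #{z ∈ representations d M | z.1 = 0 ∧ 0 < z.2} = if ∃ w, M = d * w ^ 2 then 1 else 0 := by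
  refine card_eq_ite_of_subsingleton ?_ ⟨?_, ?_⟩
  · rintro ⟨x, y⟩ hy ⟨x', y'⟩ hy'
    simp only [coe_filter, Set.mem_ofPred_eq, mem_representations hd] at hy hy'
    obtain ⟨hy, rfl, hypos⟩ := hy
    obtain ⟨hy', rfl, hypos'⟩ := hy'
    rw [← hy', add_right_inj, mul_right_inj' (by exact_mod_cast hd.ne'),
      sq_eq_sq₀ hypos.le hypos'.le] at hy
    rw [hy]
  · rintro ⟨⟨x, y⟩, hy⟩
    simp only [mem_filter, mem_representations hd] at hy
    obtain ⟨hy, rfl, hypos⟩ := hy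
    lift y to ℕ using hypos.le
    exact ⟨y, by exact_mod_cast (by simpa using hy.symm : (M : ℤ) = d * y ^ 2)⟩
  · rintro ⟨w, rfl⟩
    have hw : 0 < w := Nat.pos_of_ne_zero (by rintro rfl; simp at hM)
    exact ⟨(0, w), by simp [mem_representations hd, hw]⟩

open Classical in
theorem card_representations (hd : 0 < d) (hM : 0 < M) :
    ∃ k, #(representations d M) =
      4 * k + 2 * ((if ∃ w, M = w ^ 2 then 1 else 0) + if ∃ w, M = d * w ^ 2 then 1 else 0) := by
  rw [← card_representations_fst_axis hd hM, ← card_representations_snd_axis hd hM]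
  refine ⟨_, card_of_neg_mem ?_ ?_ ?_⟩
  · simp [mem_representations hd]
  · simp [mem_representations hd]
  · simpa [mem_representations hd] using mod_cast hM.ne

theorem four_dvd_card_of_neg_mem {s : Finset (ℤ × ℤ)} (hfst : ∀ z ∈ s, (-z.1, z.2) ∈ s)
    (hsnd : ∀ z ∈ s, (z.1, -z.2) ∈ s) (hne : ∀ z ∈ s, z.1 ≠ 0 ∧ z.2 ≠ 0) : 4 ∣ #s := by
  have hright : #{z ∈ s | 0 < z.1 ∧ z.2 = 0} = 0 :=
    card_filter_eq_zero_iff.mpr fun z hz h ↦ (hne z hz).2 h.2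
  have hup : #{z ∈ s | z.1 = 0 ∧ 0 < z.2} = 0 :=
    card_filter_eq_zero_iff.mpr fun z hz h ↦ (hne z hz).1 h.1
  rw [card_of_neg_mem hfst hsnd (fun h ↦ (hne _ h).1 rfl), hright, hup]
  exact ⟨_, rfl⟩

theorem sq_emod_eight (x : ℤ) : x ^ 2 % 8 = 0 ∨ x ^ 2 % 8 = 1 ∨ x ^ 2 % 8 = 4 := by
  have hx : x % 8 = 0 ∨ x % 8 = 1 ∨ x % 8 = 2 ∨ x % 8 = 3 ∨ x % 8 = 4 ∨ x % 8 = 5 ∨ x % 8 = 6 ∨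
    x % 8 = 7 := by omega
  rcases hx with h | h | h | h | h | h | h | h <;> simp [pow_two, Int.mul_emod, h]

theorem add_one_dvd_sub_of_sq_add_mul_sq (hd : d = 2 ∨ d = 5) {u v : ℤ}
    (h : u ^ 2 + d * v ^ 2 = 24 * N + d + 1) (hv : 3 ∣ v) : (d + 1 : ℤ) ∣ v - u := by
  have hv2 : 3 ∣ v ^ 2 := dvd_pow hv two_ne_zero
  have hu : 3 ∣ u := Int.prime_three.dvd_of_dvd_pow (n := 2) (by
    rcases hd with rfl | rfl <;> push_cast at h <;> omega)
  rcases hd with rfl | rfl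
  · exact dvd_sub hv hu
  · have hu2 := Int.even_pow' (m := u) two_ne_zero
    have hv2 := Int.even_pow' (m := v) two_ne_zero
    simp only [Int.even_iff] at hu2 hv2
    push_cast at h ⊢
    omega

/-- `(x, y) ↦ (x - d * y, x + y)` multiplies the form `x ^ 2 + d * y ^ 2` by `d + 1`. The forms with
`d = 2` and `d = 5` are treated together through `(d + 1) * e = 6`. -/
theorem card_representations_three_dvd (hd : d = 2 ∧ e = 2 ∨ d = 5 ∧ e = 1) :
    #{z ∈ representations d (4 * e * N + 1) | 3 ∣ z.1 + z.2} =
      #{z ∈ representations d (24 * N + d + 1) | 3 ∣ z.2} := by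
  have hpos : 0 < d := by omega
  have hde : (d + 1 : ℤ) * e = 6 := by rcases hd with ⟨rfl, rfl⟩ | ⟨rfl, rfl⟩ <;> norm_num
  refine card_bij (fun z _ ↦ (z.1 - d * z.2, z.1 + z.2)) ?_ ?_ ?_
  · rintro ⟨x, y⟩ h
    simp only [mem_filter, mem_representations hpos] at h ⊢
    push_cast at h ⊢
    exact ⟨by linear_combination (d + 1 : ℤ) * h.1 + 4 * (N : ℤ) * hde, h.2⟩
  · rintro ⟨x, y⟩ - ⟨x', y'⟩ - h
    simp only [Prod.mk.injEq] at h
    have hy : y = y' := by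
      refine mul_left_cancel₀ (by omega : (d + 1 : ℤ) ≠ 0) ?_
      linear_combination h.2 - h.1
    exact Prod.ext (by linear_combination h.2 - hy) hy
  · rintro ⟨u, v⟩ h
    simp only [mem_filter, mem_representations hpos] at h
    push_cast at h
    obtain ⟨y, hy⟩ := add_one_dvd_sub_of_sq_add_mul_sq (by omega) h.1 h.2
    refine ⟨(v - y, y), ?_, Prod.ext (by linear_combination hy) (by ring)⟩
    simp only [mem_filter, mem_representations hpos, sub_add_cancel]
    push_cast
    refine ⟨mul_left_cancel₀ (by omega : (d + 1 : ℤ) ≠ 0) ?_, h.2⟩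
    obtain rfl : u = v - (d + 1) * y := by linear_combination -hy
    linear_combination h.1 - 4 * (N : ℤ) * hde

theorem four_dvd_card_representations_three_dvd (hd : d = 2 ∧ e = 2 ∨ d = 5 ∧ e = 1) :
    4 ∣ #{z ∈ representations d (4 * e * N + 1) | 3 ∣ z.1 + z.2} := by
  have hpos : 0 < d := by omega
  rw [card_representations_three_dvd hd]
  refine four_dvd_card_of_neg_mem ?_ ?_ ?_
  · simp [mem_representations hpos]
  · simp [mem_representations hpos]
  · rintro ⟨u, v⟩ h
    simp only [mem_filter, mem_representations hpos] at h
    have hu := sq_emod_eight u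
    have hv := sq_emod_eight v
    constructor <;> rintro rfl <;> rcases hd with ⟨rfl, rfl⟩ | ⟨rfl, rfl⟩ <;>
      push_cast at h <;> omega

end Representations

section PentagonalProducts

variable {d e N : ℕ}

theorem natAbs_le_pentagonal (k : ℤ) : k.natAbs ≤ pentagonal k := by
  have h := two_mul_natCast_pentagonal k
  zify
  rcases le_total k 0 with hk | hk
  · rw [abs_of_nonpos hk]
    nlinarith
  · rw [abs_of_nonneg hk]
    nlinarith [Int.le_self_sq k]

theorem constantCoeff_pentagonalSeries (R : Type*) [CommRing R] :
    constantCoeff (pentagonalSeries R) = 1 := by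
  rw [← coeff_zero_eq_constantCoeff_apply, show 0 = pentagonal 0 from rfl,
    coeff_pentagonalSeries_pentagonal, Int.negOnePow_zero, Units.val_one, Int.cast_one]

theorem coeff_expand_pentagonalSeries_eq_zero (R : Type*) [CommRing R] (hd : d ≠ 0) {n : ℕ}
    (hn : ¬ ∃ k, d * pentagonal k = n) : coeff n (expand d hd (pentagonalSeries R)) = 0 := by
  rw [coeff_expand]
  split_ifs with hdvd
  · obtain ⟨m, rfl⟩ := hdvd
    rw [Nat.mul_div_cancel_left m (Nat.pos_of_ne_zero hd)]
    refine coeff_pentagonalSeries_eq_zero R ?_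
    rintro ⟨k, rfl⟩
    exact hn ⟨k, rfl⟩
  · rfl

theorem coeff_expand_pentagonalSeries_zmod_two (hd : d ≠ 0) {n : ℕ} (hn : n ≤ N) :
    coeff n (expand d hd (pentagonalSeries (ZMod 2))) =
      #{k ∈ Icc (-N : ℤ) N | d * pentagonal k = n} := by
  classical
  have hcard : #{k ∈ Icc (-N : ℤ) N | d * pentagonal k = n} =
      if ∃ k, d * pentagonal k = n then 1 else 0 := by
    refine card_eq_ite_of_subsingleton ?_ ⟨fun ⟨k, hk⟩ ↦ ⟨k, (mem_filter.mp hk).2⟩, ?_⟩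
    · intro k hk l hl
      simp only [coe_filter, Set.mem_ofPred_eq] at hk hl
      exact pentagonal_injective (Nat.eq_of_mul_eq_mul_left (Nat.pos_of_ne_zero hd)
        (hk.2.trans hl.2.symm))
    · rintro ⟨k, hk⟩
      refine ⟨k, mem_filter.mpr ⟨mem_Icc.mpr ?_, hk⟩⟩
      have hle := natAbs_le_pentagonal k
      have hmul := Nat.le_mul_of_pos_left (pentagonal k) (Nat.pos_of_ne_zero hd)
      omega
  rw [hcard]
  split_ifs with h
  · obtain ⟨k, rfl⟩ := h
    rw [coeff_expand_mul, coeff_pentagonalSeries_pentagonal]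
    rcases Int.even_or_odd k with hk | hk <;> simp [Int.negOnePow_even, Int.negOnePow_odd, hk]
  · rw [coeff_expand_pentagonalSeries_eq_zero _ hd h, Nat.cast_zero]

/-- The pairs `(k, l)` with `pentagonal k + d * pentagonal l = N`, for `0 < d`; the box makes the
set finite without excluding any solution. -/
noncomputable def pentagonalPairs (d N : ℕ) : Finset (ℤ × ℤ) :=
  {z ∈ Icc (-N : ℤ) N ×ˢ Icc (-N : ℤ) N | pentagonal z.1 + d * pentagonal z.2 = N}

theorem mem_pentagonalPairs (hd : d ≠ 0) {k l : ℤ} :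
    (k, l) ∈ pentagonalPairs d N ↔ pentagonal k + d * pentagonal l = N := by
  simp only [pentagonalPairs, mem_filter, mem_product, mem_Icc, and_iff_right_iff_imp]
  intro h
  have hk := natAbs_le_pentagonal k
  have hl := natAbs_le_pentagonal l
  have hmul := Nat.le_mul_of_pos_left (pentagonal l) (Nat.pos_of_ne_zero hd)
  omega

theorem coeff_pentagonalSeries_mul_expand (hd : d ≠ 0) :
    coeff N (pentagonalSeries (ZMod 2) * expand d hd (pentagonalSeries (ZMod 2))) =
      #(pentagonalPairs d N) := by
  have hfiber := card_eq_sum_card_fiberwise (s := pentagonalPairs d N) (t := antidiagonal N)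
    (f := fun z ↦ (pentagonal z.1, d * pentagonal z.2)) fun z hz ↦ by
      simpa using (mem_filter.mp hz).2
  rw [hfiber, coeff_mul, Nat.cast_sum]
  refine sum_congr rfl fun ⟨i, j⟩ hij ↦ ?_
  replace hij : i + j = N := mem_antidiagonal.mp hij
  have hi : i ≤ N := hij ▸ Nat.le_add_right i j
  have hj : j ≤ N := hij ▸ Nat.le_add_left j i
  have hcoeff := coeff_expand_pentagonalSeries_zmod_two one_ne_zero hi
  rw [expand_one_apply] at hcoeff
  rw [hcoeff, coeff_expand_pentagonalSeries_zmod_two hd hj, ← Nat.cast_mul, ← card_product,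
    pentagonalPairs, filter_filter, ← filter_product]
  congr 2
  ext ⟨k, l⟩
  grind

theorem pentagonal_add_mul_pentagonal_eq_iff (hd : d = 2 ∧ e = 2 ∨ d = 5 ∧ e = 1) (k l : ℤ) :
    pentagonal k + d * pentagonal l = N ↔
      (e * (k + d * l) - 1) ^ 2 + d * (e * (l - k)) ^ 2 = (4 * e * N + 1 : ℤ) := by
  have hk := two_mul_natCast_pentagonal k
  have hl := two_mul_natCast_pentagonal l
  zify
  rcases hd with ⟨rfl, rfl⟩ | ⟨rfl, rfl⟩ <;> push_cast <;> constructor <;> intro h <;> nlinarith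

theorem odd_add_of_sq_add_mul_sq (hd : d = 2 ∧ e = 2 ∨ d = 5 ∧ e = 1) {x y : ℤ}
    (h : x ^ 2 + d * y ^ 2 = 4 * e * N + 1) : Odd (x + y) ∧ (e : ℤ) ∣ y := by
  have hx := sq_emod_eight x
  have hy := sq_emod_eight y
  have hx2 := Int.even_pow' (m := x) two_ne_zero
  have hy2 := Int.even_pow' (m := y) two_ne_zero
  simp only [Int.even_iff, Int.odd_iff] at hx2 hy2 ⊢
  rcases hd with ⟨rfl, rfl⟩ | ⟨rfl, rfl⟩ <;> push_cast at h ⊢ <;> omega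

/-- Completing the square through `24 * pentagonal k + 1 = (6 * k - 1) ^ 2` turns pairs of
pentagonal numbers into representations, up to the change of variables
`(u, v) = (x - d * y, x + y)` with `u = 6 * k - 1` and `v = 6 * l - 1`. -/
theorem card_pentagonalPairs (hd : d = 2 ∧ e = 2 ∨ d = 5 ∧ e = 1) :
    #(pentagonalPairs d N) = #{z ∈ representations d (4 * e * N + 1) | (z.1 + z.2) % 3 = 2} := by
  have hd0 : d ≠ 0 := by omega
  have hpos : 0 < d := Nat.pos_of_ne_zero hd0
  refine card_bij (fun z _ ↦ (e * (z.1 + d * z.2) - 1, e * (z.2 - z.1))) ?_ ?_ ?_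
  · rintro ⟨k, l⟩ h
    rw [mem_pentagonalPairs hd0, pentagonal_add_mul_pentagonal_eq_iff hd] at h
    refine mem_filter.mpr ⟨(mem_representations hpos).mpr (by exact_mod_cast h), ?_⟩
    rcases hd with ⟨rfl, rfl⟩ | ⟨rfl, rfl⟩ <;> push_cast <;> omega
  · rintro ⟨k, l⟩ - ⟨k', l'⟩ - h
    simp only [Prod.mk.injEq] at h ⊢
    rcases hd with ⟨rfl, rfl⟩ | ⟨rfl, rfl⟩ <;> push_cast at h <;> omega
  · rintro ⟨x, y⟩ h
    simp only [mem_filter, mem_representations hpos] at h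
    push_cast at h
    obtain ⟨hodd, m, rfl⟩ := odd_add_of_sq_add_mul_sq hd h.1
    obtain ⟨l, hl⟩ : 6 ∣ x + e * m + 1 := by grind
    obtain rfl : x = e * (l - m + d * l) - 1 := by
      rcases hd with ⟨rfl, rfl⟩ | ⟨rfl, rfl⟩ <;> push_cast at hl ⊢ <;> omega
    refine ⟨(l - m, l), ?_, by simp⟩
    rw [mem_pentagonalPairs hd0, pentagonal_add_mul_pentagonal_eq_iff hd, sub_sub_cancel]
    exact h.1

open Classical in
theorem coeff_pentagonalSeries_mul_expand_eq_ite (hd : d = 2 ∧ e = 2 ∨ d = 5 ∧ e = 1)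
    (hd0 : d ≠ 0) :
    coeff N (pentagonalSeries (ZMod 2) * expand d hd0 (pentagonalSeries (ZMod 2))) =
      (if ∃ w, 4 * e * N + 1 = w ^ 2 then 1 else 0) +
        if ∃ w, 4 * e * N + 1 = d * w ^ 2 then 1 else 0 := by
  have hneg : (fun z : ℤ × ℤ ↦ (-z.1, -z.2)).Involutive := fun z ↦ by simp
  have hpos : 0 < d := Nat.pos_of_ne_zero hd0
  have hhalf : #{z ∈ representations d (4 * e * N + 1) | ¬ 3 ∣ z.1 + z.2} =
      2 * #{z ∈ representations d (4 * e * N + 1) | (z.1 + z.2) % 3 = 2} :=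
    card_filter_eq_two_mul_of_involutive hneg (by simp [mem_representations hpos])
      (fun _ _ ↦ by grind) (fun _ _ ↦ by grind)
  have hsplit := card_filter_add_card_filter_not (s := representations d (4 * e * N + 1))
    (fun z ↦ 3 ∣ z.1 + z.2)
  obtain ⟨i, hi⟩ := four_dvd_card_representations_three_dvd (N := N) hd
  obtain ⟨j, hj⟩ := card_representations hpos (4 * e * N).add_one_pos
  have hparity : #(pentagonalPairs d N) ≡ (if ∃ w, 4 * e * N + 1 = w ^ 2 then 1 else 0) +
      (if ∃ w, 4 * e * N + 1 = d * w ^ 2 then 1 else 0) [MOD 2] := by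
    rw [card_pentagonalPairs hd, Nat.ModEq]
    omega
  rw [coeff_pentagonalSeries_mul_expand, (ZMod.natCast_eq_natCast_iff _ _ 2).mpr hparity]
  push_cast
  rfl

end PentagonalProducts

local notation "f₁" => pentagonalSeries (ZMod 2)
local notation "f₅" => expand 5 (Nat.succ_ne_zero 4) (pentagonalSeries (ZMod 2))
local notation "P" => partitionSeries (ZMod 2)

section EulerFunction

theorem pow_pow_eq_expand {p : ℕ} [hp : Fact p.Prime] (j : ℕ) (φ : (ZMod p)⟦X⟧) :
    φ ^ p ^ j = expand (p ^ j) (pow_ne_zero j hp.out.ne_zero) φ := by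
  have h := MvPowerSeries.map_iterateFrobenius_expand p hp.out.ne_zero φ j
  rw [iterateFrobenius_eq_pow, ZMod.frobenius_zmod, ← RingHom.one_def, one_pow, RingHom.one_def,
    MvPowerSeries.map_id] at h
  exact h.symm

theorem pow_eq_expand {p : ℕ} [hp : Fact p.Prime] (φ : (ZMod p)⟦X⟧) :
    φ ^ p = expand p hp.out.ne_zero φ := by
  simpa only [pow_one] using pow_pow_eq_expand 1 φ

open Classical in
theorem coeff_pentagonalSeries_pow_three (N : ℕ) :
    coeff N (f₁ ^ 3) = if ∃ w, 8 * N + 1 = w ^ 2 then 1 else 0 := by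
  have hcoeff := coeff_pentagonalSeries_mul_expand_eq_ite (N := N) (.inl ⟨rfl, rfl⟩) two_ne_zero
  have hodd : ¬ ∃ w, 4 * 2 * N + 1 = 2 * w ^ 2 := fun ⟨_, _⟩ ↦ by omega
  rwa [if_neg hodd, add_zero, ← pow_eq_expand, ← pow_succ'] at hcoeff

open Classical in
theorem coeff_pentagonalSeries_pow_six (N : ℕ) :
    coeff N (f₁ ^ 6) = if ∃ w, 4 * N + 1 = w ^ 2 then 1 else 0 := by
  rw [pow_mul _ 3 2, pow_eq_expand]
  obtain ⟨m, rfl⟩ | hN := Classical.em (2 ∣ N)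
  · rw [coeff_expand_mul, coeff_pentagonalSeries_pow_three, ← mul_assoc]
    rfl
  · have hsq : ¬ ∃ w, 4 * N + 1 = w ^ 2 := by
      rintro ⟨w, hw⟩
      have hmod := sq_emod_eight w
      zify at hw
      omega
    rw [coeff_expand_of_not_dvd _ _ _ hN, if_neg hsq]

open Classical in
theorem coeff_X_mul_expand_five_pow_six (N : ℕ) :
    coeff N (X * f₅ ^ 6) = if ∃ w, 4 * N + 1 = 5 * w ^ 2 then 1 else 0 := by
  rw [← map_pow]
  cases N with
  | zero =>
    rw [coeff_zero_X_mul, if_neg fun ⟨_, _⟩ ↦ by omega]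
  | succ n =>
    rw [coeff_succ_X_mul]
    obtain ⟨m, rfl⟩ | hn := Classical.em (5 ∣ n)
    · rw [coeff_expand_mul, coeff_pentagonalSeries_pow_six]
      exact if_congr (exists_congr fun w ↦ by omega) rfl rfl
    · rw [coeff_expand_of_not_dvd _ _ _ hn, if_neg fun ⟨_, _⟩ ↦ by omega]

theorem pentagonalSeries_pow_six : f₁ ^ 6 = f₁ * f₅ + X * f₅ ^ 6 := by
  classical
  ext N
  have hcoeff := coeff_pentagonalSeries_mul_expand_eq_ite (N := N) (.inr ⟨rfl, rfl⟩)
    (Nat.succ_ne_zero 4)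
  rw [map_add, hcoeff, coeff_pentagonalSeries_pow_six, coeff_X_mul_expand_five_pow_six, mul_one,
    add_assoc, CharTwo.add_self_eq_zero, add_zero]

end EulerFunction

section Dissection

variable {R : Type*} [CommRing R]

/-- The dissection operator `∑ a(n) X ^ n ↦ ∑ a(m * n) X ^ n`, known as `U_m` in the theory of
modular forms. -/
noncomputable def dissect (m : ℕ) : R⟦X⟧ →ₗ[R] R⟦X⟧ where
  toFun φ := mk fun n ↦ coeff (m * n) φ
  map_add' φ ψ := by ext; simp
  map_smul' a φ := by ext; simp

theorem coeff_dissect (m n : ℕ) (φ : R⟦X⟧) : coeff n (dissect m φ) = coeff (m * n) φ :=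
  coeff_mk n fun n ↦ coeff (m * n) φ

theorem dissect_expand_mul {m : ℕ} (hm : m ≠ 0) (φ ψ : R⟦X⟧) :
    dissect m (expand m hm φ * ψ) = φ * dissect m ψ := by
  ext n
  rw [coeff_dissect, coeff_mul, coeff_mul]
  symm
  refine sum_of_injOn (fun z ↦ (m * z.1, m * z.2)) ?_ ?_ ?_ ?_
  · rintro ⟨i, j⟩ - ⟨i', j'⟩ - h
    simpa [hm] using h
  · rintro ⟨i, j⟩ h
    simp only [SetLike.mem_coe, HasAntidiagonal.mem_antidiagonal] at h ⊢
    rw [← h, mul_add]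
  · rintro ⟨i, j⟩ h hnot
    have hdvd : ¬ m ∣ i := by
      rintro ⟨i, rfl⟩
      rw [HasAntidiagonal.mem_antidiagonal] at h
      obtain ⟨j, rfl⟩ := (Nat.dvd_add_right ⟨i, rfl⟩).mp ⟨n, h⟩
      rw [← mul_add] at h
      exact hnot ⟨(i, j), HasAntidiagonal.mem_antidiagonal.mpr (Nat.eq_of_mul_eq_mul_left
        (Nat.pos_of_ne_zero hm) h), rfl⟩
    rw [coeff_expand_of_not_dvd _ _ _ hdvd, zero_mul]
  · rintro ⟨i, j⟩ -
    rw [coeff_expand_mul, coeff_dissect]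

theorem dissect_expand {m : ℕ} (hm : m ≠ 0) (φ : R⟦X⟧) : dissect m (expand m hm φ) = φ := by
  ext n
  rw [coeff_dissect, coeff_expand_mul]

theorem dissect_expand_of_coprime {k m : ℕ} (hk : k ≠ 0) (hkm : k.Coprime m) (φ : R⟦X⟧) :
    dissect m (expand k hk φ) = expand k hk (dissect m φ) := by
  ext n
  rw [coeff_dissect]
  by_cases hn : k ∣ n
  · obtain ⟨n, rfl⟩ := hn
    rw [mul_left_comm, coeff_expand_mul, coeff_expand_mul, coeff_dissect]
  · rw [coeff_expand_of_not_dvd _ _ _ hn,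
      coeff_expand_of_not_dvd _ _ _ fun h ↦ hn (hkm.dvd_of_dvd_mul_left h)]

theorem dissect_pow_of_coprime {p m : ℕ} [Fact p.Prime] (hpm : p.Coprime m) (φ : (ZMod p)⟦X⟧) :
    dissect m (φ ^ p) = dissect m φ ^ p := by
  rw [pow_eq_expand, pow_eq_expand, dissect_expand_of_coprime _ hpm]

theorem coeff_mul_expand_eq_zero {m n : ℕ} (hm : m ≠ 0) {φ : R⟦X⟧}
    (hφ : ∀ i, i ≡ n [MOD m] → coeff i φ = 0) (ψ : R⟦X⟧) : coeff n (φ * expand m hm ψ) = 0 := by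
  rw [coeff_mul]
  refine sum_eq_zero fun ⟨i, j⟩ hij ↦ ?_
  rw [HasAntidiagonal.mem_antidiagonal] at hij
  by_cases hj : m ∣ j
  · rw [hφ i (hij ▸ (Nat.modEq_iff_dvd' (Nat.le_add_right i j)).mpr (by simpa using hj)), zero_mul]
  · rw [coeff_expand_of_not_dvd _ _ _ hj, mul_zero]

end Dissection

section PentagonalModFive

variable (R : Type*) [CommRing R]

theorem pentagonal_one_sub_five_mul (k : ℤ) :
    pentagonal (1 - 5 * k) = 25 * pentagonal k + 1 := by
  have h := two_mul_natCast_pentagonal (1 - 5 * k)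
  have hk := two_mul_natCast_pentagonal k
  zify
  linarith

theorem pentagonal_mod_five (k : ℤ) :
    pentagonal k % 5 ≤ 2 ∧ (pentagonal k % 5 = 1 → k % 5 = 1) := by
  have h := two_mul_natCast_pentagonal k
  have hk : k % 5 = 0 ∨ k % 5 = 1 ∨ k % 5 = 2 ∨ k % 5 = 3 ∨ k % 5 = 4 := by omega
  have hmod : 2 * (pentagonal k : ℤ) % 5 = k % 5 * (3 * (k % 5) - 1) % 5 := by
    rw [h, Int.mul_emod, Int.sub_emod, Int.mul_emod 3 k]
    simp [Int.mul_emod, Int.sub_emod]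
  rcases hk with hk | hk | hk | hk | hk <;> rw [hk] at hmod <;> omega

theorem coeff_pentagonalSeries_of_two_lt_mod_five {n : ℕ} (hn : 2 < n % 5) :
    coeff n (pentagonalSeries R) = 0 := by
  refine coeff_pentagonalSeries_eq_zero R ?_
  rintro ⟨k, rfl⟩
  exact hn.not_ge (pentagonal_mod_five k).1

theorem coeff_pentagonalSeries_five_mul_add_one (n : ℕ) :
    coeff (5 * n + 1) (pentagonalSeries R) =
      -coeff n (expand 5 (Nat.succ_ne_zero 4) (pentagonalSeries R)) := by
  by_cases hn : ∃ k, 5 * pentagonal k = n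
  · obtain ⟨k, rfl⟩ := hn
    rw [coeff_expand_mul, ← mul_assoc, show 5 * 5 = 25 from rfl, ← pentagonal_one_sub_five_mul,
      coeff_pentagonalSeries_pentagonal, coeff_pentagonalSeries_pentagonal]
    have hsign : (-(5 * k)).negOnePow = k.negOnePow := by
      rw [Int.negOnePow_eq_iff]
      exact ⟨-(3 * k), by ring⟩
    rw [sub_eq_neg_add, Int.negOnePow_succ, hsign]
    push_cast
    rfl
  · have hzero : coeff (5 * n + 1) (pentagonalSeries R) = 0 := by
      refine coeff_pentagonalSeries_eq_zero R ?_
      rintro ⟨k, hk⟩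
      obtain ⟨l, rfl⟩ : ∃ l, k = 1 - 5 * l := by
        have hmod := (pentagonal_mod_five k).2 (by omega)
        exact ⟨-(k / 5), by omega⟩
      rw [pentagonal_one_sub_five_mul] at hk
      exact hn ⟨l, by omega⟩
    rw [hzero, coeff_expand_pentagonalSeries_eq_zero R _ hn, neg_zero]

end PentagonalModFive

section FiveDissection

instance charP_powerSeries {R : Type*} [Semiring R] (p : ℕ) [CharP R p] : CharP R⟦X⟧ p :=
  charP_of_injective_ringHom C_injective p

theorem dissect_five_expand_five_pow_mul (k : ℕ) (φ : (ZMod 2)⟦X⟧) :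
    dissect 5 (f₅ ^ k * φ) = f₁ ^ k * dissect 5 φ := by
  rw [← map_pow, dissect_expand_mul]

theorem dissect_five_X_mul_pentagonalSeries_pow_four :
    dissect 5 (X * f₁ ^ 4) = X * f₅ ^ 4 := by
  have hquartic (φ : (ZMod 2)⟦X⟧) : φ ^ 4 = expand 4 (Nat.succ_ne_zero 3) φ :=
    pow_pow_eq_expand 2 φ
  rw [hquartic, hquartic]
  ext n
  rw [coeff_dissect]
  cases n with
  | zero => rw [mul_zero, coeff_zero_X_mul, coeff_zero_X_mul]
  | succ n =>
    rw [show 5 * (n + 1) = 5 * n + 4 + 1 by ring, coeff_succ_X_mul, coeff_succ_X_mul]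
    by_cases hn : 4 ∣ n
    · obtain ⟨m, rfl⟩ := hn
      rw [show 5 * (4 * m) + 4 = 4 * (5 * m + 1) by ring,
        coeff_expand_mul, coeff_expand_mul, coeff_pentagonalSeries_five_mul_add_one,
        CharTwo.neg_eq]
    · rw [coeff_expand_of_not_dvd _ _ _ (by omega), coeff_expand_of_not_dvd _ _ _ hn]

/-- Dissecting `f₁ ^ 4` times the sextic identity gives a quadratic equation for
`dissect 5 (f₁ ^ 5)`, and the constant term picks out the root. -/
theorem dissect_five_pentagonalSeries_pow_five :
    dissect 5 (f₁ ^ 5) = f₁ + X * f₅ ^ 5 := by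
  set y := dissect 5 (f₁ ^ 5) with hy
  have hten : f₁ ^ 5 * f₁ ^ 5 = f₅ ^ 1 * f₁ ^ 5 + f₅ ^ 6 * (X * f₁ ^ 4) := by
    linear_combination f₁ ^ 4 * pentagonalSeries_pow_six
  have hquad : y ^ 2 = f₁ * y + f₁ ^ 6 * (X * f₅ ^ 4) := by
    rw [hy, ← dissect_pow_of_coprime (by norm_num), sq, hten, map_add,
      dissect_five_expand_five_pow_mul, dissect_five_expand_five_pow_mul,
      dissect_five_X_mul_pentagonalSeries_pow_four, pow_one]
  have hfactor : (y - X * f₅ ^ 5) * (y - (f₁ + X * f₅ ^ 5)) = 0 := by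
    linear_combination hquad + X * f₅ ^ 4 * pentagonalSeries_pow_six +
      (X ^ 2 * f₅ ^ 10 + X * f₁ * f₅ ^ 5 - y * X * f₅ ^ 5) * CharTwo.two_eq_zero (R := (ZMod 2)⟦X⟧)
  have hconst : constantCoeff (y - X * f₅ ^ 5) ≠ 0 := by
    rw [hy, map_sub, ← coeff_zero_eq_constantCoeff_apply, coeff_dissect, mul_zero,
      coeff_zero_eq_constantCoeff_apply, map_pow, constantCoeff_pentagonalSeries]
    simp
  have hne : y - X * f₅ ^ 5 ≠ 0 := fun h ↦ hconst (by rw [h, map_zero])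
  exact sub_eq_zero.mp ((mul_eq_zero.mp hfactor).resolve_left hne)

theorem dissect_five_X_mul_partitionSeries :
    dissect 5 (X * P) = P ^ 5 + expand 5 (Nat.succ_ne_zero 4) P := by
  have hinv := partitionSeries_mul_pentagonalSeries (ZMod 2)
  have hinv_expand := congr_arg (expand 5 (Nat.succ_ne_zero 4)) hinv
  rw [map_mul, map_one] at hinv_expand
  have hsextic : f₅ ^ 6 * (X * P) = f₁ ^ 5 - f₅ := by
    linear_combination (f₁ ^ 5 - f₅) * hinv - P * pentagonalSeries_pow_six
  have hdissect := congr_arg (dissect 5) hsextic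
  rw [dissect_five_expand_five_pow_mul, map_sub, dissect_five_pentagonalSeries_pow_five,
    dissect_expand, add_sub_cancel_left] at hdissect
  refine mul_left_cancel₀ (pow_ne_zero 6 (right_ne_zero_of_mul_eq_one hinv)) (hdissect.trans ?_)
  have hinv_pow : P ^ 5 * f₁ ^ 5 = 1 := by rw [← mul_pow, hinv, one_pow]
  linear_combination -f₁ * hinv_pow -
    expand 5 (Nat.succ_ne_zero 4) P * pentagonalSeries_pow_six -
    (f₁ + X * f₅ ^ 5) * hinv_expand - f₁ * CharTwo.two_eq_zero (R := (ZMod 2)⟦X⟧)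

theorem dissect_five_X_mul_regularPartitionSeries {j : ℕ} (hj : 2 ^ j ≤ 5) :
    dissect 5 (X * regularPartitionSeries (ZMod 2) (5 * 2 ^ j)) =
      P ^ (5 - 2 ^ j) +
        expand (2 ^ j) (by positivity) f₁ * expand 5 (Nat.succ_ne_zero 4) P := by
  have hinv := partitionSeries_mul_pentagonalSeries (ZMod 2)
  have hregular : X * regularPartitionSeries (ZMod 2) (5 * 2 ^ j) = f₅ ^ 2 ^ j * (X * P) := by
    have h := regularPartitionSeries_mul_pentagonalSeries (ZMod 2)
      (mul_ne_zero (by norm_num : 5 ≠ 0) (pow_ne_zero j two_ne_zero))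
    rw [expand_mul 5 (by norm_num) _ (by positivity), ← pow_pow_eq_expand j f₁, map_pow] at h
    linear_combination X * P * h - X * regularPartitionSeries (ZMod 2) (5 * 2 ^ j) * hinv
  have hpow : f₁ ^ 2 ^ j * P ^ 5 = P ^ (5 - 2 ^ j) := by
    rw [← Nat.add_sub_cancel' hj, pow_add, Nat.add_sub_cancel' hj, ← mul_assoc, ← mul_pow,
      mul_comm f₁, hinv, one_pow, one_mul]
  rw [hregular, dissect_five_expand_five_pow_mul, dissect_five_X_mul_partitionSeries, mul_add,
    hpow, pow_pow_eq_expand]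

end FiveDissection

theorem numRegularPartitions_modEq_numMultipartitions {j N : ℕ} (hj : 2 ^ j ≤ 5)
    (hN : ∀ i, 2 ^ j * i ≡ N [MOD 5] → 2 < i % 5) :
    numRegularPartitions (5 * 2 ^ j) (5 * N - 1) ≡
      numMultipartitions (5 - 2 ^ j) N [MOD 2] := by
  have hsupport : ∀ i, i ≡ N [MOD 5] → coeff i (expand (2 ^ j) (by positivity)
      (pentagonalSeries (ZMod 2))) = 0 := by
    intro i hi
    by_cases hdvd : 2 ^ j ∣ i
    · obtain ⟨i, rfl⟩ := hdvd
      rw [coeff_expand_mul, coeff_pentagonalSeries_of_two_lt_mod_five _ (hN i hi)]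
    · rw [coeff_expand_of_not_dvd _ _ _ hdvd]
  have hpos : 5 * N - 1 + 1 = 5 * N := by
    rcases N.eq_zero_or_pos with rfl | hpos
    · exact absurd (hN 0 rfl) (by norm_num)
    · omega
  have hcoeff := congr_arg (coeff N) (dissect_five_X_mul_regularPartitionSeries hj)
  rw [map_add, coeff_mul_expand_eq_zero _ hsupport, add_zero, coeff_partitionSeries_pow,
    coeff_dissect, ← hpos, coeff_succ_X_mul, regularPartitionSeries, coeff_mk] at hcoeff
  exact (ZMod.natCast_eq_natCast_iff _ _ 2).mp hcoeff

end PartitionParity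

theorem stmt_0 (n : ℕ) :
    (∀ B ∈ ({1, 3} : Finset ℕ),
      numRegularPartitions 10 (25 * n + 5 * B - 1) ≡
        numMultipartitions 3 (5 * n + B) [MOD 2]) ∧
    (∀ B ∈ ({1, 2} : Finset ℕ),
      numRegularPartitions 20 (25 * n + 5 * B - 1) ≡
        numMultipartitions 1 (5 * n + B) [MOD 2]) := by
  simp only [Finset.mem_insert, Finset.mem_singleton]
  refine ⟨fun B hB ↦ ?_, fun B hB ↦ ?_⟩
  · have h := PartitionParity.numRegularPartitions_modEq_numMultipartitions (j := 1)
      (N := 5 * n + B) (by norm_num) fun i hi ↦ by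
        rw [Nat.ModEq] at hi
        omega
    rwa [mul_add, ← mul_assoc] at h
  · have h := PartitionParity.numRegularPartitions_modEq_numMultipartitions (j := 2)
      (N := 5 * n + B) (by norm_num) fun i hi ↦ by
        rw [Nat.ModEq] at hi
        omega
    rwa [mul_add, ← mul_assoc] at h
end

section
/- For every natural number n: for every B in {1, 5, 6, 7, 9}, b_22(121n + 11B − 5) ≡ p_9(11n + B) (mod 2); for every B in {1, 2, 3, 7, 10}, b_44(121n + 11B − 5) ≡ p_7(11n + B) (mod 2); and for every B in {2, 3, 4, 6, 9}, b_88(121n + 11B − 5) ≡ p_3(11n + B) (mod 2). -/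
/-!
Let `η = q ∏ (1 - q^(24 n))` over `𝔽₂` and let `F` be the pentagonal number series, so that
`η(q) = q F(q^24)` and the partition series is `P = 1 / F`. Counting the solutions of
`x² + 11 y² = M` through the norm form of `ℤ[(1 + √-11) / 2]` gives the modular equation
`η(q) η(q^11) = η(q)^12 + η(q)^3 η(q^11)^3 + η(q^11)^12`. Regarded as an equation of degree `12`
for `η(q)` over the series in `q^11`, it has the roots `η(q^121)` and `η(ζ q)`, where `ζ^11 = 1`.
Their power sums `s_k` satisfy a linear recurrence of order `12` as well as `s_{2k} = s_k²`; with
`s_1 = s_3 = 0` and a look at two coefficients this determines `s_11`, hence `s_{-1}`. The latter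
computes the terms of `q^5 P(q)` whose exponents are divisible by `11`: they add up to
`P(q^11)^11 + P(q^121)`. For `s = 2^k` the series of the `11 s`-regular partitions is
`F(q^11)^s P(q)`, and multiplication by `F(q^11)^s` turns this sum into
`P(q^11)^(11 - s) + F(q^(11 s)) P(q^121)`, where the second term has no exponent `11 N` unless `N`
is congruent modulo `11` to `s` times a pentagonal number.
-/

open PowerSeries

section Dilation

variable {R : Type*} [CommRing R] {k m : ℕ} [NeZero k]

/-- The series `φ(q ^ k)`: this is `PowerSeries.expand` with the side condition `k ≠ 0` found by
instance search. -/
noncomputable abbrev dilate (k : ℕ) [NeZero k] : R⟦X⟧ →ₐ[R] R⟦X⟧ :=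
  expand k (NeZero.ne k)

theorem dilate_dilate {a b : ℕ} [NeZero a] [NeZero b] (c : ℕ) [NeZero c] (h : a * b = c)
    (φ : R⟦X⟧) : dilate a (dilate b φ) = dilate c φ := by
  subst h
  exact (expand_mul a (NeZero.ne a) b (NeZero.ne b) φ).symm

theorem dilate_injective : Function.Injective (dilate k : R⟦X⟧ → R⟦X⟧) := fun φ ψ h => by
  ext n
  rw [← coeff_expand_mul k (NeZero.ne k) φ, ← coeff_expand_mul k (NeZero.ne k) ψ, h]

theorem coeff_mul_dilate_eq_zero {N : ℕ} {φ : R⟦X⟧}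
    (hφ : ∀ i, i ≡ N [MOD k] → coeff i φ = 0) (ψ : R⟦X⟧) : coeff N (φ * dilate k ψ) = 0 := by
  rw [coeff_mul]
  refine Finset.sum_eq_zero fun ij hij => ?_
  rw [Finset.HasAntidiagonal.mem_antidiagonal] at hij
  by_cases hdvd : k ∣ ij.2
  · rw [hφ _ ?_, zero_mul]
    simpa [hij] using (Nat.modEq_zero_iff_dvd.mpr hdvd).symm.add_left ij.1
  · rw [coeff_expand_of_not_dvd _ _ _ hdvd, mul_zero]

theorem pow_prime_pow_eq_dilate {p j n : ℕ} [Fact p.Prime] [NeZero n] (hn : p ^ j = n)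
    (φ : (ZMod p)⟦X⟧) : φ ^ n = dilate n φ := by
  subst hn
  have frobenius_eq_id : iterateFrobenius (ZMod p) p j = RingHom.id _ :=
    RingHom.ext fun a => (iterateFrobenius_def ..).trans (ZMod.pow_card_pow a)
  rw [← MvPowerSeries.map_iterateFrobenius_expand p (NeZero.ne p) φ j, frobenius_eq_id]
  simp [expand]

/-- The part `∑ aₙ qⁿ`, taken over the multiples `n` of `m`, of the series `∑ aₙ qⁿ`. -/
noncomputable def dvdPart (m : ℕ) : R⟦X⟧ →ₗ[R] R⟦X⟧ where
  toFun φ := PowerSeries.mk fun n => if m ∣ n then coeff n φ else 0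
  map_add' φ ψ := by ext n; simp [ite_add_zero]
  map_smul' a φ := by ext n; simp

theorem coeff_dvdPart (m n : ℕ) (φ : R⟦X⟧) :
    coeff n (dvdPart m φ) = if m ∣ n then coeff n φ else 0 := by
  simp [dvdPart]

theorem dvdPart_dilate_mul (φ ψ : R⟦X⟧) :
    dvdPart k (dilate k ψ * φ) = dilate k ψ * dvdPart k φ := by
  ext n
  rw [coeff_dvdPart, coeff_mul, coeff_mul, Finset.ite_sum_zero]
  refine Finset.sum_congr rfl fun ij hij => ?_
  rw [Finset.HasAntidiagonal.mem_antidiagonal] at hij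
  rw [coeff_dvdPart, coeff_expand]
  by_cases hdvd : k ∣ ij.1
  · simp [← hij, Nat.dvd_add_right hdvd]
  · simp [hdvd]

theorem dvdPart_dilate (ψ : R⟦X⟧) : dvdPart k (dilate k ψ) = dilate k ψ := by
  ext n
  rw [coeff_dvdPart, ite_eq_left_iff]
  exact fun h => (coeff_expand_of_not_dvd k _ _ h).symm

theorem dvdPart_dilate_of_coprime (h : m.Coprime k) (φ : R⟦X⟧) :
    dvdPart m (dilate k φ) = dilate k (dvdPart m φ) := by
  ext n
  simp only [coeff_dvdPart, coeff_expand]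
  by_cases hk : k ∣ n
  · obtain ⟨j, rfl⟩ := hk
    simp [h.dvd_mul_left, Nat.pos_of_neZero k]
  · simp [hk]

theorem dvdPart_X_pow_mul {n : ℕ} (h : k ∣ n) (φ : R⟦X⟧) :
    dvdPart k (X ^ n * φ) = X ^ n * dvdPart k φ := by
  obtain ⟨j, rfl⟩ := h
  have h := dvdPart_dilate_mul (k := k) φ (X ^ j)
  rw [map_pow, expand_X] at h
  rwa [pow_mul]

end Dilation

section CountingSeries

variable {R ι κ : Type*} {S : Set ι} {T : Set κ} {v : ι → ℕ} {w : κ → ℕ}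

/-- Only finitely many elements of `S` have any given weight, so that they can be counted by a
power series. -/
def FiniteFibers (S : Set ι) (w : ι → ℕ) : Prop :=
  ∀ n, {i ∈ S | w i = n}.Finite

/-- The generating series `∑ q ^ w i` over `i ∈ S`. The cardinalities are `Set.ncard`s, so a
coefficient whose fiber is infinite is `0`. -/
noncomputable def countingSeries (R : Type*) [Semiring R] (S : Set ι) (w : ι → ℕ) : R⟦X⟧ :=
  PowerSeries.mk fun n => ({i ∈ S | w i = n}.ncard : R)

theorem coeff_countingSeries [Semiring R] (n : ℕ) :
    coeff n (countingSeries R S v) = {i ∈ S | v i = n}.ncard :=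
  coeff_mk _ _

theorem countingSeries_eq_of_bijOn [Semiring R] {f : ι → κ} (hf : Set.BijOn f S T)
    (hw : ∀ i ∈ S, w (f i) = v i) : countingSeries R S v = countingSeries R T w := by
  ext n
  rw [coeff_countingSeries, coeff_countingSeries]
  refine congrArg _ (Set.BijOn.ncard_eq (f := f) ⟨?_, ?_, ?_⟩)
  · exact fun i hi => ⟨hf.mapsTo hi.1, (hw i hi.1).trans hi.2⟩
  · exact hf.injOn.mono fun i hi => hi.1
  · rintro j ⟨hj, rfl⟩
    obtain ⟨i, hi, rfl⟩ := hf.surjOn hj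
    exact ⟨i, ⟨hi, (hw i hi).symm⟩, rfl⟩

theorem setOf_prod_weight_eq (S : Set ι) (T : Set κ) (v : ι → ℕ) (w : κ → ℕ) (n : ℕ) :
    {p ∈ S ×ˢ T | v p.1 + w p.2 = n} =
      ⋃ ab ∈ Finset.HasAntidiagonal.antidiagonal n,
        {i ∈ S | v i = ab.1} ×ˢ {j ∈ T | w j = ab.2} := by
  ext ⟨i, j⟩
  simp [and_assoc, and_comm, and_left_comm]

theorem countingSeries_mul [Semiring R] (hS : FiniteFibers S v) (hT : FiniteFibers T w) :
    countingSeries R S v * countingSeries R T w =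
      countingSeries R (S ×ˢ T) fun p => v p.1 + w p.2 := by
  ext n
  rw [coeff_mul, coeff_countingSeries, setOf_prod_weight_eq]
  have disjoint_rectangles : (Finset.HasAntidiagonal.antidiagonal n : Set (ℕ × ℕ)).PairwiseDisjoint
      fun ab => {i ∈ S | v i = ab.1} ×ˢ {j ∈ T | w j = ab.2} := by
    refine fun ab _ cd _ hne => Set.disjoint_left.mpr ?_
    rintro ⟨i, j⟩ ⟨⟨-, hi⟩, -, hj⟩ ⟨⟨-, hi'⟩, -, hj'⟩
    exact hne (Prod.ext (hi.symm.trans hi') (hj.symm.trans hj'))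
  have ncard_union := (Finset.finite_toSet _).ncard_biUnion
    (fun ab _ => (hS ab.1).prod (hT ab.2)) disjoint_rectangles
  rw [finsum_mem_coe_finset] at ncard_union
  simp only [Finset.mem_coe] at ncard_union
  rw [ncard_union]
  simp [coeff_countingSeries, Set.ncard_prod]

theorem bijOn_finCons_pi (S : Set ι) (t : ℕ) :
    Set.BijOn (fun p : ι × (Fin t → ι) => (Fin.cons p.1 p.2 : Fin (t + 1) → ι))
      (S ×ˢ Set.univ.pi fun _ => S) (Set.univ.pi fun _ => S) := by
  refine ⟨fun p hp i _ => ?_, fun p _ p' _ h => ?_, fun f hf => ?_⟩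
  · exact Fin.cases hp.1 (fun j => hp.2 j trivial) i
  · exact Prod.ext_iff.mpr (Fin.cons_inj.mp h)
  · exact ⟨(f 0, Fin.tail f), ⟨hf 0 trivial, fun i _ => hf i.succ trivial⟩, Fin.cons_self_tail f⟩

theorem FiniteFibers.pi (hS : FiniteFibers S v) (t : ℕ) :
    FiniteFibers (Set.univ.pi fun _ : Fin t => S) fun f => ∑ i, v (f i) := fun n => by
  have finite_le : {i ∈ S | v i ≤ n}.Finite :=
    ((Set.finite_Iic n).biUnion fun m _ => hS m).subset fun i hi =>
      Set.mem_biUnion (Set.mem_Iic.mpr hi.2) ⟨hi.1, rfl⟩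
  refine (Set.Finite.pi' fun _ : Fin t => finite_le).subset fun f hf i => ⟨hf.1 i trivial, ?_⟩
  exact hf.2 ▸ Finset.single_le_sum (f := fun i => v (f i)) (fun _ _ => Nat.zero_le _)
    (Finset.mem_univ i)

theorem countingSeries_pow [Semiring R] (hS : FiniteFibers S v) (t : ℕ) :
    countingSeries R S v ^ t =
      countingSeries R (Set.univ.pi fun _ : Fin t => S) fun f => ∑ i, v (f i) := by
  induction t with
  | zero =>
    ext n
    rw [pow_zero, coeff_one, coeff_countingSeries]
    split_ifs with hn <;> simp [hn, eq_comm]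
  | succ t ih =>
    rw [pow_succ', ih, countingSeries_mul hS (hS.pi t)]
    refine countingSeries_eq_of_bijOn (bijOn_finCons_pi S t) fun p _ => ?_
    simp [Fin.sum_univ_succ]

theorem FiniteFibers.const_mul (hS : FiniteFibers S v) {k : ℕ} (hk : k ≠ 0) :
    FiniteFibers S fun i => k * v i := fun n =>
  (hS (n / k)).subset fun i hi =>
    ⟨hi.1, by rw [← hi.2, Nat.mul_div_cancel_left _ (Nat.pos_of_ne_zero hk)]⟩

theorem dilate_countingSeries [CommRing R] (k : ℕ) [NeZero k] :
    dilate k (countingSeries R S v) = countingSeries R S fun i => k * v i := by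
  ext n
  simp only [coeff_expand, coeff_countingSeries]
  split_ifs with h
  · obtain ⟨m, rfl⟩ := h
    simp [NeZero.ne k]
  · have no_weight : {i ∈ S | k * v i = n} = ∅ :=
      Set.eq_empty_of_forall_notMem fun i hi => h ⟨v i, hi.2.symm⟩
    rw [no_weight, Set.ncard_empty, Nat.cast_zero]

theorem X_pow_mul_countingSeries [Semiring R] (k : ℕ) :
    X ^ k * countingSeries R S v = countingSeries R S fun i => v i + k := by
  ext n
  simp only [coeff_X_pow_mul', coeff_countingSeries]
  split_ifs with h
  · simp [eq_tsub_iff_add_eq_of_le h]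
  · have no_weight : {i ∈ S | v i + k = n} = ∅ :=
      Set.eq_empty_of_forall_notMem fun i hi => h (hi.2 ▸ Nat.le_add_left _ _)
    rw [no_weight, Set.ncard_empty, Nat.cast_zero]

theorem dvdPart_countingSeries [CommRing R] (m : ℕ) :
    dvdPart m (countingSeries R S v) = countingSeries R {i ∈ S | m ∣ v i} v := by
  ext n
  rw [coeff_dvdPart, coeff_countingSeries, coeff_countingSeries]
  split_ifs with h
  · congr! 4 with i
    exact ⟨fun hi => ⟨⟨hi.1, hi.2 ▸ h⟩, hi.2⟩, fun hi => ⟨hi.1.1, hi.2⟩⟩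
  · have no_weight : {i ∈ {i ∈ S | m ∣ v i} | v i = n} = ∅ :=
      Set.eq_empty_of_forall_notMem fun i hi => h (hi.2 ▸ hi.1.2)
    rw [no_weight, Set.ncard_empty, Nat.cast_zero]

end CountingSeries

section LatticePointCounts

theorem ncard_sep_add_ncard_sep_not {α : Type*} {S : Set α} (hS : S.Finite) (p : α → Prop) :
    {x ∈ S | p x}.ncard + {x ∈ S | ¬ p x}.ncard = S.ncard :=
  Set.ncard_inter_add_ncard_sdiff_eq_ncard S {x | p x} hS

theorem ncard_eq_two_mul_of_involution {α : Type*} {S : Set α} (hS : S.Finite) {σ : α → α}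
    (hσ : Function.Involutive σ) (hσS : Set.MapsTo σ S S) {p : α → Prop}
    (hp : ∀ x ∈ S, p (σ x) ↔ ¬ p x) : S.ncard = 2 * {x ∈ S | p x}.ncard := by
  have compl_eq_image : {x ∈ S | ¬ p x} = σ '' {x ∈ S | p x} := by
    ext x
    constructor
    · exact fun hx => ⟨σ x, ⟨hσS hx.1, (hp x hx.1).mpr hx.2⟩, hσ x⟩
    · rintro ⟨y, hy, rfl⟩
      exact ⟨hσS hy.1, fun h => (hp y hy.1).mp h hy.2⟩
  rw [← ncard_sep_add_ncard_sep_not hS p, compl_eq_image,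
    Set.ncard_image_of_injective _ hσ.injective, two_mul]

theorem ncard_eq_two_mul_ncard_pos {T : Set ℤ} (hT : T.Finite) (hneg : ∀ x ∈ T, -x ∈ T)
    (h0 : 0 ∉ T) : T.ncard = 2 * {x | 0 < x ∧ x ∈ T}.ncard := by
  rw [ncard_eq_two_mul_of_involution hT neg_involutive hneg (p := (0 < ·))]
  · simp only [and_comm]
  · intro x hx
    have : x ≠ 0 := fun h => h0 (h ▸ hx)
    omega

/-- Invariance of a set of integer points under both coordinate reflections. -/
def SignInvariant (S : Set (ℤ × ℤ)) : Prop :=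
  ∀ x y, (x, y) ∈ S → (-x, y) ∈ S ∧ (x, -y) ∈ S

variable {S : Set (ℤ × ℤ)}

theorem SignInvariant.sep (hS : SignInvariant S) {p : ℤ × ℤ → Prop}
    (hp : SignInvariant {z | p z}) : SignInvariant {z ∈ S | p z} := fun x y h =>
  ⟨⟨(hS x y h.1).1, (hp x y h.2).1⟩, ⟨(hS x y h.1).2, (hp x y h.2).2⟩⟩

theorem SignInvariant.ncard_eq_four_mul (hS : SignInvariant S) (hfin : S.Finite)
    (haxes : ∀ z ∈ S, z.1 ≠ 0 ∧ z.2 ≠ 0) :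
    S.ncard = 4 * {z ∈ S | 0 < z.1 ∧ 0 < z.2}.ncard := by
  have reflect_fst : S.ncard = 2 * {z ∈ S | 0 < z.1}.ncard :=
    ncard_eq_two_mul_of_involution hfin (σ := fun z => (-z.1, z.2)) (fun z => by simp)
      (fun z hz => (hS _ _ hz).1) fun z hz => by have := haxes z hz; dsimp only; omega
  have reflect_snd : {z ∈ S | 0 < z.1}.ncard = 2 * {z ∈ {z ∈ S | 0 < z.1} | 0 < z.2}.ncard :=
    ncard_eq_two_mul_of_involution (hfin.subset fun z hz => hz.1) (σ := fun z => (z.1, -z.2))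
      (fun z => by simp) (fun z hz => And.intro (hS _ _ hz.1).2 hz.2)
      fun z hz => by have := haxes z hz.1; dsimp only; omega
  simp only [Set.mem_ofPred_eq, and_assoc] at reflect_snd
  omega

/-- The points with `3 ∣ x` come in fours, the others in pairs `± (x, y)`. -/
theorem SignInvariant.ncard_odd_congr_modEq (hS : SignInvariant S) (hfin : S.Finite) :
    {z ∈ S | z.1 % 2 = 1 ∧ z.2 % 2 = 1 ∧ z.1 % 3 = z.2 % 3}.ncard ≡
      2 * {z ∈ S | z.1 % 6 = 5 ∧ z.2 % 6 = 5}.ncard [MOD 4] := by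
  set D := {z ∈ S | z.1 % 2 = 1 ∧ z.2 % 2 = 1 ∧ z.1 % 3 = z.2 % 3} with hD
  have hDfin : D.Finite := hfin.subset fun z hz => hz.1
  have quadruples : {z ∈ D | z.1 % 3 = 0}.ncard =
      4 * {z ∈ {z ∈ D | z.1 % 3 = 0} | 0 < z.1 ∧ 0 < z.2}.ncard := by
    refine SignInvariant.ncard_eq_four_mul ?_ (hDfin.subset fun z hz => hz.1) ?_
    · rintro x y ⟨⟨hxy, hx, hy, h⟩, h0⟩
      refine ⟨⟨⟨(hS _ _ hxy).1, ?_⟩, ?_⟩, ⟨⟨(hS _ _ hxy).2, ?_⟩, ?_⟩⟩ <;> omega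
    · rintro z ⟨⟨_, hx, hy, h⟩, h0⟩
      exact ⟨by omega, by omega⟩
  have pairs : {z ∈ D | ¬ z.1 % 3 = 0}.ncard =
      2 * {z ∈ {z ∈ D | ¬ z.1 % 3 = 0} | z.1 % 3 = 2}.ncard := by
    refine ncard_eq_two_mul_of_involution (hDfin.subset fun z hz => hz.1)
      (σ := fun z => (-z.1, -z.2)) (fun z => by simp) ?_ ?_
    · rintro ⟨x, y⟩ ⟨⟨hxy, hx, hy, h⟩, h0⟩
      refine ⟨⟨(hS _ _ (hS _ _ hxy).1).2, ?_⟩, ?_⟩ <;> dsimp only <;> omega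
    · rintro ⟨x, y⟩ ⟨-, h0⟩
      dsimp only
      omega
  have representatives : {z ∈ {z ∈ D | ¬ z.1 % 3 = 0} | z.1 % 3 = 2} =
      {z ∈ S | z.1 % 6 = 5 ∧ z.2 % 6 = 5} := by
    ext z
    simp only [hD, Set.mem_ofPred_eq, and_assoc]
    exact and_congr_right fun _ => by omega
  rw [← ncard_sep_add_ncard_sep_not hDfin fun z => z.1 % 3 = 0, quadruples, pairs, representatives]
  unfold Nat.ModEq
  omega

theorem SignInvariant.ncard_modEq_axes (hS : SignInvariant S) (hfin : S.Finite)
    (h0 : (0, 0) ∉ S) :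
    S.ncard ≡ 2 * {x | 0 < x ∧ (x, 0) ∈ S}.ncard + 2 * {y | 0 < y ∧ (0, y) ∈ S}.ncard [MOD 4] := by
  have horizontal : {z ∈ S | z.2 = 0}.ncard = 2 * {x | 0 < x ∧ (x, 0) ∈ S}.ncard := by
    have inj : Function.Injective fun x : ℤ => (x, (0 : ℤ)) := Prod.mk_left_injective 0
    have image : {z ∈ S | z.2 = 0} = (fun x => (x, 0)) '' {x | (x, 0) ∈ S} := by
      ext ⟨x, y⟩
      simp only [Set.mem_ofPred_eq, Set.mem_image, Prod.mk.injEq]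
      aesop
    rw [image, Set.ncard_image_of_injective _ inj]
    exact ncard_eq_two_mul_ncard_pos (hfin.preimage inj.injOn) (fun x hx => (hS _ _ hx).1) h0
  have vertical : {z ∈ {z ∈ S | ¬ z.2 = 0} | z.1 = 0}.ncard =
      2 * {y | 0 < y ∧ (0, y) ∈ S}.ncard := by
    have inj : Function.Injective fun y : ℤ => ((0 : ℤ), y) := Prod.mk_right_injective 0
    have image : {z ∈ {z ∈ S | ¬ z.2 = 0} | z.1 = 0} = (fun y => (0, y)) '' {y | (0, y) ∈ S} := by
      ext ⟨x, y⟩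
      simp only [Set.mem_ofPred_eq, Set.mem_image, Prod.mk.injEq]
      aesop
    rw [image, Set.ncard_image_of_injective _ inj]
    exact ncard_eq_two_mul_ncard_pos (hfin.preimage inj.injOn) (fun y hy => (hS _ _ hy).2) h0
  have off_axes : {z ∈ {z ∈ S | ¬ z.2 = 0} | ¬ z.1 = 0}.ncard =
      4 * {z ∈ {z ∈ {z ∈ S | ¬ z.2 = 0} | ¬ z.1 = 0} | 0 < z.1 ∧ 0 < z.2}.ncard :=
    ((hS.sep fun x y h => by simpa using h).sep fun x y h => by simpa using h).ncard_eq_four_mul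
      (hfin.subset fun z hz => hz.1.1) fun z hz => ⟨hz.2, hz.1.2⟩
  rw [← ncard_sep_add_ncard_sep_not hfin fun z => z.2 = 0, horizontal,
    ← ncard_sep_add_ncard_sep_not (hfin.subset fun z hz => hz.1) fun z => z.1 = 0, vertical,
    off_axes]
  unfold Nat.ModEq
  omega

theorem finite_setOf_quadratic_eq {a b : ℤ} (ha : 0 < a) (hb : 0 < b) (M : ℤ) :
    {z : ℤ × ℤ | a * z.1 ^ 2 + b * z.2 ^ 2 = M}.Finite := by
  refine ((Set.finite_Icc (-M) M).prod (Set.finite_Icc (-M) M)).subset fun z hz => ?_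
  have := Int.le_self_sq z.1
  have := Int.le_self_sq z.2
  have := Int.le_self_sq (-z.1)
  have := Int.le_self_sq (-z.2)
  simp only [Set.mem_ofPred_eq] at hz
  constructor <;> constructor <;> nlinarith [sq_nonneg z.1, sq_nonneg z.2]


theorem signInvariant_setOf_quadratic (a b M : ℤ) :
    SignInvariant {z | a * z.1 ^ 2 + b * z.2 ^ 2 = M} := fun x y h => by simpa using h

theorem ncard_sq_add_two_mul_sq_congr (M : ℤ) :
    {z ∈ {z : ℤ × ℤ | 1 * z.1 ^ 2 + 2 * z.2 ^ 2 = M} |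
        z.1 % 2 = 1 ∧ z.2 % 2 = 1 ∧ z.1 % 3 = z.2 % 3}.ncard =
      {z ∈ {z : ℤ × ℤ | 3 * z.1 ^ 2 + 6 * z.2 ^ 2 = M} | z.1 % 2 = 1 ∧ z.2 % 2 = 0}.ncard := by
  -- `(u - v √-2) (1 + √-2) = x + y √-2`, where `1 + √-2` has norm `3`.
  have inj : Function.Injective fun z : ℤ × ℤ => (z.1 + 2 * z.2, z.1 - z.2) := fun z z' h => by
    simp only [Prod.mk.injEq] at h
    ext <;> omega
  rw [← Set.ncard_image_of_injective {z ∈ {z : ℤ × ℤ | 3 * z.1 ^ 2 + 6 * z.2 ^ 2 = M} | _} inj]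
  congr 1
  ext ⟨x, y⟩
  constructor
  · rintro ⟨h, hx, hy, hxy⟩
    dsimp only [Set.mem_ofPred_eq] at h hx hy hxy
    obtain ⟨v, rfl⟩ : ∃ v, x = y + 3 * v := ⟨(x - y) / 3, by omega⟩
    refine ⟨(y + v, v), ⟨?_, ?_⟩, ?_⟩ <;> dsimp only [Set.mem_ofPred_eq]
    · linear_combination h
    · omega
    · ext <;> dsimp only <;> ring
  · rintro ⟨⟨u, v⟩, ⟨h, hu, hv⟩, ⟨⟩⟩
    simp only [Set.mem_ofPred_eq] at h ⊢
    exact ⟨by linear_combination h, by omega⟩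

theorem ncard_sq_add_two_mul_sq_modEq (M : ℤ) :
    {z : ℤ × ℤ | 1 * z.1 ^ 2 + 2 * z.2 ^ 2 = M ∧ z.1 % 6 = 5 ∧ z.2 % 6 = 5}.ncard ≡
      {u : ℤ | 0 < u ∧ u % 2 = 1 ∧ 3 * u ^ 2 = M}.ncard [MOD 2] := by
  set W : Set (ℤ × ℤ) := {z ∈ {z | 3 * z.1 ^ 2 + 6 * z.2 ^ 2 = M} | z.1 % 2 = 1 ∧ z.2 % 2 = 0}
    with hW
  have hWfin : W.Finite :=
    (finite_setOf_quadratic_eq (by norm_num) (by norm_num) M).subset fun z hz => hz.1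
  have hWsign : SignInvariant W :=
    (signInvariant_setOf_quadratic 3 6 M).sep fun x y h => by
      simp only [Set.mem_ofPred_eq] at h ⊢; omega
  have no_vertical : {v | 0 < v ∧ (0, v) ∈ W} = ∅ :=
    Set.eq_empty_of_forall_notMem fun v hv => absurd hv.2.2.1 (by norm_num)
  have horizontal : {u | 0 < u ∧ (u, 0) ∈ W} = {u : ℤ | 0 < u ∧ u % 2 = 1 ∧ 3 * u ^ 2 = M} := by
    ext u
    simp [hW, and_comm]
  have count := hWsign.ncard_modEq_axes hWfin fun h => absurd h.2.1 (by norm_num)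
  have odd := (signInvariant_setOf_quadratic 1 2 M).ncard_odd_congr_modEq
    (finite_setOf_quadratic_eq one_pos two_pos M)
  rw [ncard_sq_add_two_mul_sq_congr, ← hW] at odd
  rw [no_vertical, horizontal, Set.ncard_empty] at count
  simp only [Set.mem_ofPred_eq] at odd
  unfold Nat.ModEq at *
  omega

theorem ncard_three_mul_sq_add_odd (M : ℤ) :
    {z : ℤ × ℤ | 3 * z.1 ^ 2 + 33 * z.2 ^ 2 = M ∧ z.1 % 2 = 1 ∧ z.2 % 2 = 1 ∧
        (z.1 + z.2) % 4 = 2}.ncard =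
      2 * {z : ℤ × ℤ | 3 * z.1 ^ 2 + 33 * z.2 ^ 2 = M ∧ (0 < z.1 ∧ z.1 % 2 = 1) ∧
        0 < z.2 ∧ z.2 % 2 = 1}.ncard := by
  set O : Set (ℤ × ℤ) := {z ∈ {z | 3 * z.1 ^ 2 + 33 * z.2 ^ 2 = M} | z.1 % 2 = 1 ∧ z.2 % 2 = 1}
    with hO
  have hOfin : O.Finite :=
    (finite_setOf_quadratic_eq (by norm_num) (by norm_num) M).subset fun z hz => hz.1
  have hOsign : SignInvariant O :=
    (signInvariant_setOf_quadratic 3 33 M).sep fun x y h => by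
      simp only [Set.mem_ofPred_eq] at h ⊢; omega
  have pairs : O.ncard = 2 * {z ∈ O | (z.1 + z.2) % 4 = 2}.ncard :=
    ncard_eq_two_mul_of_involution hOfin (σ := fun z => (z.1, -z.2)) (fun z => by simp)
      (fun z hz => (hOsign _ _ hz).2) fun z ⟨_, hz⟩ => by dsimp only; omega
  have quadruples : O.ncard = 4 * {z ∈ O | 0 < z.1 ∧ 0 < z.2}.ncard :=
    hOsign.ncard_eq_four_mul hOfin fun z ⟨_, hz⟩ => ⟨by omega, by omega⟩
  have left : {z ∈ O | (z.1 + z.2) % 4 = 2} = {z : ℤ × ℤ | 3 * z.1 ^ 2 + 33 * z.2 ^ 2 = M ∧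
      z.1 % 2 = 1 ∧ z.2 % 2 = 1 ∧ (z.1 + z.2) % 4 = 2} := by
    ext z
    simp only [hO, Set.mem_ofPred_eq, and_assoc]
  have right : {z ∈ O | 0 < z.1 ∧ 0 < z.2} = {z : ℤ × ℤ | 3 * z.1 ^ 2 + 33 * z.2 ^ 2 = M ∧
      (0 < z.1 ∧ z.1 % 2 = 1) ∧ 0 < z.2 ∧ z.2 % 2 = 1} := by
    ext z
    simp only [hO, Set.mem_ofPred_eq]
    tauto
  rw [← left, ← right]
  omega

/-- The solutions `(w, v)` with `w` odd of `12 (w² - w v + 3 v²) = M`. The form is the norm form of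
`ℤ[(1 + √-11) / 2]`, and `x² + 11 y² = 12 (w² - w v + 3 v²)` for `(x, y) = (w - 6 v, w)`. -/
def oddNormSolutions (M : ℤ) : Set (ℤ × ℤ) :=
  {z | z.1 % 2 = 1 ∧ 12 * (z.1 ^ 2 - z.1 * z.2 + 3 * z.2 ^ 2) = M}

theorem injective_sub_six_mul : Function.Injective fun z : ℤ × ℤ => (z.1 - 6 * z.2, z.1) :=
  fun z z' h => by
    simp only [Prod.mk.injEq] at h
    ext <;> omega

theorem finite_oddNormSolutions (M : ℤ) : (oddNormSolutions M).Finite := by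
  refine ((finite_setOf_quadratic_eq one_pos (b := 11) (by norm_num) M).preimage
    injective_sub_six_mul.injOn).subset fun z hz => ?_
  simp only [Set.mem_preimage, Set.mem_ofPred_eq]
  linear_combination hz.2

theorem ncard_oddNormSolutions_modEq (M : ℤ) :
    (oddNormSolutions M).ncard ≡
      2 * {z : ℤ × ℤ | 1 * z.1 ^ 2 + 11 * z.2 ^ 2 = M ∧ z.1 % 6 = 5 ∧ z.2 % 6 = 5}.ncard
      [MOD 4] := by
  have image : (fun z : ℤ × ℤ => (z.1 - 6 * z.2, z.1)) '' oddNormSolutions M =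
      {z ∈ {z | 1 * z.1 ^ 2 + 11 * z.2 ^ 2 = M} |
        z.1 % 2 = 1 ∧ z.2 % 2 = 1 ∧ z.1 % 3 = z.2 % 3} := by
    ext ⟨x, y⟩
    constructor
    · rintro ⟨⟨w, v⟩, ⟨hw, h⟩, ⟨⟩⟩
      dsimp only at hw h
      simp only [Set.mem_ofPred_eq]
      exact ⟨by linear_combination h, by omega⟩
    · rintro ⟨h, hx, hy, hxy⟩
      dsimp only [Set.mem_ofPred_eq] at h hx hy hxy
      obtain ⟨v, rfl⟩ : ∃ v, x = y - 6 * v := ⟨(y - x) / 6, by omega⟩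
      exact ⟨(y, v), ⟨hy, by linear_combination h⟩, rfl⟩
  rw [← Set.ncard_image_of_injective _ injective_sub_six_mul, image]
  exact (signInvariant_setOf_quadratic 1 11 M).ncard_odd_congr_modEq
    (finite_setOf_quadratic_eq (by norm_num) (by norm_num) M)

theorem ncard_oddNormSolutions_odd (M : ℤ) :
    {z ∈ oddNormSolutions M | z.2 % 2 = 1}.ncard =
      2 * {z : ℤ × ℤ | 3 * z.1 ^ 2 + 33 * z.2 ^ 2 = M ∧ (0 < z.1 ∧ z.1 % 2 = 1) ∧
        0 < z.2 ∧ z.2 % 2 = 1}.ncard := by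
  have inj : Function.Injective fun z : ℤ × ℤ => (2 * z.1 - z.2, z.2) := fun z z' h => by
    simp only [Prod.mk.injEq] at h
    ext <;> omega
  have image : (fun z : ℤ × ℤ => (2 * z.1 - z.2, z.2)) '' {z ∈ oddNormSolutions M | z.2 % 2 = 1} =
      {z : ℤ × ℤ | 3 * z.1 ^ 2 + 33 * z.2 ^ 2 = M ∧ z.1 % 2 = 1 ∧ z.2 % 2 = 1 ∧
        (z.1 + z.2) % 4 = 2} := by
    ext ⟨u, v⟩
    constructor
    · rintro ⟨⟨w, v⟩, ⟨⟨hw, h⟩, hv⟩, ⟨⟩⟩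
      dsimp only at hw h hv
      simp only [Set.mem_ofPred_eq]
      exact ⟨by linear_combination h, by omega⟩
    · rintro ⟨h, hu, hv, huv⟩
      dsimp only at h hu hv huv
      obtain ⟨w, rfl⟩ : ∃ w, u = 2 * w - v := ⟨(u + v) / 2, by omega⟩
      exact ⟨(w, v), ⟨⟨by dsimp only; omega, by linear_combination h⟩, hv⟩, rfl⟩
  rw [← ncard_three_mul_sq_add_odd, ← image, Set.ncard_image_of_injective _ inj]

theorem ncard_oddNormSolutions_even_modEq (M : ℤ) :
    {z ∈ oddNormSolutions M | ¬ z.2 % 2 = 1}.ncard ≡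
      2 * {x : ℤ | 0 < x ∧ x % 2 = 1 ∧ 12 * x ^ 2 = M}.ncard +
      2 * {y : ℤ | 0 < y ∧ y % 2 = 1 ∧ 132 * y ^ 2 = M}.ncard [MOD 4] := by
  set E : Set (ℤ × ℤ) := {z ∈ {z | 12 * z.1 ^ 2 + 132 * z.2 ^ 2 = M} | (z.1 + z.2) % 2 = 1} with hE
  have hEfin : E.Finite :=
    (finite_setOf_quadratic_eq (by norm_num) (by norm_num) M).subset fun z hz => hz.1
  have hEsign : SignInvariant E :=
    (signInvariant_setOf_quadratic 12 132 M).sep fun x y h => by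
      simp only [Set.mem_ofPred_eq] at h ⊢; omega
  have inj : Function.Injective fun z : ℤ × ℤ => (z.1 + z.2, 2 * z.2) := fun z z' h => by
    simp only [Prod.mk.injEq] at h
    ext <;> omega
  have image : (fun z : ℤ × ℤ => (z.1 + z.2, 2 * z.2)) '' E =
      {z ∈ oddNormSolutions M | ¬ z.2 % 2 = 1} := by
    ext ⟨w, v⟩
    constructor
    · rintro ⟨⟨x, y⟩, ⟨h, hxy⟩, ⟨⟩⟩
      dsimp only [Set.mem_ofPred_eq] at h hxy
      exact ⟨⟨hxy, by linear_combination h⟩, by dsimp only; omega⟩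
    · rintro ⟨⟨hw, h⟩, hv⟩
      dsimp only at hw h hv
      obtain ⟨y, rfl⟩ : ∃ y, v = 2 * y := ⟨v / 2, by omega⟩
      refine ⟨(w - y, y), ⟨?_, by simpa using hw⟩, by simp⟩
      simp only [Set.mem_ofPred_eq]
      linear_combination h
  have horizontal : {x | 0 < x ∧ (x, 0) ∈ E} = {x : ℤ | 0 < x ∧ x % 2 = 1 ∧ 12 * x ^ 2 = M} := by
    ext x
    simp [hE, and_comm]
  have vertical : {y | 0 < y ∧ (0, y) ∈ E} = {y : ℤ | 0 < y ∧ y % 2 = 1 ∧ 132 * y ^ 2 = M} := by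
    ext y
    simp [hE, and_comm]
  rw [← image, Set.ncard_image_of_injective _ inj, ← horizontal, ← vertical]
  exact hEsign.ncard_modEq_axes hEfin fun h => absurd h.2 (by norm_num)

theorem ncard_sq_add_eleven_mul_sq_modEq (M : ℤ) :
    {z : ℤ × ℤ | 1 * z.1 ^ 2 + 11 * z.2 ^ 2 = M ∧ z.1 % 6 = 5 ∧ z.2 % 6 = 5}.ncard ≡
      {x : ℤ | 0 < x ∧ x % 2 = 1 ∧ 12 * x ^ 2 = M}.ncard +
      {z : ℤ × ℤ | 3 * z.1 ^ 2 + 33 * z.2 ^ 2 = M ∧ (0 < z.1 ∧ z.1 % 2 = 1) ∧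
        0 < z.2 ∧ z.2 % 2 = 1}.ncard +
      {y : ℤ | 0 < y ∧ y % 2 = 1 ∧ 132 * y ^ 2 = M}.ncard [MOD 2] := by
  have total := ncard_oddNormSolutions_modEq M
  have even := ncard_oddNormSolutions_even_modEq M
  rw [← ncard_sep_add_ncard_sep_not (finite_oddNormSolutions M) fun z => z.2 % 2 = 1,
    ncard_oddNormSolutions_odd] at total
  unfold Nat.ModEq at *
  omega

end LatticePointCounts

section EtaSeries

theorem finiteFibers_mul_natAbs_sq {c : ℕ} (hc : c ≠ 0) (S : Set ℤ) :
    FiniteFibers S fun x => c * x.natAbs ^ 2 :=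
  FiniteFibers.const_mul (fun n => (Set.finite_Icc (-n : ℤ) n).subset fun x hx => by
    have natAbs_le : x.natAbs ≤ n := hx.2 ▸ Nat.le_self_pow two_ne_zero _
    exact Set.mem_Icc.mpr (by omega)) hc

theorem pentagonalSeries_zmod_two :
    pentagonalSeries (ZMod 2) = countingSeries (ZMod 2) Set.univ pentagonal := by
  ext n
  rw [coeff_countingSeries]
  by_cases hn : n ∈ Set.range pentagonal
  · obtain ⟨k, rfl⟩ := hn
    have fiber : {i | i ∈ Set.univ ∧ pentagonal i = pentagonal k} = {k} := by
      ext i; simp [pentagonal_injective.eq_iff]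
    rw [fiber, coeff_pentagonalSeries_pentagonal, Set.ncard_singleton]
    rcases Int.units_eq_one_or (Int.negOnePow k) with h | h <;> simp [h]
  · have fiber : {i | i ∈ Set.univ ∧ pentagonal i = n} = ∅ :=
      Set.eq_empty_of_forall_notMem fun i hi => hn ⟨i, hi.2⟩
    rw [fiber, coeff_pentagonalSeries_eq_zero _ hn, Set.ncard_empty, Nat.cast_zero]

/-- The reduction modulo `2` of the expansion of the Dedekind eta function `η(24 τ)` in powers of
`q = exp(2πiτ)`. -/
noncomputable def etaSeries : (ZMod 2)⟦X⟧ :=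
  X * dilate 24 (pentagonalSeries (ZMod 2))

theorem etaSeries_eq_countingSeries :
    etaSeries = countingSeries (ZMod 2) {x : ℤ | x % 6 = 5} fun x => 1 * x.natAbs ^ 2 := by
  rw [etaSeries, pentagonalSeries_zmod_two, dilate_countingSeries, ← pow_one X,
    X_pow_mul_countingSeries]
  refine countingSeries_eq_of_bijOn (f := fun k => 6 * k - 1) ⟨?_, ?_, ?_⟩ ?_
  · exact fun k _ => by simp only [Set.mem_ofPred_eq]; omega
  · exact fun k _ l _ h => by dsimp only at h; omega
  · exact fun x (hx : x % 6 = 5) => ⟨(x + 1) / 6, trivial, by dsimp only; omega⟩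
  · intro k _
    zify
    rw [sq_abs]
    linear_combination (-12) * two_mul_natCast_pentagonal k

theorem countingSeries_zmod_two_eq_iff {ι κ : Type*} {S : Set ι} {T : Set κ} {v : ι → ℕ}
    {w : κ → ℕ} : countingSeries (ZMod 2) S v = countingSeries (ZMod 2) T w ↔
      ∀ n, {i ∈ S | v i = n}.ncard ≡ {j ∈ T | w j = n}.ncard [MOD 2] := by
  simp only [PowerSeries.ext_iff, coeff_countingSeries, ZMod.natCast_eq_natCast_iff]

theorem etaSeries_pow_three :
    etaSeries ^ 3 =
      countingSeries (ZMod 2) {u : ℤ | 0 < u ∧ u % 2 = 1} fun u => 3 * u.natAbs ^ 2 := by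
  have cube : etaSeries ^ 3 = etaSeries * dilate 2 etaSeries := by
    rw [pow_succ', pow_prime_pow_eq_dilate (pow_one 2)]
  rw [cube, etaSeries_eq_countingSeries, dilate_countingSeries, countingSeries_mul
    (finiteFibers_mul_natAbs_sq one_ne_zero _)
    ((finiteFibers_mul_natAbs_sq one_ne_zero _).const_mul two_ne_zero),
    countingSeries_zmod_two_eq_iff]
  intro n
  convert ncard_sq_add_two_mul_sq_modEq n using 2
  all_goals
    congr 1
    ext
    simp only [Set.mem_ofPred_eq, Set.mem_prod]
    zify
    simp only [sq_abs, one_mul]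
    tauto

theorem etaSeries_pow_twelve :
    etaSeries ^ 12 =
      countingSeries (ZMod 2) {u : ℤ | 0 < u ∧ u % 2 = 1} fun u => 12 * u.natAbs ^ 2 := by
  rw [pow_mul etaSeries 3 4, pow_prime_pow_eq_dilate (p := 2) (j := 2) (n := 4) rfl,
    etaSeries_pow_three, dilate_countingSeries]
  simp only [← mul_assoc, Nat.reduceMul]

theorem etaSeries_mul_dilate_eleven :
    etaSeries * dilate 11 etaSeries =
      etaSeries ^ 12 + etaSeries ^ 3 * dilate 11 etaSeries ^ 3 + dilate 11 etaSeries ^ 12 := by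
  rw [← map_pow, ← map_pow, etaSeries_pow_three, etaSeries_pow_twelve,
    etaSeries_eq_countingSeries]
  simp only [dilate_countingSeries, ← mul_assoc, Nat.reduceMul]
  rw [countingSeries_mul (finiteFibers_mul_natAbs_sq (by norm_num) _)
      (finiteFibers_mul_natAbs_sq (by norm_num) _),
    countingSeries_mul (finiteFibers_mul_natAbs_sq (by norm_num) _)
      (finiteFibers_mul_natAbs_sq (by norm_num) _)]
  ext n
  simp only [map_add, coeff_countingSeries]
  rw [← Nat.cast_add, ← Nat.cast_add, ZMod.natCast_eq_natCast_iff]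
  convert ncard_sq_add_eleven_mul_sq_modEq n using 3
  on_goal 1 => congr 1
  all_goals
    congr 1
    ext
    simp only [Set.mem_ofPred_eq, Set.mem_prod]
    zify
    simp only [sq_abs, one_mul]
    tauto

end EtaSeries

section ModularEquation

instance charP_powerSeries (R : Type*) [CommRing R] (p : ℕ) [CharP R p] : CharP R⟦X⟧ p :=
  charP_of_injective_ringHom C_injective p

theorem dilate_etaSeries (k m : ℕ) [NeZero k] [NeZero m] (h : 24 * k = m) :
    dilate k etaSeries = X ^ k * dilate m (pentagonalSeries (ZMod 2)) := by
  rw [etaSeries, map_mul, expand_X, dilate_dilate m (by rw [mul_comm, h])]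

theorem coeff_dilate_etaSeries_pow_of_lt {k j n : ℕ} [NeZero k] (h : n < k * j) :
    coeff n (dilate k etaSeries ^ j) = 0 := by
  rw [dilate_etaSeries k _ rfl, mul_pow, ← pow_mul, coeff_X_pow_mul', if_neg h.not_ge]

theorem coeff_dilate_etaSeries_pow (k j : ℕ) [NeZero k] :
    coeff (k * j) (dilate k etaSeries ^ j) = 1 := by
  have constantCoeff_pentagonalSeries : constantCoeff (pentagonalSeries (ZMod 2)) = 1 := by
    rw [← coeff_zero_eq_constantCoeff_apply]
    exact (coeff_pentagonalSeries_pentagonal (ZMod 2) 0).trans (by simp)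
  rw [dilate_etaSeries k _ rfl, mul_pow, ← pow_mul, coeff_X_pow_mul', if_pos le_rfl]
  simp [constantCoeff_expand, constantCoeff_pentagonalSeries]

theorem dilate_etaSeries_ne_zero (k : ℕ) [NeZero k] : dilate k etaSeries ≠ 0 := fun h => by
  simpa [h] using coeff_dilate_etaSeries_pow k 1

theorem dvd_mul_natAbs_sq_iff {p c : ℕ} (hp : p.Prime) (hc : p.Coprime c) {x : ℤ} :
    p ∣ c * x.natAbs ^ 2 ↔ (p : ℤ) ∣ x := by
  rw [hc.dvd_mul_left, hp.prime.dvd_pow_iff_dvd two_ne_zero, Int.natCast_dvd]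

theorem dvdPart_etaSeries : dvdPart 11 etaSeries = dilate 121 etaSeries := by
  rw [etaSeries_eq_countingSeries, dvdPart_countingSeries, dilate_countingSeries]
  refine (countingSeries_eq_of_bijOn (f := fun x => -11 * x) ⟨?_, ?_, ?_⟩ ?_).symm
  · exact fun x (hx : x % 6 = 5) => ⟨by dsimp only [Set.mem_ofPred_eq]; omega,
      (dvd_mul_natAbs_sq_iff (by norm_num) (by norm_num)).mpr ⟨-x, by simp⟩⟩
  · exact fun x _ y _ h => by dsimp only at h; omega
  · rintro y ⟨hy, hdvd⟩
    dsimp only [Set.mem_ofPred_eq] at hy hdvd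
    have dvd_y := (dvd_mul_natAbs_sq_iff (by norm_num) (by norm_num)).mp hdvd
    exact ⟨-(y / 11), by simp only [Set.mem_ofPred_eq]; omega, by dsimp only; omega⟩
  · intro x _
    zify
    simp only [sq_abs]
    ring

theorem dvdPart_etaSeries_pow_three : dvdPart 11 (etaSeries ^ 3) = dilate 121 etaSeries ^ 3 := by
  rw [← map_pow, etaSeries_pow_three, dvdPart_countingSeries, dilate_countingSeries]
  refine (countingSeries_eq_of_bijOn (f := fun x => 11 * x) ⟨?_, ?_, ?_⟩ ?_).symm
  · exact fun x (hx : 0 < x ∧ x % 2 = 1) => ⟨by dsimp only [Set.mem_ofPred_eq]; omega,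
      (dvd_mul_natAbs_sq_iff (by norm_num) (by norm_num)).mpr (dvd_mul_right ..)⟩
  · exact fun x _ y _ h => by dsimp only at h; omega
  · rintro y ⟨hy, hdvd⟩
    dsimp only [Set.mem_ofPred_eq] at hy hdvd
    have dvd_y := (dvd_mul_natAbs_sq_iff (by norm_num) (by norm_num)).mp hdvd
    exact ⟨y / 11, by simp only [Set.mem_ofPred_eq]; omega, by dsimp only; omega⟩
  · intro x _
    zify
    simp only [sq_abs]
    ring

/-- The sum of the `k`-th powers of the roots of the modular equation of degree `11`, weighted by
`φ` and `ψ`. Modulo `2` the roots are `η(q^121)` and the eleven series `η(ζ q)` with `ζ ^ 11 = 1`,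
and averaging over `ζ` is `dvdPart 11`. -/
noncomputable def rootPowerSum (φ ψ : (ZMod 2)⟦X⟧) (k : ℕ) : (ZMod 2)⟦X⟧ :=
  dvdPart 11 (etaSeries ^ k * φ) + dilate 121 etaSeries ^ k * ψ

theorem etaSeries_pow_twelve_eq :
    etaSeries ^ 12 = dilate 11 etaSeries * etaSeries + dilate 11 etaSeries ^ 3 * etaSeries ^ 3 +
      dilate 11 etaSeries ^ 12 := by
  linear_combination -etaSeries_mul_dilate_eleven -
    (dilate 11 etaSeries ^ 3 * etaSeries ^ 3 + dilate 11 etaSeries ^ 12) *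
      CharTwo.two_eq_zero (R := (ZMod 2)⟦X⟧)

theorem dilate_etaSeries_pow_twelve_eq :
    dilate 121 etaSeries ^ 12 = dilate 11 etaSeries * dilate 121 etaSeries +
      dilate 11 etaSeries ^ 3 * dilate 121 etaSeries ^ 3 + dilate 11 etaSeries ^ 12 := by
  have dilated := congrArg (dilate 11) etaSeries_mul_dilate_eleven
  simp only [map_mul, map_add, map_pow, dilate_dilate (a := 11) (b := 11) 121 rfl] at dilated
  linear_combination -dilated - (dilate 11 etaSeries ^ 3 * dilate 121 etaSeries ^ 3 +
    dilate 11 etaSeries ^ 12) * CharTwo.two_eq_zero (R := (ZMod 2)⟦X⟧)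

theorem rootPowerSum_add_twelve (φ ψ : (ZMod 2)⟦X⟧) (k : ℕ) :
    rootPowerSum φ ψ (k + 12) =
      dilate 11 etaSeries * rootPowerSum φ ψ (k + 1) +
      dilate 11 etaSeries ^ 3 * rootPowerSum φ ψ (k + 3) +
      dilate 11 etaSeries ^ 12 * rootPowerSum φ ψ k := by
  have expanded : etaSeries ^ (k + 12) * φ =
      dilate 11 etaSeries * (etaSeries ^ (k + 1) * φ) +
      dilate 11 (etaSeries ^ 3) * (etaSeries ^ (k + 3) * φ) +
      dilate 11 (etaSeries ^ 12) * (etaSeries ^ k * φ) := by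
    rw [map_pow, map_pow, pow_add, etaSeries_pow_twelve_eq]
    ring
  simp only [rootPowerSum, expanded, map_add, dvdPart_dilate_mul]
  rw [map_pow, map_pow, pow_add _ k 12, dilate_etaSeries_pow_twelve_eq]
  ring

theorem rootPowerSum_one_two_mul (k : ℕ) :
    rootPowerSum 1 1 (2 * k) = rootPowerSum 1 1 k ^ 2 := by
  have dvdPart_sq (φ : (ZMod 2)⟦X⟧) : dvdPart 11 (φ ^ 2) = dvdPart 11 φ ^ 2 := by
    rw [pow_prime_pow_eq_dilate (pow_one 2), dvdPart_dilate_of_coprime (by norm_num),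
      ← pow_prime_pow_eq_dilate (pow_one 2)]
  simp only [rootPowerSum, mul_one]
  rw [CharTwo.add_sq, mul_comm 2 k, pow_mul, pow_mul, dvdPart_sq]

theorem eq_of_charTwo_recurrence {A : Type*} [CommRing A] [IsDomain A] [CharP A 2] {s : ℕ → A}
    {c : A} (s_two_mul : ∀ k, s (2 * k) = s k ^ 2)
    (s_add_twelve : ∀ k, s (k + 12) = c * s (k + 1) + c ^ 3 * s (k + 3) + c ^ 12 * s k)
    (hc : c ≠ 0) (s_one : s 1 = 0) (s_three : s 3 = 0) (s_five : s 5 ≠ c ^ 7)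
    (s_eleven : s 11 ≠ 0) : s 11 = c := by
  have s_two : s 2 = 0 := by simpa [s_one] using s_two_mul 1
  have s_four : s 4 = 0 := by simpa [s_two] using s_two_mul 2
  have s_eight : s 8 = 0 := by simpa [s_four] using s_two_mul 4
  have s_sixteen : s 16 = 0 := by simpa [s_eight] using s_two_mul 8
  have s_seven_sq : s 7 ^ 2 = c ^ 3 * s 5 := by
    rw [← s_two_mul]
    linear_combination s_add_twelve 2 + c * s_three + c ^ 12 * s_two
  have s_five_eq : s 5 = c ^ 2 * s 7 := by
    have sum_eq_zero : c * (s 5 + c ^ 2 * s 7) = 0 := by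
      linear_combination s_sixteen - s_add_twelve 4 - c ^ 12 * s_four
    exact CharTwo.add_eq_zero.mp ((mul_eq_zero.mp sum_eq_zero).resolve_left hc)
  have s_five_zero : s 5 = 0 := by
    have product_eq_zero : s 5 * (s 5 - c ^ 7) = 0 := by
      linear_combination (s 5 + c ^ 2 * s 7) * s_five_eq + c ^ 4 * s_seven_sq
    exact (mul_eq_zero.mp product_eq_zero).resolve_right (sub_ne_zero.mpr s_five)
  have s_ten : s 10 = 0 := by simpa [s_five_zero] using s_two_mul 5
  have s_thirteen : s 13 = 0 := by
    linear_combination s_add_twelve 1 + c * s_two + c ^ 3 * s_four + c ^ 12 * s_one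
  have s_eleven_sq : s 11 * (s 11 - c) = 0 := by
    linear_combination s_add_twelve 10 - s_two_mul 11 + c ^ 3 * s_thirteen + c ^ 12 * s_ten
  exact sub_eq_zero.mp ((mul_eq_zero.mp s_eleven_sq).resolve_left s_eleven)

theorem coeff_etaSeries_pow_five : coeff 77 (etaSeries ^ 5) = 0 := by
  have fourth_power : etaSeries ^ 4 = dilate 4 etaSeries :=
    pow_prime_pow_eq_dilate (p := 2) (j := 2) rfl _
  rw [pow_succ, fourth_power, etaSeries_eq_countingSeries, dilate_countingSeries,
    countingSeries_mul ((finiteFibers_mul_natAbs_sq one_ne_zero _).const_mul four_ne_zero)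
      (finiteFibers_mul_natAbs_sq one_ne_zero _), coeff_countingSeries]
  have no_solution : {p ∈ {x : ℤ | x % 6 = 5} ×ˢ {x : ℤ | x % 6 = 5} |
      4 * (1 * p.1.natAbs ^ 2) + 1 * p.2.natAbs ^ 2 = 77} = ∅ := by
    refine Set.eq_empty_of_forall_notMem fun ⟨x, y⟩ ⟨⟨hx, hy⟩, h⟩ => ?_
    simp only [Set.mem_ofPred_eq] at hx hy h
    zify at h
    simp only [sq_abs] at h
    have x_bounds : -5 < x ∧ x < 5 := ⟨by nlinarith, by nlinarith⟩
    have y_bounds : -9 < y ∧ y < 9 := ⟨by nlinarith, by nlinarith⟩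
    obtain rfl : x = -1 := by omega
    obtain rfl | rfl | rfl : y = -7 ∨ y = -1 ∨ y = 5 := by omega
    all_goals norm_num at h
  rw [no_solution, Set.ncard_empty, Nat.cast_zero]

theorem rootPowerSum_one_one : rootPowerSum 1 1 1 = 0 := by
  simp only [rootPowerSum, mul_one, pow_one, dvdPart_etaSeries, CharTwo.add_self_eq_zero]

theorem rootPowerSum_one_eleven : rootPowerSum 1 1 11 = dilate 11 etaSeries := by
  refine eq_of_charTwo_recurrence rootPowerSum_one_two_mul (rootPowerSum_add_twelve 1 1)
    (dilate_etaSeries_ne_zero 11) rootPowerSum_one_one ?_ (fun h => ?_) (fun h => ?_)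
  · simp only [rootPowerSum, mul_one, dvdPart_etaSeries_pow_three, CharTwo.add_self_eq_zero]
  · have coeff_eq := congrArg (coeff 77) h
    rw [rootPowerSum, mul_one, mul_one, map_add, coeff_dvdPart, coeff_etaSeries_pow_five,
      coeff_dilate_etaSeries_pow_of_lt (by norm_num), coeff_dilate_etaSeries_pow 11 7] at coeff_eq
    norm_num at coeff_eq
  · have coeff_eq := congrArg (coeff 11) h
    have leading_coeff : coeff 11 (etaSeries ^ 11) = 1 := by
      simpa only [expand_one, AlgHom.id_apply, one_mul] using coeff_dilate_etaSeries_pow 1 11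
    rw [rootPowerSum, mul_one, mul_one, map_add, coeff_dvdPart,
      coeff_dilate_etaSeries_pow_of_lt (by norm_num), leading_coeff] at coeff_eq
    norm_num at coeff_eq

/-- The power sum of exponent `-1`, the inverses of the roots being `φ / X ^ n` and `ψ / X ^ n`. -/
theorem dilate_etaSeries_pow_mul_rootPowerSum_zero {n : ℕ} {φ ψ : (ZMod 2)⟦X⟧} (hn : 11 ∣ n)
    (hφ : etaSeries * φ = X ^ n) (hψ : dilate 121 etaSeries * ψ = X ^ n) :
    dilate 11 etaSeries ^ 11 * rootPowerSum φ ψ 0 = X ^ n := by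
  have lower (k : ℕ) : rootPowerSum φ ψ (k + 1) = X ^ n * rootPowerSum 1 1 k := by
    simp only [rootPowerSum, pow_succ, mul_assoc, hφ, hψ, mul_one]
    rw [mul_comm (etaSeries ^ k), dvdPart_X_pow_mul hn]
    ring
  have rootPowerSum_zero : rootPowerSum 1 1 0 = 0 := by
    have dvdPart_one : dvdPart 11 (1 : (ZMod 2)⟦X⟧) = 1 := by
      rw [← map_one (dilate 11), dvdPart_dilate]
    simp only [rootPowerSum, pow_zero, mul_one, dvdPart_one, CharTwo.add_self_eq_zero]
  have rootPowerSum_two : rootPowerSum 1 1 2 = 0 := by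
    rw [rootPowerSum_one_two_mul 1, rootPowerSum_one_one, zero_pow two_ne_zero]
  have recurrence := rootPowerSum_add_twelve φ ψ 0
  rw [lower 11, lower 0, lower 2, rootPowerSum_zero, rootPowerSum_two,
    rootPowerSum_one_eleven] at recurrence
  refine mul_left_cancel₀ (dilate_etaSeries_ne_zero 11) ?_
  linear_combination -recurrence

theorem dvdPart_X_pow_five_mul {P : (ZMod 2)⟦X⟧} (hP : P * pentagonalSeries (ZMod 2) = 1) :
    dvdPart 11 (X ^ 5 * P) = dilate 11 (P ^ 11 + dilate 11 P) := by
  have dilate_mul_eta (k m : ℕ) [NeZero k] [NeZero m] (h : 24 * k = m) :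
      dilate k etaSeries * dilate m P = X ^ k := by
    rw [dilate_etaSeries k m h, mul_assoc, mul_comm _ (dilate m P), ← map_mul, hP, map_one,
      mul_one]
  have eta_mul : etaSeries * (X ^ 120 * dilate 24 P) = X ^ 121 := by
    rw [mul_left_comm, etaSeries, mul_assoc, ← map_mul, mul_comm _ P, hP, map_one, mul_one,
      ← pow_succ]
  have power_sum := dilate_etaSeries_pow_mul_rootPowerSum_zero (by norm_num) eta_mul
    (dilate_mul_eta 121 2904 rfl)
  have scaled : rootPowerSum (X ^ 120 * dilate 24 P) (dilate 2904 P) 0 = dilate 264 (P ^ 11) := by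
    refine mul_left_cancel₀ (pow_ne_zero 11 (dilate_etaSeries_ne_zero 11)) ?_
    rw [power_sum, map_pow, ← mul_pow, dilate_mul_eta 11 264 rfl, ← pow_mul]
  have X_pow_eq : (X ^ 120 : (ZMod 2)⟦X⟧) = dilate 24 (X ^ 5) := by
    rw [map_pow, expand_X, ← pow_mul]
  refine dilate_injective (k := 24) ?_
  rw [map_add, map_add, dilate_dilate (a := 24) (b := 11) 264 rfl,
    dilate_dilate (a := 11) (b := 11) 121 rfl, dilate_dilate (a := 24) (b := 121) 2904 rfl]
  rw [rootPowerSum, pow_zero, pow_zero, one_mul, one_mul, X_pow_eq, ← map_mul,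
    dvdPart_dilate_of_coprime (by norm_num)] at scaled
  rw [← scaled, add_assoc, CharTwo.add_self_eq_zero, add_zero]

end ModularEquation

section PartitionSeries

variable (R : Type*) [CommRing R]

/-- The generating series `∑ p(n) qⁿ` of all partitions. -/
noncomputable def partitionSeries : R⟦X⟧ :=
  countingSeries R Set.univ (Sigma.fst : (Σ k : ℕ, k.Partition) → ℕ)

/-- The generating series `∑ b_m(n) qⁿ` of the `m`-regular partitions. -/
noncomputable def regularPartitionSeries (m : ℕ) : R⟦X⟧ :=
  PowerSeries.mk fun n => (numRegularPartitions m n : R)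

theorem setOf_partition_size_eq (n : ℕ) :
    {i | i ∈ Set.univ ∧ (i : Σ k : ℕ, k.Partition).1 = n} = Set.range (Sigma.mk n) := by
  ext ⟨k, π⟩
  constructor
  · rintro ⟨-, rfl⟩
    exact ⟨π, rfl⟩
  · rintro ⟨π', h⟩
    cases h
    exact ⟨trivial, rfl⟩

theorem coeff_partitionSeries (n : ℕ) :
    coeff n (partitionSeries R) = (Fintype.card n.Partition : R) := by
  rw [partitionSeries, coeff_countingSeries, setOf_partition_size_eq, ← Set.image_univ,
    Set.ncard_image_of_injective _ sigma_mk_injective, Set.ncard_univ, Nat.card_eq_fintype_card]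

theorem coeff_partitionSeries_pow (t n : ℕ) :
    coeff n (partitionSeries R ^ t) = (numMultipartitions t n : R) := by
  have finiteFibers : FiniteFibers Set.univ (Sigma.fst : (Σ k : ℕ, k.Partition) → ℕ) := fun n => by
    rw [setOf_partition_size_eq]
    exact Set.finite_range _
  rw [partitionSeries, countingSeries_pow finiteFibers, coeff_countingSeries, numMultipartitions]
  simp only [Set.pi_univ, Set.mem_univ, true_and, ← Nat.card_coe_set_eq]
  rfl

open WithPiTopology in
theorem partitionSeries_mul_pentagonalSeries :
    partitionSeries R * pentagonalSeries R = 1 := by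
  let _ : TopologicalSpace R := ⊥
  have _ : DiscreteTopology R := ⟨rfl⟩
  have partitions_eq : partitionSeries R =
      PowerSeries.mk fun n => ((Nat.Partition.restricted n fun _ => True).card : R) := by
    ext n
    simp [coeff_partitionSeries, Nat.Partition.restricted]
  rw [partitions_eq]
  refine ((Nat.Partition.hasProd_powerSeriesMk_card_restricted R fun _ => True).mul
    (hasProd_one_sub_X_pow R)).unique ?_
  convert hasProd_one with i
  simp only [if_true, pow_mul]
  exact tsum_pow_mul_one_sub_of_constantCoeff_eq_zero (by simp)

theorem numRegularPartitions_eq_card_countRestricted {m : ℕ} (hm : 0 < m) (n : ℕ) :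
    numRegularPartitions m n = (Nat.Partition.countRestricted n m).card := by
  rw [← Nat.Partition.card_restricted_eq_card_countRestricted n hm, numRegularPartitions,
    Nat.Partition.restricted, Nat.card_eq_fintype_card, Fintype.card_subtype]

open WithPiTopology in
theorem continuous_dilate [TopologicalSpace R] (k : ℕ) [NeZero k] :
    Continuous (dilate k : R⟦X⟧ → R⟦X⟧) := by
  refine continuous_iff_continuousAt.mpr fun φ =>
    (tendsto_iff_coeff_tendsto (R := R) ..).mpr fun n => ?_
  simp only [coeff_expand]
  split_ifs
  · exact (continuous_coeff R _).continuousAt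
  · exact tendsto_const_nhds

open WithPiTopology in
theorem regularPartitionSeries_mul_pentagonalSeries (m : ℕ) [NeZero m] :
    regularPartitionSeries R m * pentagonalSeries R = dilate m (pentagonalSeries R) := by
  let _ : TopologicalSpace R := ⊥
  have _ : DiscreteTopology R := ⟨rfl⟩
  have dilated_prod := (hasProd_one_sub_X_pow R).map (dilate m) (continuous_dilate R m)
  simp only [regularPartitionSeries,
    numRegularPartitions_eq_card_countRestricted (Nat.pos_of_neZero m)]
  have factor (i : ℕ) : (∑ j ∈ Finset.range m, (X : R⟦X⟧) ^ ((i + 1) * j)) * (1 - X ^ (i + 1)) =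
      dilate m (1 - X ^ (i + 1)) := by
    rw [map_sub, map_one, map_pow, expand_X, ← pow_mul, mul_comm m, pow_mul]
    simp only [pow_mul, geom_sum_mul_neg]
  have product := (Nat.Partition.hasProd_powerSeriesMk_card_countRestricted R
    (Nat.pos_of_neZero m)).mul (hasProd_one_sub_X_pow R)
  simp only [factor] at product
  exact product.unique dilated_prod

theorem regularPartitionSeries_eq (m : ℕ) [NeZero m] :
    regularPartitionSeries R m = dilate m (pentagonalSeries R) * partitionSeries R := by
  rw [← regularPartitionSeries_mul_pentagonalSeries, mul_assoc, mul_comm (pentagonalSeries R),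
    partitionSeries_mul_pentagonalSeries, mul_one]

end PartitionSeries

section Congruences

theorem dvdPart_X_pow_five_mul_regularPartitionSeries {k s : ℕ} [NeZero s] (hs : 2 ^ k = s)
    (hle : s ≤ 11) :
    dvdPart 11 (X ^ 5 * regularPartitionSeries (ZMod 2) (11 * s)) =
      dilate 11 (partitionSeries (ZMod 2) ^ (11 - s) +
        dilate s (pentagonalSeries (ZMod 2)) * dilate 11 (partitionSeries (ZMod 2))) := by
  have inverse := partitionSeries_mul_pentagonalSeries (ZMod 2)
  set P := partitionSeries (ZMod 2)
  set F := pentagonalSeries (ZMod 2)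
  have lower_power : dilate s F * P ^ 11 = P ^ (11 - s) := by
    rw [← pow_prime_pow_eq_dilate hs, ← Nat.add_sub_cancel' hle, pow_add, ← mul_assoc, ← mul_pow,
      mul_comm F, inverse, one_pow, one_mul, Nat.add_sub_cancel_left]
  rw [regularPartitionSeries_eq, ← dilate_dilate (a := 11) (b := s) (11 * s) rfl, mul_left_comm,
    dvdPart_dilate_mul, dvdPart_X_pow_five_mul inverse, ← map_mul, mul_add, lower_power]

theorem numRegularPartitions_modEq_numMultipartitions {k N : ℕ} (hk : k ≤ 3)
    (hN : ∀ j : ℤ, ¬ 2 ^ k * pentagonal j ≡ N [MOD 11]) :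
    numRegularPartitions (11 * 2 ^ k) (11 * N - 5) ≡ numMultipartitions (11 - 2 ^ k) N
      [MOD 2] := by
  have N_ne_zero : N ≠ 0 := by
    rintro rfl
    exact hN 0 (by simp [pentagonal, Nat.ModEq])
  have hle : 2 ^ k ≤ 11 := (Nat.pow_le_pow_right two_pos hk).trans (by norm_num)
  have no_pentagonal (i : ℕ) (hi : i ≡ N [MOD 11]) :
      coeff i (dilate (2 ^ k) (pentagonalSeries (ZMod 2))) = 0 := by
    rw [coeff_expand]
    split_ifs with hdvd
    · obtain ⟨l, rfl⟩ := hdvd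
      rw [Nat.mul_div_cancel_left _ (Nat.pos_of_neZero _)]
      refine coeff_pentagonalSeries_eq_zero _ ?_
      rintro ⟨j, rfl⟩
      exact hN j hi
    · rfl
  have coeff_eq := congrArg (coeff (11 * N))
    (dvdPart_X_pow_five_mul_regularPartitionSeries (k := k) rfl hle)
  rw [coeff_dvdPart, if_pos (dvd_mul_right ..), coeff_X_pow_mul', if_pos (by omega),
    coeff_expand_mul, map_add, coeff_mul_dilate_eq_zero no_pentagonal, add_zero,
    coeff_partitionSeries_pow, regularPartitionSeries, coeff_mk] at coeff_eq
  exact (ZMod.natCast_eq_natCast_iff _ _ _).mp coeff_eq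

theorem pentagonal_mod_eleven_mem (j : ℤ) :
    pentagonal j % 11 ∈ ({0, 1, 2, 4, 5, 7} : Finset ℕ) := by
  have double := congrArg (Int.cast : ℤ → ZMod 11) (two_mul_natCast_pentagonal j)
  push_cast at double
  have residues : ∀ x y : ZMod 11, 2 * y = x * (3 * x - 1) →
      y.val ∈ ({0, 1, 2, 4, 5, 7} : Finset ℕ) := by decide
  simpa only [ZMod.val_natCast] using residues _ _ double

theorem not_mul_pentagonal_modEq {s n B : ℕ}
    (h : ∀ r ∈ ({0, 1, 2, 4, 5, 7} : Finset ℕ), ¬ s * r ≡ B [MOD 11]) (j : ℤ) :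
    ¬ s * pentagonal j ≡ 11 * n + B [MOD 11] := fun hj => by
  refine h _ (pentagonal_mod_eleven_mem j) ?_
  exact ((Nat.mod_modEq ..).mul_left s).trans (hj.trans (by simp [Nat.ModEq]))

end Congruences

theorem stmt_2 (n : ℕ) :
    (∀ B ∈ ({1, 5, 6, 7, 9} : Finset ℕ),
      numRegularPartitions 22 (121 * n + 11 * B - 5) ≡
        numMultipartitions 9 (11 * n + B) [MOD 2]) ∧
    (∀ B ∈ ({1, 2, 3, 7, 10} : Finset ℕ),
      numRegularPartitions 44 (121 * n + 11 * B - 5) ≡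
        numMultipartitions 7 (11 * n + B) [MOD 2]) ∧
    (∀ B ∈ ({2, 3, 4, 6, 9} : Finset ℕ),
      numRegularPartitions 88 (121 * n + 11 * B - 5) ≡
        numMultipartitions 3 (11 * n + B) [MOD 2]) := by
  have index (B : ℕ) : 121 * n + 11 * B - 5 = 11 * (11 * n + B) - 5 := by omega
  simp only [index]
  exact ⟨
    fun B hB => numRegularPartitions_modEq_numMultipartitions (k := 1) (by norm_num)
      (not_mul_pentagonal_modEq (by revert B; decide)),
    fun B hB => numRegularPartitions_modEq_numMultipartitions (k := 2) (by norm_num)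
      (not_mul_pentagonal_modEq (by revert B; decide)),
    fun B hB => numRegularPartitions_modEq_numMultipartitions (k := 3) (by norm_num)
      (not_mul_pentagonal_modEq (by revert B; decide))⟩
end

section
/- For every natural number n: for every B in {3, 6, 7, 8, 9, 12}, b_26(169n + 13B − 7) ≡ p_11(13n + B) (mod 2); for every B in {1, 3, 5, 6, 11, 12}, b_52(169n + 13B − 7) ≡ p_9(13n + B) (mod 2); and for every B in {2, 6, 9, 10, 11, 12}, b_104(169n + 13B − 7) ≡ p_5(13n + B) (mod 2). -/
/-!
Work over a field of characteristic 2 containing a primitive 13th root of unity `ζ`, and let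
`f = ∏ (1 - Xⁿ)`. Consider the fourteen series `ζ^(6j) f(ζ^j X)`, `0 ≤ j < 13`, and `X⁷ f(X^169)`.
Their `k`-th power sum vanishes for `0 < k < 13`, and their 13th powers add up to `f(X^13)`. For
odd `k` this is a statement about the coefficients of `θ^k` at multiples of 13, where
`θ = X f(X^24) = ∑ X^(x²)` over the positive integers `x` prime to 6. Since `θ³ = ∑ X^(3y²)` over
odd `y > 0` (Jacobi) and `θ^(2^i) = θ(X^(2^i))`, each such power is a theta series of a unary or
binary form, and the numbers of representations are controlled by the behaviour of 13: inert for
`k = 9, 11`, and `13 = 3² + 4 = 1² + 12` for `k = 5, 7, 13`. Even `k` reduce to `k / 2` by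
Frobenius. Newton's identities and `f(X^169) ∏ⱼ f(ζ^j X) = f(X^13)^14` then give the 13-dissection
`X⁷ ∑ⱼ ζ^(7j) / f(ζ^j X) + 1 / f(X^169) = 1 / f(X^13)^13`
of the partition generating function. Multiplying by `f(X^13)^(2^i)` and extracting coefficients,
the middle term drops out at `B` whenever `24 B + 2^i` is not `2^i` times a square modulo 13.
-/

namespace RegularPartitionParity

open Finset PowerSeries

section Newton

variable {σ A : Type*} [Fintype σ] [CommRing A]

theorem natCast_mul_sum_powersetCard_prod_of_sum_pow_eq_zero (s : σ → A) {m : ℕ} (hm : 0 < m)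
    (h : ∀ k, 0 < k → k < m → ∑ i, s i ^ k = 0) :
    (m : A) * ∑ t ∈ powersetCard m univ, ∏ i ∈ t, s i = (-1) ^ (m + 1) * ∑ i, s i ^ m := by
  have newton := congrArg (MvPolynomial.aeval s) (MvPolynomial.mul_esymm_eq_sum σ ℤ m)
  simp only [map_mul, map_natCast, map_pow, map_neg, map_one, map_sum, MvPolynomial.esymm,
    MvPolynomial.psum, map_prod, MvPolynomial.aeval_X] at newton
  rw [newton, Finset.sum_eq_single (0, m)]
  · simp
  · rintro ⟨a, b⟩ hab hne
    simp only [mem_filter, HasAntidiagonal.mem_antidiagonal] at hab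
    have ha : a ≠ 0 := by rintro rfl; exact hne (by ext <;> simp; omega)
    rw [h b (by omega) (by omega), mul_zero]
  · simp [hm]

theorem sum_powersetCard_card_sub_one_prod [DecidableEq σ] [Nonempty σ] (s : σ → A) :
    ∑ t ∈ powersetCard (Fintype.card σ - 1) univ, ∏ i ∈ t, s i =
      ∑ j, ∏ i ∈ univ.erase j, s i := by
  refine (sum_bij (fun j _ => univ.erase j) ?_ ?_ ?_ fun _ _ => rfl).symm
  · simp [card_erase_of_mem]
  · intro i _ j _ h
    by_contra hij
    simpa [hij] using congrArg (i ∈ ·) h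
  · intro t ht
    obtain ⟨j, hj⟩ : ∃ j, tᶜ = {j} := by
      rw [← card_eq_one, card_compl, (mem_powersetCard.1 ht).2]
      have := Fintype.card_pos (α := σ)
      omega
    exact ⟨j, mem_univ j, by rw [erase_eq, ← compl_eq_univ_sdiff, ← hj, compl_compl]⟩

-- Newton's identities for the family `r` extended by `w`: its elementary symmetric polynomial of
-- degree `card σ` is `(∏ r) (1 + w ∑ r⁻¹)`.
theorem card_mul_prod_mul_one_add_of_sum_pow_eq_zero [Nonempty σ] {r s : σ → A} {w : A}
    (hrs : ∀ i, r i * s i = 1)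
    (h : ∀ k, 0 < k → k < Fintype.card σ → ∑ i, r i ^ k + w ^ k = 0) :
    (Fintype.card σ : A) * ((∏ i, r i) * (1 + w * ∑ i, s i)) =
      (-1) ^ (Fintype.card σ + 1) * (∑ i, r i ^ Fintype.card σ + w ^ Fintype.card σ) := by
  classical
  have prod_erase (j : σ) : ∏ i ∈ univ.erase j, r i = (∏ i, r i) * s j := by
    rw [← mul_prod_erase univ r (mem_univ j)]
    linear_combination -(∏ i ∈ univ.erase j, r i) * hrs j
  have newton := natCast_mul_sum_powersetCard_prod_of_sum_pow_eq_zero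
    (fun i : Option σ => i.elim w r) (Fintype.card_pos (α := σ))
    fun k hk hkn => by simpa [Fintype.sum_option, add_comm] using h k hk hkn
  have esymm := sum_powersetCard_card_sub_one_prod (fun i : Option σ => i.elim w r)
  rw [Fintype.card_option, Nat.add_sub_cancel, Fintype.sum_option] at esymm
  have erase_none : ∏ i ∈ univ.erase (none : Option σ), i.elim w r = ∏ i, r i := by
    rw [show univ.erase (none : Option σ) = univ.map Function.Embedding.some by
      ext (_ | i) <;> simp, prod_map]
    rfl
  have erase_some (j : σ) : ∏ i ∈ univ.erase (some j), i.elim w r = w * ((∏ i, r i) * s j) := by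
    rw [show univ.erase (some j) = insertNone (univ.erase j) by ext (_ | i) <;> simp,
      prod_insertNone, ← prod_erase]
    rfl
  simp only [erase_none, erase_some, ← mul_sum] at esymm
  rw [esymm, Fintype.sum_option] at newton
  simp only [Option.elim] at newton
  linear_combination newton

end Newton

section RootsOfUnity

theorem expand_comm {R : Type*} [CommRing R] {k l : ℕ} (hk : k ≠ 0) (hl : l ≠ 0) (φ : R⟦X⟧) :
    expand k hk (expand l hl φ) = expand l hl (expand k hk φ) := by
  rw [← expand_mul, ← expand_mul]
  simp only [mul_comm]

theorem rescale_expand_of_pow_eq_one {R : Type*} [CommRing R] {ℓ : ℕ} (hℓ : ℓ ≠ 0) {a : R}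
    (ha : a ^ ℓ = 1) (φ : R⟦X⟧) :
    rescale a (expand ℓ hℓ φ) = expand ℓ hℓ φ := by
  ext n
  rw [coeff_rescale, coeff_expand]
  split_ifs with h
  · obtain ⟨k, rfl⟩ := h
    rw [pow_mul, ha, one_pow, one_mul]
  · rw [mul_zero]

theorem sum_C_mul_rescale_mul_expand {R : Type*} [CommRing R] {ℓ : ℕ} (hℓ : ℓ ≠ 0)
    {ζ : R} (hζ : ζ ^ ℓ = 1) (a : ℕ)
    (φ G : R⟦X⟧) :
    (∑ j : Fin ℓ, C (ζ ^ (a * (j : ℕ))) * rescale (ζ ^ (j : ℕ)) φ) * expand ℓ hℓ G =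
      ∑ j : Fin ℓ, C (ζ ^ (a * (j : ℕ))) * rescale (ζ ^ (j : ℕ)) (φ * expand ℓ hℓ G) := by
  rw [sum_mul]
  refine sum_congr rfl fun j _ => ?_
  rw [map_mul, rescale_expand_of_pow_eq_one hℓ (by rw [pow_right_comm, hζ, one_pow]), mul_assoc]

variable {F : Type*} [CommRing F] [IsDomain F] {ℓ : ℕ} {ζ : F}

theorem sum_pow_mul_eq_ite_of_isPrimitiveRoot (hζ : IsPrimitiveRoot ζ ℓ) (n : ℕ) :
    ∑ j : Fin ℓ, (ζ ^ n) ^ (j : ℕ) = if ℓ ∣ n then (ℓ : F) else 0 := by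
  rw [Fin.sum_univ_eq_sum_range (fun j => (ζ ^ n) ^ j)]
  split_ifs with h
  · simp [(hζ.pow_eq_one_iff_dvd n).2 h]
  · have hne : ζ ^ n - 1 ≠ 0 := sub_ne_zero.2 (mt (hζ.pow_eq_one_iff_dvd n).1 h)
    refine (mul_eq_zero.1 ?_).resolve_left hne
    rw [mul_geom_sum, ← pow_mul, mul_comm, pow_mul, hζ.pow_eq_one, one_pow, sub_self]

theorem coeff_sum_C_mul_rescale (hζ : IsPrimitiveRoot ζ ℓ) (a n : ℕ) (φ : F⟦X⟧) :
    coeff n (∑ j : Fin ℓ, C (ζ ^ (a * j)) * rescale (ζ ^ (j : ℕ)) φ) =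
      if ℓ ∣ a + n then ℓ * coeff n φ else 0 := by
  have term (j : Fin ℓ) : coeff n (C (ζ ^ (a * j)) * rescale (ζ ^ (j : ℕ)) φ) =
      (ζ ^ (a + n)) ^ (j : ℕ) * coeff n φ := by
    rw [coeff_C_mul, coeff_rescale]; ring
  simp only [map_sum, term, ← sum_mul, sum_pow_mul_eq_ite_of_isPrimitiveRoot hζ, ite_mul, zero_mul]

theorem prod_one_sub_pow_mul_of_isPrimitiveRoot (hζ : IsPrimitiveRoot ζ ℓ) (hℓ : 0 < ℓ) (x : F) :
    ∏ j : Fin ℓ, (1 - ζ ^ (j : ℕ) * x) = 1 - x ^ ℓ := by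
  have roots : Polynomial.nthRoots ℓ (1 : F) = (Multiset.range ℓ).map (ζ ^ ·) := by
    simpa using hζ.nthRoots_eq (one_pow ℓ)
  have factor := hζ.pow_sub_pow_eq_prod_sub_mul 1 x hℓ
  classical
  rw [one_pow, Polynomial.nthRootsFinset_def, Finset.prod, Multiset.toFinset_val,
    hζ.nthRoots_one_nodup.dedup, roots, Multiset.map_map] at factor
  rw [Fin.prod_univ_eq_prod_range (fun j => 1 - ζ ^ j * x), factor]
  rfl

end RootsOfUnity

section EulerProduct

open WithPiTopology

theorem continuous_expand {R : Type*} [CommRing R] [TopologicalSpace R] (m : ℕ) (hm : m ≠ 0) :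
    Continuous (expand m hm (R := R)) := by
  refine continuous_iff_continuousAt.2 fun φ => (tendsto_iff_coeff_tendsto R _ _ _).2 fun d => ?_
  simp_rw [coeff_expand]
  split_ifs
  · exact (continuous_coeff R _).tendsto φ
  · exact tendsto_const_nhds

theorem continuous_rescale {R : Type*} [CommRing R] [TopologicalSpace R] [ContinuousMul R] (a : R) :
    Continuous (rescale a) := by
  refine continuous_iff_continuousAt.2 fun φ => (tendsto_iff_coeff_tendsto R _ _ _).2 fun d => ?_
  simp_rw [coeff_rescale]
  exact ((continuous_coeff R d).const_mul _).tendsto φ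

variable {R : Type*} [CommRing R]

theorem hasProd_expand_one_sub_X_pow [TopologicalSpace R] (m : ℕ) (hm : m ≠ 0) :
    HasProd (fun n : ℕ => (1 - X ^ (m * (n + 1)) : R⟦X⟧)) (expand m hm (pentagonalSeries R)) := by
  simpa [Function.comp_def, ← pow_mul] using
    (hasProd_one_sub_X_pow R).map (expand m hm (R := R)) (continuous_expand m hm)

theorem hasProd_ite_dvd_one_sub_X_pow [TopologicalSpace R] (m : ℕ) (hm : m ≠ 0) :
    HasProd (fun n : ℕ => if m ∣ n + 1 then (1 - X ^ (n + 1) : R⟦X⟧) else 1)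
      (expand m hm (pentagonalSeries R)) := by
  have pred_add_one (n : ℕ) : m * (n + 1) - 1 + 1 = m * (n + 1) :=
    Nat.sub_add_cancel (Nat.mul_pos (Nat.pos_of_ne_zero hm) n.succ_pos)
  have inj : Function.Injective fun n => m * (n + 1) - 1 := fun a b hab => by
    have := congrArg (· + 1) hab
    simpa [pred_add_one, hm] using this
  refine (inj.hasProd_iff fun n hn => if_neg ?_).1 ?_
  · rintro ⟨_ | k, hk⟩
    · simp at hk
    · exact hn ⟨k, by simp [← hk]⟩
  · simpa [Function.comp_def, pred_add_one] using hasProd_expand_one_sub_X_pow m hm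

theorem prod_rescale_one_sub_X_pow [IsDomain R] {ℓ : ℕ} (hℓ : ℓ.Prime) {ζ : R}
    (hζ : IsPrimitiveRoot ζ ℓ) (n : ℕ) :
    ∏ j : Fin ℓ, rescale (ζ ^ (j : ℕ)) (1 - X ^ n : R⟦X⟧) =
      if ℓ ∣ n then (1 - X ^ n) ^ ℓ else 1 - X ^ (ℓ * n) := by
  have rescale_term (j : Fin ℓ) :
      rescale (ζ ^ (j : ℕ)) (1 - X ^ n : R⟦X⟧) = 1 - C (ζ ^ n) ^ (j : ℕ) * X ^ n := by
    rw [map_sub, map_one, map_pow, rescale_X, mul_pow, ← map_pow, ← map_pow, ← pow_mul, ← pow_mul,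
      mul_comm n]
  simp only [rescale_term]
  split_ifs with h
  · simp [(hζ.pow_eq_one_iff_dvd n).2 h]
  · have hζn := hζ.pow_of_coprime n ((hℓ.coprime_iff_not_dvd.2 h).symm)
    rw [prod_one_sub_pow_mul_of_isPrimitiveRoot (hζn.map_of_injective C_injective) hℓ.pos,
      ← pow_mul, mul_comm n]

theorem prod_rescale_pentagonalSeries_mul_expand [IsDomain R] {ℓ : ℕ} (hℓ : ℓ.Prime) {ζ : R}
    (hζ : IsPrimitiveRoot ζ ℓ) :
    (∏ j : Fin ℓ, rescale (ζ ^ (j : ℕ)) (pentagonalSeries R)) *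
        expand ℓ hℓ.ne_zero (expand ℓ hℓ.ne_zero (pentagonalSeries R)) =
      expand ℓ hℓ.ne_zero (pentagonalSeries R) ^ (ℓ + 1) := by
  let _ : TopologicalSpace R := ⊥
  have : DiscreteTopology R := ⟨rfl⟩
  have hP := hasProd_one_sub_X_pow R
  have hK := hasProd_ite_dvd_one_sub_X_pow (R := R) ℓ hℓ.ne_zero
  have hL := hasProd_expand_one_sub_X_pow (R := R) ℓ hℓ.ne_zero
  have left := (hasProd_prod (s := univ) fun (j : Fin ℓ) _ =>
    hP.map (rescale (ζ ^ (j : ℕ))) (continuous_rescale _)).mul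
    (hK.map (expand ℓ hℓ.ne_zero (R := R)) (continuous_expand ℓ _))
  have right := (hasProd_prod (s := univ) fun (_ : Fin ℓ) _ => hK).mul hL
  rw [Fin.prod_const] at right
  rw [pow_succ]
  refine left.unique ?_
  convert right using 2 with n
  simp only [Function.comp_apply, prod_rescale_one_sub_X_pow hℓ hζ]
  split_ifs <;> simp [← pow_mul]

/-- The generating function `∑ p(n) Xⁿ` of the partition numbers. -/
noncomputable def partitionSeries (R : Type*) [Semiring R] : R⟦X⟧ :=
  mk fun n => (Fintype.card n.Partition : R)

theorem natCast_numMultipartitions {R : Type*} [CommSemiring R] (t n : ℕ) :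
    (numMultipartitions t n : R) = coeff n (partitionSeries R ^ t) := by
  let e : {f : Fin t → Σ k : ℕ, k.Partition // (∑ i, (f i).1) = n} ≃
      Σ s : ((univ : Finset (Fin t)).finsuppAntidiag n), ∀ i, (s.1 i).Partition :=
    { toFun := fun f => ⟨⟨Finsupp.equivFunOnFinite.symm fun i => (f.1 i).1,
        mem_finsuppAntidiag.2 ⟨f.2, subset_univ _⟩⟩, fun i => (f.1 i).2⟩
      invFun := fun p => ⟨fun i => ⟨p.1.1 i, p.2 i⟩, (mem_finsuppAntidiag.1 p.1.2).1⟩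
      left_inv := fun _ => rfl
      right_inv := fun _ => Sigma.ext (Subtype.ext (Finsupp.ext fun _ => rfl)) HEq.rfl }
  rw [numMultipartitions, Nat.card_congr e, Nat.card_eq_fintype_card, Fintype.card_sigma]
  simp_rw [Fintype.card_pi]
  rw [sum_coe_sort (univ.finsuppAntidiag n) fun s => ∏ i, Fintype.card (s i).Partition,
    ← Fin.prod_const, coeff_prod]
  simp only [partitionSeries, coeff_mk, Nat.cast_sum, Nat.cast_prod]

variable (R) in
theorem partitionSeries_mul_pentagonalSeries : partitionSeries R * pentagonalSeries R = 1 := by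
  let _ : TopologicalSpace R := ⊥
  have : DiscreteTopology R := ⟨rfl⟩
  have partitions := Nat.Partition.hasProd_powerSeriesMk_card_restricted R fun _ => True
  simp only [Nat.Partition.restricted, implies_true, filter_true, card_univ, if_true] at partitions
  refine (partitions.mul (hasProd_one_sub_X_pow R)).unique ?_
  convert hasProd_one using 2 with i
  simp_rw [pow_mul]
  exact tsum_pow_mul_one_sub_of_constantCoeff_eq_zero (by simp)

variable (R) in
theorem mk_numRegularPartitions_mul_pentagonalSeries (m : ℕ) (hm : m ≠ 0) :
    (mk fun n => (numRegularPartitions m n : R)) * pentagonalSeries R =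
      expand m hm (pentagonalSeries R) := by
  let _ : TopologicalSpace R := ⊥
  have : DiscreteTopology R := ⟨rfl⟩
  have card_eq (n : ℕ) : (Nat.Partition.countRestricted n m).card = numRegularPartitions m n := by
    classical
    rw [← Nat.Partition.card_restricted_eq_card_countRestricted n (Nat.pos_of_ne_zero hm),
      numRegularPartitions, Nat.card_eq_fintype_card, Fintype.card_subtype]
    simp only [Nat.Partition.restricted]
  have regular := Nat.Partition.hasProd_powerSeriesMk_card_countRestricted R (Nat.pos_of_ne_zero hm)
  simp only [card_eq] at regular
  have factor (i : ℕ) : (∑ j ∈ range m, (X : R⟦X⟧) ^ ((i + 1) * j)) * (1 - X ^ (i + 1)) =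
      1 - X ^ (m * (i + 1)) := by
    simp_rw [pow_mul X (i + 1)]
    rw [geom_sum_mul_neg, ← pow_mul, mul_comm (i + 1)]
  have product := regular.mul (hasProd_one_sub_X_pow R)
  simp only [factor] at product
  exact product.unique (hasProd_expand_one_sub_X_pow m hm)

theorem map_partitionSeries {S : Type*} [CommRing S] (φ : R →+* S) :
    map φ (partitionSeries R) = partitionSeries S := by
  ext n
  simp [partitionSeries]

theorem map_pentagonalSeries {S : Type*} [CommRing S] (φ : R →+* S) :
    map φ (pentagonalSeries R) = pentagonalSeries S := by
  have inverse := partitionSeries_mul_pentagonalSeries S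
  rw [mul_comm] at inverse
  refine (left_inv_eq_right_inv inverse ?_).symm
  rw [← map_partitionSeries φ, ← map_mul, partitionSeries_mul_pentagonalSeries, map_one]

theorem coeff_expand_pentagonalSeries_mul_expand_partitionSeries_eq_zero {p r m : ℕ} (hp : p ≠ 0)
    (hr : r ≠ 0) (h : ∀ x : ZMod p, 24 * (m : ZMod p) + r ≠ r * x ^ 2) :
    coeff m (expand r hr (pentagonalSeries R) * expand p hp (partitionSeries R)) = 0 := by
  rw [coeff_mul]
  refine sum_eq_zero fun ⟨i, j⟩ hij => of_not_not fun hne => ?_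
  rw [HasAntidiagonal.mem_antidiagonal] at hij
  obtain ⟨i, rfl⟩ : r ∣ i := of_not_not fun hi =>
    left_ne_zero_of_mul hne (coeff_expand_of_not_dvd _ _ _ hi)
  obtain ⟨j, rfl⟩ : p ∣ j := of_not_not fun hj =>
    right_ne_zero_of_mul hne (coeff_expand_of_not_dvd _ _ _ hj)
  obtain ⟨k, rfl⟩ : i ∈ Set.range pentagonal := of_not_not fun hi =>
    left_ne_zero_of_mul hne (by rw [coeff_expand_mul, coeff_pentagonalSeries_eq_zero R hi])
  have square : (24 * pentagonal k + 1 : ℤ) = (6 * k - 1) ^ 2 := by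
    linear_combination 12 * two_mul_natCast_pentagonal k
  have square_mod := congrArg (Int.cast : ℤ → ZMod p) square
  have sum_mod := congrArg (Nat.cast : ℕ → ZMod p) hij
  push_cast at square_mod sum_mod
  refine h (6 * k - 1) ?_
  rw [← sum_mod, ← square_mod, ZMod.natCast_self]
  ring

end EulerProduct

section BinaryForms

/-- The integral representations of `N` by the binary quadratic form `a x² + b y²`. The box of
side `2N + 1` makes the set finite; it loses nothing as long as `a` and `b` are positive. -/
noncomputable def representations (a b N : ℕ) : Finset (ℤ × ℤ) :=
  {z ∈ Icc (-N : ℤ) N ×ˢ Icc (-N : ℤ) N | a * z.1 ^ 2 + b * z.2 ^ 2 = N}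

variable {a b c d p N : ℕ}

theorem mem_representations (ha : 0 < a) (hb : 0 < b) {z : ℤ × ℤ} :
    z ∈ representations a b N ↔ a * z.1 ^ 2 + b * z.2 ^ 2 = N := by
  refine ⟨fun h => (mem_filter.1 h).2, fun h => mem_filter.2 ⟨?_, h⟩⟩
  have abs_le_mul_sq {k : ℕ} (hk : 0 < k) (x : ℤ) : |x| ≤ k * x ^ 2 := by
    have hk : (1 : ℤ) ≤ k := mod_cast hk
    have : |x| ≤ x ^ 2 := by simpa using Int.le_self_sq |x|
    nlinarith [mul_nonneg (sub_nonneg.2 hk) (sq_nonneg x)]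
  simp only [mem_product, mem_Icc, ← abs_le]
  have := abs_le_mul_sq ha z.1
  have := abs_le_mul_sq hb z.2
  constructor <;> linarith [abs_nonneg z.1, abs_nonneg z.2]

theorem card_eq_of_neg_mem {S : Finset (ℤ × ℤ)} (neg_left : ∀ x y, (x, y) ∈ S → (-x, y) ∈ S)
    (neg_right : ∀ x y, (x, y) ∈ S → (x, -y) ∈ S) (hS : ∀ y, (0, y) ∉ S) :
    #S = 4 * #{z ∈ S | 0 < z.1 ∧ 0 < z.2} + 2 * #{z ∈ S | 0 < z.1 ∧ z.2 = 0} := by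
  have left : #{z ∈ S | z.1 < 0} = #{z ∈ S | 0 < z.1} := by
    refine card_nbij' (fun z => (-z.1, z.2)) (fun z => (-z.1, z.2)) ?_ ?_ ?_ ?_ <;>
      rintro ⟨x, y⟩ <;> simp +contextual [neg_left]
  have right : #{z ∈ S | 0 < z.1 ∧ z.2 < 0} = #{z ∈ S | 0 < z.1 ∧ 0 < z.2} := by
    refine card_nbij' (fun z => (z.1, -z.2)) (fun z => (z.1, -z.2)) ?_ ?_ ?_ ?_ <;>
      rintro ⟨x, y⟩ <;> simp +contextual [neg_right]
  have split_left : #S = #{z ∈ S | 0 < z.1} + #{z ∈ S | z.1 < 0} := by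
    rw [← card_filter_add_card_filter_not (fun z : ℤ × ℤ => 0 < z.1)]
    congr 2
    refine filter_congr fun z hz => ?_
    have : z.1 ≠ 0 := fun h => hS z.2 (by rwa [← h])
    omega
  have split_right : #{z ∈ S | 0 < z.1} = #{z ∈ S | 0 < z.1 ∧ 0 < z.2} +
      (#{z ∈ S | 0 < z.1 ∧ z.2 < 0} + #{z ∈ S | 0 < z.1 ∧ z.2 = 0}) := by
    rw [← card_filter_add_card_filter_not (fun z : ℤ × ℤ => 0 < z.2), filter_filter, filter_filter,
      ← card_filter_add_card_filter_not (s := {z ∈ S | 0 < z.1 ∧ ¬0 < z.2})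
        (fun z : ℤ × ℤ => z.2 < 0), filter_filter, filter_filter]
    congr 3 <;> refine filter_congr fun z _ => ?_ <;> omega
  omega

theorem mem_representations_iff_natAbs (ha : 0 < a) (hb : 0 < b) {z : ℤ × ℤ} :
    z ∈ representations a b N ↔ a * z.1.natAbs ^ 2 + b * z.2.natAbs ^ 2 = N := by
  rw [mem_representations ha hb]
  zify
  simp only [sq_abs]

theorem card_representations_eq (ha : 0 < a) (hb : 0 < b) (h : ∀ y : ℕ, b * y ^ 2 ≠ N) :
    #(representations a b N) = 4 * #{z ∈ representations a b N | 0 < z.1 ∧ 0 < z.2} +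
      2 * #{z ∈ representations a b N | 0 < z.1 ∧ z.2 = 0} := by
  refine card_eq_of_neg_mem ?_ ?_ fun y hy => h y.natAbs ?_
  · simp [mem_representations ha hb]
  · simp [mem_representations ha hb]
  · simpa using (mem_representations_iff_natAbs ha hb).1 hy

-- The bijection is multiplication by `c + √(-ab)`, an element of norm `d`.
theorem card_filter_dvd_representations (ha : 0 < a) (hb : 0 < b) (hd : d = c ^ 2 + a * b) :
    #{z ∈ representations a b (d * N) |
      (d : ℤ) ∣ c * z.1 + b * z.2 ∧ (d : ℤ) ∣ c * z.2 - a * z.1} = #(representations a b N) := by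
  have hd' : (d : ℤ) = c ^ 2 + a * b := mod_cast hd
  have hd0 : (d : ℤ) ≠ 0 := by rw [hd']; positivity
  symm
  refine card_bij (fun z _ => (c * z.1 - b * z.2, c * z.2 + a * z.1)) ?_ ?_ ?_
  · rintro ⟨u, v⟩ huv
    simp only [mem_filter, mem_representations ha hb] at huv ⊢
    refine ⟨?_, ⟨u, ?_⟩, ⟨v, ?_⟩⟩
    · push_cast
      rw [← huv, hd']
      ring
    · rw [hd']; ring
    · rw [hd']; ring
  · rintro ⟨u, v⟩ - ⟨u', v'⟩ - h
    obtain ⟨h1, h2⟩ := Prod.mk.inj h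
    refine Prod.ext (mul_left_cancel₀ hd0 ?_) (mul_left_cancel₀ hd0 ?_)
    · linear_combination c * h1 + b * h2 + (u - u') * hd'
    · linear_combination c * h2 - a * h1 + (v - v') * hd'
  · rintro ⟨x, y⟩ hxy
    simp only [mem_filter, mem_representations ha hb] at hxy
    obtain ⟨hxy, ⟨u, hu⟩, ⟨v, hv⟩⟩ := hxy
    have hx : x = c * u - b * v := mul_left_cancel₀ hd0 <| by
      linear_combination c * hu - b * hv + x * hd'
    have hy : y = c * v + a * u := mul_left_cancel₀ hd0 <| by
      linear_combination c * hv + a * hu + y * hd'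
    refine ⟨(u, v), ?_, by rw [hx, hy]⟩
    rw [mem_representations ha hb]
    refine mul_left_cancel₀ hd0 ?_
    push_cast at hxy
    rw [← hxy, hx, hy, hd']
    ring

theorem card_filter_neg_snd_representations (ha : 0 < a) (hb : 0 < b) (P : ℤ × ℤ → Prop)
    [DecidablePred P] :
    #{z ∈ representations a b N | P (z.1, -z.2)} = #{z ∈ representations a b N | P z} := by
  refine card_nbij' (fun z => (z.1, -z.2)) (fun z => (z.1, -z.2)) ?_ ?_ ?_ ?_ <;>
    rintro ⟨x, y⟩ <;> simp +contextual [mem_representations ha hb]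

theorem card_filter_dvd_and_dvd_representations (ha : 0 < a) (hb : 0 < b) (hp : 0 < p) :
    #{z ∈ representations a b (p * N) | (p : ℤ) ∣ z.1 ∧ (p : ℤ) ∣ z.2} =
      #(representations (p * a) (p * b) N) := by
  have hp0 : (p : ℤ) ≠ 0 := mod_cast hp.ne'
  have form_mul (u v : ℤ) : a * (p * u) ^ 2 + b * (p * v) ^ 2 = ((p * N : ℕ) : ℤ) ↔
      ((p * a : ℕ) : ℤ) * u ^ 2 + ((p * b : ℕ) : ℤ) * v ^ 2 = N := by
    push_cast
    exact ⟨fun h => mul_left_cancel₀ hp0 (by linear_combination h),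
      fun h => by linear_combination p * h⟩
  symm
  refine card_bij (fun z _ => (p * z.1, p * z.2)) ?_ ?_ ?_
  · rintro ⟨u, v⟩ huv
    rw [mem_representations (Nat.mul_pos hp ha) (Nat.mul_pos hp hb), ← form_mul] at huv
    simpa [mem_representations ha hb] using huv
  · rintro ⟨u, v⟩ - ⟨u', v'⟩ - h
    simpa [hp.ne'] using h
  · rintro ⟨x, y⟩ hxy
    rw [mem_filter, mem_representations ha hb] at hxy
    obtain ⟨hxy, ⟨u, rfl⟩, ⟨v, rfl⟩⟩ := hxy
    rw [form_mul] at hxy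
    exact ⟨(u, v), (mem_representations (Nat.mul_pos hp ha) (Nat.mul_pos hp hb)).2 hxy, rfl⟩

theorem dvd_add_and_dvd_add_neg_iff {p b c x y : ℤ} (hp : Prime p) (hp2 : ¬p ∣ 2) (hpb : ¬p ∣ b)
    (hpc : ¬p ∣ c) : p ∣ c * x + b * y ∧ p ∣ c * x + b * -y ↔ p ∣ x ∧ p ∣ y := by
  refine ⟨fun ⟨h, h'⟩ => ?_, fun ⟨hx, hy⟩ => ⟨?_, ?_⟩⟩
  · have two_mul_dvd : p ∣ 2 * (c * x) := by
      rw [show 2 * (c * x) = (c * x + b * y) + (c * x + b * -y) by ring]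
      exact dvd_add h h'
    have hx := (hp.dvd_or_dvd ((hp.dvd_or_dvd two_mul_dvd).resolve_left hp2)).resolve_left hpc
    exact ⟨hx, (hp.dvd_or_dvd ((dvd_add_right (hx.mul_left _)).1 h)).resolve_left hpb⟩
  · exact dvd_add (hx.mul_left _) (hy.mul_left _)
  · exact dvd_add (hx.mul_left _) ((dvd_neg.2 hy).mul_left _)

theorem card_representations_prime_mul (ha : 0 < a) (hb : 0 < b) (hc : 0 < c) (hp : p.Prime)
    (hp2 : p ≠ 2) (hd : p = c ^ 2 + a * b) :
    #(representations a b (p * N)) + #(representations (p * a) (p * b) N) =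
      2 * #(representations a b N) := by
  have hd' : (p : ℤ) = c ^ 2 + a * b := mod_cast hd
  have hpZ : Prime (p : ℤ) := Nat.prime_iff_prime_int.1 hp
  have not_dvd {k : ℕ} (hk : 0 < k) (hkp : k < p) : ¬(p : ℤ) ∣ k := fun h =>
    Nat.not_dvd_of_pos_of_lt hk hkp (Int.natCast_dvd_natCast.1 h)
  have hpb : ¬(p : ℤ) ∣ b := not_dvd hb (by nlinarith)
  have hpc : ¬(p : ℤ) ∣ c := not_dvd hc (by nlinarith [Nat.mul_pos ha hb])
  have hp2 : ¬(p : ℤ) ∣ 2 := by exact_mod_cast not_dvd two_pos (lt_of_le_of_ne hp.two_le hp2.symm)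
  let P (z : ℤ × ℤ) : Prop := (p : ℤ) ∣ c * z.1 + b * z.2
  have dvd_iff (z : ℤ × ℤ) :
      (p : ℤ) ∣ c * z.1 + b * z.2 ∧ (p : ℤ) ∣ c * z.2 - a * z.1 ↔ P z := by
    refine ⟨And.left, fun h => ⟨h, (hpZ.dvd_or_dvd ?_).resolve_left hpb⟩⟩
    rw [show b * (c * z.2 - a * z.1) = c * (c * z.1 + b * z.2) - p * z.1 by rw [hd']; ring]
    exact dvd_sub (h.mul_left _) (dvd_mul_right _ _)
  have card_P : #{z ∈ representations a b (p * N) | P z} = #(representations a b N) := by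
    rw [← card_filter_dvd_representations ha hb hd]
    simp only [dvd_iff]
  have union : {z ∈ representations a b (p * N) | P z ∨ P (z.1, -z.2)} =
      representations a b (p * N) := by
    refine filter_true_of_mem fun z hz => hpZ.dvd_or_dvd ⟨z.1 ^ 2 - b * N, ?_⟩
    rw [mem_representations ha hb] at hz
    push_cast at hz
    linear_combination -b * hz - z.1 ^ 2 * hd'
  have inter : #{z ∈ representations a b (p * N) | P z ∧ P (z.1, -z.2)} =
      #(representations (p * a) (p * b) N) := by
    rw [← card_filter_dvd_and_dvd_representations ha hb hp.pos]
    congr 1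
    exact filter_congr fun z _ => dvd_add_and_dvd_add_neg_iff hpZ hp2 hpb hpc
  rw [← union, ← inter, filter_or, filter_and, card_union_add_card_inter, card_P,
    card_filter_neg_snd_representations ha hb P, card_P, two_mul]

theorem odd_of_four_dvd_add_three_mul {x y : ℤ} (hN : Odd N) (h : x ^ 2 + 3 * y ^ 2 = 4 * N)
    (hdvd : 4 ∣ x + 3 * y) : Odd x := by
  obtain ⟨k, hk⟩ := hdvd
  rw [eq_sub_of_add_eq hk] at h
  by_contra hx
  obtain ⟨t, rfl⟩ : Even y := by
    rw [Int.not_odd_iff] at hx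
    rw [Int.even_iff]
    omega
  refine Int.not_even_iff_odd.2 ((Int.odd_coe_nat N).2 hN) ⟨2 * k ^ 2 - 6 * (k * t) + 6 * t ^ 2, ?_⟩
  linarith

theorem odd_iff_four_dvd_add_three_mul {x y : ℤ} (hN : Odd N) (h : x ^ 2 + 3 * y ^ 2 = 4 * N) :
    Odd x ↔ 4 ∣ x + 3 * y ∨ 4 ∣ x + 3 * -y := by
  refine ⟨fun hx => ?_, Or.rec (odd_of_four_dvd_add_three_mul hN h)
    (odd_of_four_dvd_add_three_mul hN (by rwa [neg_sq]))⟩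
  have hy : Odd y := by
    by_contra hy
    obtain ⟨u, rfl⟩ := hx
    obtain ⟨v, rfl⟩ := Int.not_odd_iff_even.1 hy
    ring_nf at h
    omega
  rw [Int.odd_iff] at hx hy
  omega

theorem card_filter_odd_representations (hN : Odd N) :
    #{z ∈ representations 1 3 (4 * N) | Odd z.1} = 2 * #(representations 1 3 N) := by
  let P (z : ℤ × ℤ) : Prop := (4 : ℤ) ∣ z.1 + 3 * z.2
  have form_eq {z : ℤ × ℤ} (hz : z ∈ representations 1 3 (4 * N)) :
      z.1 ^ 2 + 3 * z.2 ^ 2 = 4 * N := by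
    simpa using (mem_representations one_pos three_pos).1 hz
  have card_P : #{z ∈ representations 1 3 (4 * N) | P z} = #(representations 1 3 N) := by
    rw [← card_filter_dvd_representations (c := 1) (d := 4) one_pos three_pos rfl]
    congr 1
    refine filter_congr fun z _ => ?_
    push_cast
    omega
  have odd_iff : {z ∈ representations 1 3 (4 * N) | Odd z.1} =
      {z ∈ representations 1 3 (4 * N) | P z ∨ P (z.1, -z.2)} :=
    filter_congr fun z hz => odd_iff_four_dvd_add_three_mul hN (form_eq hz)
  have disjoint : Disjoint {z ∈ representations 1 3 (4 * N) | P z}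
      {z ∈ representations 1 3 (4 * N) | P (z.1, -z.2)} := by
    refine disjoint_filter.2 fun z hz h h' => ?_
    have := odd_of_four_dvd_add_three_mul hN (form_eq hz) h
    rw [Int.odd_iff] at this
    simp only [P] at h h'
    omega
  rw [odd_iff, filter_or, card_union_of_disjoint disjoint, card_P,
    card_filter_neg_snd_representations one_pos three_pos P, card_P, two_mul]

end BinaryForms

section Theta

/-- The mod 2 theta series `∑ X^(a x²)` over the positive integers `x` coprime to `m`. Its
coefficients are given by membership, which is the right count for `0 < a` and `m ≠ 1`. -/
noncomputable def thetaSeries (m a : ℕ) : (ZMod 2)⟦X⟧ :=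
  open Classical in mk fun N => if ∃ x : ℕ, x.Coprime m ∧ N = a * x ^ 2 then 1 else 0

/-- The representations `a x² + b y² = N` with `x` coprime to `m` and `y` coprime to `m'`. -/
noncomputable def coprimeRepresentations (m m' a b N : ℕ) : Finset (ℤ × ℤ) :=
  {z ∈ representations a b N | z.1.natAbs.Coprime m ∧ z.2.natAbs.Coprime m'}

variable {m m' a b c p N : ℕ}

theorem exists_of_coeff_thetaSeries_ne_zero (h : coeff N (thetaSeries m a) ≠ 0) :
    ∃ x : ℕ, x.Coprime m ∧ N = a * x ^ 2 := by
  rw [thetaSeries, coeff_mk] at h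
  exact of_not_not fun hx => h (if_neg hx)

theorem expand_thetaSeries (hc : c ≠ 0) :
    expand c hc (thetaSeries m a) = thetaSeries m (c * a) := by
  ext N
  have dvd_and_iff : (∃ x : ℕ, x.Coprime m ∧ N = c * a * x ^ 2) ↔
      c ∣ N ∧ ∃ x : ℕ, x.Coprime m ∧ N / c = a * x ^ 2 := by
    refine ⟨?_, fun ⟨hN, x, hxm, hx⟩ => ⟨x, hxm, by
      rw [mul_assoc, ← hx, Nat.mul_div_cancel' hN]⟩⟩
    rintro ⟨x, hxm, rfl⟩
    rw [mul_assoc, Nat.mul_div_cancel_left _ (Nat.pos_of_ne_zero hc)]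
    exact ⟨dvd_mul_right _ _, x, hxm, rfl⟩
  simp only [coeff_expand, thetaSeries, coeff_mk]
  by_cases hN : c ∣ N
  · rw [if_pos hN]
    congr 1
    exact propext (dvd_and_iff.trans (and_iff_right hN)).symm
  · rw [if_neg hN, if_neg fun h => hN (dvd_and_iff.1 h).1]

theorem coeff_thetaSeries_mul (ha : 0 < a) (hb : 0 < b) (hm : m ≠ 1) (hm' : m' ≠ 1) :
    coeff N (thetaSeries m a * thetaSeries m' b) =
      #{z ∈ coprimeRepresentations m m' a b N | 0 < z.1 ∧ 0 < z.2} := by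
  classical
  simp only [coeff_mul, thetaSeries, coeff_mk, mul_ite, mul_one, mul_zero, ← ite_and, sum_boole]
  congr 1
  symm
  refine card_bij (fun z _ => (a * z.1.natAbs ^ 2, b * z.2.natAbs ^ 2)) ?_ ?_ ?_
  · intro z hz
    simp only [coprimeRepresentations, mem_filter, mem_representations ha hb] at hz
    obtain ⟨⟨h, hzm, hzm'⟩, -⟩ := hz
    refine mem_filter.2 ⟨HasAntidiagonal.mem_antidiagonal.2 ?_, ⟨_, hzm', rfl⟩, ⟨_, hzm, rfl⟩⟩
    zify
    simpa using h
  · rintro z hz z' hz' h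
    obtain ⟨h1, h2⟩ := Prod.mk.inj h
    have h1 := (Nat.pow_left_injective two_ne_zero (Nat.eq_of_mul_eq_mul_left ha h1))
    have h2 := (Nat.pow_left_injective two_ne_zero (Nat.eq_of_mul_eq_mul_left hb h2))
    have := (mem_filter.1 hz).2
    have := (mem_filter.1 hz').2
    ext <;> omega
  · rintro ⟨_, _⟩ hij
    simp only [mem_filter, HasAntidiagonal.mem_antidiagonal] at hij
    obtain ⟨h, ⟨y, hym, rfl⟩, ⟨x, hxm, rfl⟩⟩ := hij
    have pos {k t : ℕ} (ht : t ≠ 1) (hk : k.Coprime t) : 0 < k :=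
      Nat.pos_of_ne_zero fun h => ht (by simpa [h] using hk)
    refine ⟨(x, y), ?_, by simp⟩
    simp only [coprimeRepresentations, mem_filter, mem_representations ha hb]
    exact ⟨⟨mod_cast h, by simpa, by simpa⟩, mod_cast pos hm hxm, mod_cast pos hm' hym⟩

theorem card_coprimeRepresentations (ha : 0 < a) (hb : 0 < b) (hm : m ≠ 1) (hm' : m' ≠ 1) :
    #(coprimeRepresentations m m' a b N) =
      4 * #{z ∈ coprimeRepresentations m m' a b N | 0 < z.1 ∧ 0 < z.2} := by
  have axis : {z ∈ coprimeRepresentations m m' a b N | 0 < z.1 ∧ z.2 = 0} = ∅ := by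
    refine filter_eq_empty_iff.2 ?_
    rintro ⟨x, y⟩ hz ⟨-, rfl⟩
    simp [coprimeRepresentations, hm'] at hz
  rw [card_eq_of_neg_mem, axis, card_empty, mul_zero, add_zero] <;>
    simp [coprimeRepresentations, mem_representations ha hb, hm]

theorem coeff_thetaSeries_eq_card (ha : 0 < a) (hb : 0 < b) (hm : m ≠ 1)
    (h : ∀ x : ℕ, a * x ^ 2 = N → x.Coprime m) :
    coeff N (thetaSeries m a) = #{z ∈ representations a b N | 0 < z.1 ∧ z.2 = 0} := by
  classical
  rw [thetaSeries, coeff_mk]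
  split_ifs with hx
  · obtain ⟨x, hxm, rfl⟩ := hx
    rw [card_eq_one.2 ⟨((x : ℤ), 0), ?_⟩, Nat.cast_one]
    have hx0 : 0 < x := Nat.pos_of_ne_zero fun h => hm (by simpa [h] using hxm)
    ext ⟨u, v⟩
    simp only [mem_filter, mem_representations ha hb, mem_singleton, Prod.mk.injEq]
    constructor
    · rintro ⟨huv, hu, rfl⟩
      refine ⟨?_, rfl⟩
      push_cast at huv
      have huv : u ^ 2 = (x : ℤ) ^ 2 :=
        mul_left_cancel₀ (Nat.cast_ne_zero.2 ha.ne') (by linear_combination huv)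
      exact (sq_eq_sq₀ hu.le (by positivity)).1 huv
    · rintro ⟨rfl, rfl⟩
      exact ⟨by push_cast; ring, mod_cast hx0, rfl⟩
  · rw [card_eq_zero.2 (filter_eq_empty_iff.2 ?_), Nat.cast_zero]
    rintro ⟨u, v⟩ huv ⟨-, rfl⟩
    rw [mem_representations ha hb] at huv
    have huv : a * u.natAbs ^ 2 = N := by
      zify
      simpa using huv
    exact hx ⟨_, h _ huv, huv.symm⟩

theorem coprimeRepresentations_eq_representations (ha : 0 < a) (hb : 0 < b)
    (h : ∀ x y : ℕ, a * x ^ 2 + b * y ^ 2 = N → x.Coprime m ∧ y.Coprime m') :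
    coprimeRepresentations m m' a b N = representations a b N :=
  filter_true_of_mem fun _ hz => h _ _ ((mem_representations_iff_natAbs ha hb).1 hz)

-- Sign changes make the open quadrants equinumerous, so that relations between representation
-- numbers, divided by 4, become congruences modulo 2; the half-axis `y = 0` gives the last term.
theorem coeff_prime_mul_thetaSeries_mul (ha : 0 < a) (hb : 0 < b) (hc : 0 < c) (hm : m ≠ 1)
    (hm' : m' ≠ 1) (hp : p.Prime) (hp2 : p ≠ 2) (hd : p = c ^ 2 + a * b)
    (coprime : ∀ x y : ℕ, a * x ^ 2 + b * y ^ 2 = p * N → x.Coprime m ∧ y.Coprime m')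
    (left : ∀ x : ℕ, a * x ^ 2 = N → x.Coprime m) (right : ∀ y : ℕ, b * y ^ 2 ≠ N) :
    coeff (p * N) (thetaSeries m a * thetaSeries m' b) =
      coeff (p * N) (expand (p ^ 2) (pow_ne_zero 2 hp.ne_zero)
        (thetaSeries m a * thetaSeries m' b)) + coeff N (thetaSeries m a) := by
  have hpa := Nat.mul_pos hp.pos ha
  have hpb := Nat.mul_pos hp.pos hb
  have coprime' (x y : ℕ) (h : p * a * x ^ 2 + p * b * y ^ 2 = N) :
      x.Coprime m ∧ y.Coprime m' :=
    (coprime (p * x) (p * y) (by rw [← h]; ring)).imp Nat.Coprime.coprime_mul_left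
      Nat.Coprime.coprime_mul_left
  have expand_eq : coeff (p * N) (expand (p ^ 2) (pow_ne_zero 2 hp.ne_zero)
      (thetaSeries m a * thetaSeries m' b)) =
      coeff N (thetaSeries m (p * a) * thetaSeries m' (p * b)) := by
    simp only [pow_two]
    rw [expand_mul p hp.ne_zero p hp.ne_zero, coeff_expand_mul, map_mul,
      expand_thetaSeries, expand_thetaSeries]
  have count := card_representations_prime_mul ha hb hc hp hp2 hd (N := N)
  rw [← coprimeRepresentations_eq_representations ha hb coprime,
    ← coprimeRepresentations_eq_representations hpa hpb coprime',
    card_coprimeRepresentations ha hb hm hm', card_coprimeRepresentations hpa hpb hm hm',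
    card_representations_eq ha hb right] at count
  rw [expand_eq, coeff_thetaSeries_mul ha hb hm hm', coeff_thetaSeries_mul hpa hpb hm hm',
    coeff_thetaSeries_eq_card ha hb hm left, CharTwo.eq_add_iff_add_eq]
  norm_cast
  rw [ZMod.natCast_eq_natCast_iff, Nat.ModEq]
  omega

theorem coeff_expand_sq_thetaSeries (hp : p ≠ 0) (hpm : p.Coprime m)
    (h : ∀ x : ℕ, N = a * x ^ 2 → p ∣ x) :
    coeff N (expand (p ^ 2) (pow_ne_zero 2 hp) (thetaSeries m a)) =
      coeff N (thetaSeries m a) := by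
  rw [expand_thetaSeries, thetaSeries, thetaSeries, coeff_mk, coeff_mk]
  congr 1
  refine propext ⟨fun ⟨x, hxm, hx⟩ => ⟨p * x, hpm.mul_left hxm, by rw [hx]; ring⟩, ?_⟩
  rintro ⟨x, hxm, rfl⟩
  obtain ⟨y, rfl⟩ := h x rfl
  exact ⟨y, hxm.coprime_mul_left, by ring⟩

theorem coeff_expand_sq_thetaSeries_mul (hp : p ≠ 0) (hpm : p.Coprime m) (hpm' : p.Coprime m')
    (anisotropic : ∀ u v : ZMod p, a * u ^ 2 + b * v ^ 2 = 0 → u = 0 ∧ v = 0) (hN : p ∣ N) :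
    coeff N (expand (p ^ 2) (pow_ne_zero 2 hp) (thetaSeries m a * thetaSeries m' b)) =
      coeff N (thetaSeries m a * thetaSeries m' b) := by
  have dvd_and_dvd (x y : ℕ) (h : p ∣ a * x ^ 2 + b * y ^ 2) : p ∣ x ∧ p ∣ y := by
    simp only [← ZMod.natCast_eq_zero_iff] at h ⊢
    exact anisotropic x y (mod_cast h)
  have coeff_eq_zero {m a i : ℕ} (hi : ¬∃ x : ℕ, i = a * x ^ 2) :
      coeff i (thetaSeries m a) = 0 ∧
        coeff i (expand (p ^ 2) (pow_ne_zero 2 hp) (thetaSeries m a)) = 0 := by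
    rw [expand_thetaSeries]
    refine ⟨of_not_not fun h0 => hi ?_, of_not_not fun h0 => hi ?_⟩ <;>
      obtain ⟨x, -, hx⟩ := exists_of_coeff_thetaSeries_ne_zero h0
    exacts [⟨x, hx⟩, ⟨p * x, by rw [hx]; ring⟩]
  rw [map_mul, coeff_mul, coeff_mul]
  refine sum_congr rfl fun ⟨i, j⟩ hij => ?_
  rw [← HasAntidiagonal.mem_antidiagonal.1 hij] at hN
  by_cases hi : ∃ x : ℕ, i = a * x ^ 2
  · by_cases hj : ∃ y : ℕ, j = b * y ^ 2
    · obtain ⟨x, hx⟩ := hi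
      obtain ⟨y, hy⟩ := hj
      rw [coeff_expand_sq_thetaSeries hp hpm fun x hx => (dvd_and_dvd x y (hx ▸ hy ▸ hN)).1,
        coeff_expand_sq_thetaSeries hp hpm' fun y hy => (dvd_and_dvd x y (hx ▸ hy ▸ hN)).2]
    · simp only [coeff_eq_zero hj, mul_zero]
  · simp only [coeff_eq_zero hi, zero_mul]

theorem pow_prime_pow_eq_expand [Fact p.Prime] (i : ℕ) (φ : (ZMod p)⟦X⟧) :
    φ ^ p ^ i = expand (p ^ i) (pow_ne_zero i (Fact.out : p.Prime).ne_zero) φ := by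
  have frobenius := MvPowerSeries.map_iterateFrobenius_expand (σ := Unit) (R := ZMod p) p
    (Fact.out : p.Prime).ne_zero φ i
  have iterate_id : iterateFrobenius (ZMod p) p i = RingHom.id (ZMod p) := by
    ext x
    rw [iterateFrobenius_def, ZMod.pow_card_pow, RingHom.id_apply]
  rw [← frobenius, iterate_id]
  rfl

theorem thetaSeries_pow_two_pow (i m a : ℕ) :
    thetaSeries m a ^ 2 ^ i = thetaSeries m (2 ^ i * a) := by
  rw [pow_prime_pow_eq_expand, expand_thetaSeries]

theorem sq_mod_twentyFour (x : ℕ) : x ^ 2 % 24 ∈ ({0, 1, 4, 9, 12, 16} : Finset ℕ) := by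
  rw [Nat.pow_mod]
  have := Nat.mod_lt x (show 0 < 24 by norm_num)
  generalize x % 24 = r at *
  revert r
  decide

theorem coprime_six_iff (x : ℕ) : x.Coprime 6 ↔ x ^ 2 % 24 = 1 := by
  rw [Nat.Coprime, ← ((Nat.mod_modEq x 24).of_dvd (by decide : 6 ∣ 24)).gcd_eq, Nat.pow_mod]
  have := Nat.mod_lt x (show 0 < 24 by norm_num)
  generalize x % 24 = r at *
  revert r
  decide

theorem coprime_two_iff (x : ℕ) : x.Coprime 2 ↔ x ^ 2 % 8 = 1 := by
  rw [Nat.Coprime, ← ((Nat.mod_modEq x 8).of_dvd (by decide : 2 ∣ 8)).gcd_eq, Nat.pow_mod]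
  have := Nat.mod_lt x (show 0 < 8 by norm_num)
  generalize x % 8 = r at *
  revert r
  decide

theorem exists_coprime_six_sq_eq_iff :
    (∃ x : ℕ, x.Coprime 6 ∧ N = 1 * x ^ 2) ↔ ∃ k : ℤ, N = 24 * pentagonal k + 1 := by
  have eq_iff (k : ℤ) (x : ℕ) :
      1 * x ^ 2 = 24 * pentagonal k + 1 ↔ (x : ℤ) ^ 2 = (6 * k - 1) ^ 2 := by
    have := two_mul_natCast_pentagonal k
    zify
    constructor <;> intro <;> linarith
  constructor
  · rintro ⟨x, hx, rfl⟩
    have hx6 : x % 6 = 1 ∨ x % 6 = 5 := by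
      rw [Nat.Coprime, ← (Nat.mod_modEq x 6).gcd_eq] at hx
      have := Nat.mod_lt x (show 0 < 6 by norm_num)
      interval_cases x % 6 <;> simp_all
    rcases hx6 with hx6 | hx6
    · exact ⟨-(x / 6 : ℕ), (eq_iff _ _).2 (sq_eq_sq_iff_eq_or_eq_neg.2 (by omega))⟩
    · exact ⟨(x / 6 : ℕ) + 1, (eq_iff _ _).2 (sq_eq_sq_iff_eq_or_eq_neg.2 (by omega))⟩
  · rintro ⟨k, rfl⟩
    have hx := (eq_iff k (6 * k - 1).natAbs).2 (by rw [Int.natCast_natAbs, sq_abs])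
    exact ⟨_, (coprime_six_iff _).2 (by omega), hx.symm⟩

theorem X_mul_expand_pentagonalSeries_eq_thetaSeries :
    X * expand 24 (by decide) (pentagonalSeries (ZMod 2)) = thetaSeries 6 1 := by
  have eq_of_ne_zero_iff : ∀ u v : ZMod 2, (u ≠ 0 ↔ v ≠ 0) → u = v := by decide
  ext N
  refine eq_of_ne_zero_iff _ _ ?_
  have right : coeff N (thetaSeries 6 1) ≠ 0 ↔ ∃ k : ℤ, N = 24 * pentagonal k + 1 := by
    simp [thetaSeries, ← exists_coprime_six_sq_eq_iff]
  rw [right]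
  rcases N with _ | N
  · simp
  · simp only [coeff_succ_X_mul, coeff_expand, Nat.add_right_cancel_iff, ne_eq, ite_eq_right_iff,
      coeff_pentagonalSeries_eq_zero_iff, Classical.not_imp, not_not]
    constructor
    · rintro ⟨hN, k, hk⟩
      exact ⟨k, by omega⟩
    · rintro ⟨k, rfl⟩
      exact ⟨dvd_mul_right _ _, k, by omega⟩

theorem coprimeRepresentations_six_two (hN : N % 6 = 1) :
    coprimeRepresentations 6 2 1 3 (4 * N) = {z ∈ representations 1 3 (4 * N) | Odd z.1} := by
  refine filter_congr fun z hz => ?_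
  rw [mem_representations_iff_natAbs one_pos three_pos] at hz
  rw [← Int.natAbs_odd, ← Nat.coprime_two_right, coprime_six_iff, coprime_two_iff, coprime_two_iff]
  have := sq_mod_twentyFour z.1.natAbs
  have := sq_mod_twentyFour z.2.natAbs
  simp only [mem_insert, mem_singleton] at *
  omega

-- The Jacobi identity for the cube of the Euler product modulo 2, multiplied by `thetaSeries 6 1`
-- so that it becomes a statement about representations by `x² + 3y²`.
theorem thetaSeries_six_mul_thetaSeries_two :
    thetaSeries 6 1 * thetaSeries 2 3 = thetaSeries 6 4 := by
  ext N
  by_cases hN : N % 24 = 4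
  · obtain ⟨M, rfl⟩ : 4 ∣ N := by omega
    have left (x : ℕ) (hx : 1 * x ^ 2 = M) : x.Coprime 6 := by
      have := sq_mod_twentyFour x
      simp only [mem_insert, mem_singleton] at this
      rw [coprime_six_iff]
      omega
    have right (y : ℕ) : 3 * y ^ 2 ≠ M := by omega
    have count := card_filter_odd_representations (show Odd M by rw [Nat.odd_iff]; omega)
    rw [← coprimeRepresentations_six_two (by omega),
      card_coprimeRepresentations one_pos three_pos (by decide) (by decide),
      card_representations_eq one_pos three_pos right] at count
    rw [coeff_thetaSeries_mul one_pos three_pos (by decide) (by decide),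
      show thetaSeries 6 4 = expand 4 four_ne_zero (thetaSeries 6 1) by
        rw [expand_thetaSeries], coeff_expand_mul,
      coeff_thetaSeries_eq_card one_pos three_pos (by decide) left, ZMod.natCast_eq_natCast_iff,
      Nat.ModEq]
    omega
  · trans 0
    · rw [coeff_mul]
      refine sum_eq_zero fun ⟨i, j⟩ hij => of_not_not fun h => hN ?_
      obtain ⟨x, hx, hi⟩ := exists_of_coeff_thetaSeries_ne_zero (left_ne_zero_of_mul h)
      obtain ⟨y, hy, hj⟩ := exists_of_coeff_thetaSeries_ne_zero (right_ne_zero_of_mul h)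
      rw [coprime_six_iff] at hx
      rw [coprime_two_iff] at hy
      rw [← HasAntidiagonal.mem_antidiagonal.1 hij]
      omega
    · symm
      refine of_not_not fun h => hN ?_
      obtain ⟨x, hx, rfl⟩ := exists_of_coeff_thetaSeries_ne_zero h
      rw [coprime_six_iff] at hx
      omega

theorem thetaSeries_six_cube : thetaSeries 6 1 ^ 3 = thetaSeries 2 3 := by
  have ne_zero : thetaSeries 6 1 ≠ 0 := by
    intro h
    simpa [thetaSeries, show ∃ x : ℕ, x.Coprime 6 ∧ 1 = x ^ 2 from ⟨1, by decide⟩] using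
      congrArg (coeff 1) h
  refine mul_left_cancel₀ ne_zero ?_
  rw [thetaSeries_six_mul_thetaSeries_two, ← pow_succ', show 3 + 1 = 2 ^ 2 from rfl,
    thetaSeries_pow_two_pow]
  norm_num

theorem coeff_thetaSeries_six_eq_zero (hN : N % 24 ≠ a % 24) :
    coeff N (thetaSeries 6 a) = 0 := by
  refine of_not_not fun h => hN ?_
  obtain ⟨x, hx, rfl⟩ := exists_of_coeff_thetaSeries_ne_zero h
  rw [Nat.mul_mod, (coprime_six_iff x).1 hx, mul_one, Nat.mod_mod]

theorem thetaSeries_six_pow_four : thetaSeries 6 1 ^ 4 = thetaSeries 6 4 :=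
  thetaSeries_pow_two_pow 2 6 1

theorem thetaSeries_six_pow_eight : thetaSeries 6 1 ^ 8 = thetaSeries 6 8 :=
  thetaSeries_pow_two_pow 3 6 1

theorem prime_thirteen : Nat.Prime 13 := by norm_num

theorem coeff_thirteen_mul_thetaSeries_pow_five (hN : 13 * N % 24 = 5) :
    coeff (13 * N) (thetaSeries 6 1 ^ 5) =
      coeff (13 * N) (expand (13 ^ 2) (by decide) (thetaSeries 6 1 ^ 5)) := by
  have hsq := sq_mod_twentyFour
  simp only [mem_insert, mem_singleton] at hsq
  rw [pow_succ' _ 4, thetaSeries_six_pow_four, coeff_prime_mul_thetaSeries_mul (c := 3) one_pos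
    four_pos three_pos (by decide) (by decide) prime_thirteen (by decide) rfl,
    coeff_thetaSeries_six_eq_zero (by omega), add_zero]
  · intro x y h
    rw [coprime_six_iff, coprime_six_iff]
    have := hsq x
    have := hsq y
    omega
  · intro x hx
    have := hsq x
    omega
  · intro y
    omega

theorem coeff_thirteen_mul_thetaSeries_pow_seven (hN : 13 * N % 24 = 7) :
    coeff (13 * N) (thetaSeries 6 1 ^ 7) =
      coeff (13 * N) (expand (13 ^ 2) (by decide) (thetaSeries 6 1 ^ 7)) := by
  have hsq := sq_mod_twentyFour
  simp only [mem_insert, mem_singleton] at hsq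
  rw [pow_add _ 4 3, thetaSeries_six_pow_four, thetaSeries_six_cube,
    coeff_prime_mul_thetaSeries_mul (c := 1) four_pos three_pos one_pos (by decide) (by decide)
      prime_thirteen (by decide) rfl, coeff_thetaSeries_six_eq_zero (by omega), add_zero]
  · intro x y h
    rw [coprime_six_iff, coprime_two_iff]
    have := hsq x
    have := hsq y
    omega
  · intro x hx
    omega
  · intro y
    have := hsq y
    omega

theorem coeff_thirteen_mul_thetaSeries_pow_thirteen (hN : 13 * N % 24 = 13) :
    coeff (13 * N) (thetaSeries 6 1 ^ 13) =
      coeff (13 * N) (expand (13 ^ 2) (by decide) (thetaSeries 6 1 ^ 13)) +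
        coeff N (thetaSeries 6 1) := by
  have hsq := sq_mod_twentyFour
  simp only [mem_insert, mem_singleton] at hsq
  have pow_twelve : thetaSeries 6 1 ^ 12 = thetaSeries 2 12 := by
    rw [pow_mul _ 3 4, thetaSeries_six_cube]
    exact thetaSeries_pow_two_pow 2 2 3
  rw [pow_succ' _ 12, pow_twelve, coeff_prime_mul_thetaSeries_mul (c := 1) one_pos (by norm_num)
    one_pos (by decide) (by decide) prime_thirteen (by decide) rfl]
  · intro x y h
    rw [coprime_six_iff, coprime_two_iff]
    have := hsq x
    have := hsq y
    omega
  · intro x hx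
    rw [coprime_six_iff]
    omega
  · intro y hy
    omega

theorem coeff_thirteen_mul_thetaSeries_pow {k : ℕ} (hk : k ∈ ({1, 3, 5, 7, 9, 11} : Finset ℕ))
    (hN : 13 * N % 24 = k) :
    coeff (13 * N) (thetaSeries 6 1 ^ k) =
      coeff (13 * N) (expand (13 ^ 2) (by decide) (thetaSeries 6 1 ^ k)) := by
  simp only [mem_insert, mem_singleton] at hk
  rcases hk with rfl | rfl | rfl | rfl | rfl | rfl
  · rw [pow_one, coeff_expand_sq_thetaSeries (by decide) (by decide)]
    exact fun x hx => prime_thirteen.dvd_of_dvd_pow (n := 2) (by omega)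
  · rw [thetaSeries_six_cube, coeff_expand_sq_thetaSeries (by decide) (by decide)]
    exact fun x hx => prime_thirteen.dvd_of_dvd_pow (n := 2) (by omega)
  · exact coeff_thirteen_mul_thetaSeries_pow_five hN
  · exact coeff_thirteen_mul_thetaSeries_pow_seven hN
  · rw [pow_succ' _ 8, thetaSeries_six_pow_eight,
      coeff_expand_sq_thetaSeries_mul (by decide) (by decide) (by decide) (by decide)
        (dvd_mul_right _ _)]
  · rw [pow_add _ 8 3, thetaSeries_six_pow_eight, thetaSeries_six_cube,
      coeff_expand_sq_thetaSeries_mul (by decide) (by decide) (by decide) (by decide)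
        (dvd_mul_right _ _)]

end Theta

theorem coeff_pentagonalSeries_pow (k n : ℕ) :
    coeff n (pentagonalSeries (ZMod 2) ^ k) = coeff (24 * n + k) (thetaSeries 6 1 ^ k) := by
  rw [← X_mul_expand_pentagonalSeries_eq_thetaSeries, mul_pow, ← map_pow, coeff_X_pow_mul,
    coeff_expand_mul]

theorem coeff_X_pow_seven_mul_expand_pentagonalSeries_pow (k n : ℕ) :
    coeff n ((X ^ 7 * expand (13 ^ 2) (by decide) (pentagonalSeries (ZMod 2))) ^ k) =
      coeff (24 * n + k) (expand (13 ^ 2) (by decide) (thetaSeries 6 1 ^ k)) := by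
  have expand_theta : expand (13 ^ 2) (by decide) (thetaSeries 6 1) =
      X * expand 24 (by decide)
        (X ^ 7 * expand (13 ^ 2) (by decide) (pentagonalSeries (ZMod 2))) := by
    rw [← X_mul_expand_pentagonalSeries_eq_thetaSeries, map_mul, expand_X, map_mul, map_pow,
      expand_X, expand_comm]
    ring
  rw [map_pow (expand _ _), expand_theta, mul_pow X, ← map_pow, coeff_X_pow_mul, coeff_expand_mul]

theorem coeff_pentagonalSeries_pow_eq_ite {k : ℕ} (hk : k ∈ ({1, 3, 5, 7, 9, 11} : Finset ℕ))
    (n : ℕ) :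
    (if 13 ∣ 6 * k + n then coeff n (pentagonalSeries (ZMod 2) ^ k) else 0) =
      coeff n ((X ^ 7 * expand (13 ^ 2) (by decide) (pentagonalSeries (ZMod 2))) ^ k) := by
  split_ifs with hn
  · obtain ⟨M, hM⟩ : 13 ∣ 24 * n + k := by omega
    rw [coeff_pentagonalSeries_pow, coeff_X_pow_seven_mul_expand_pentagonalSeries_pow, hM,
      coeff_thirteen_mul_thetaSeries_pow hk]
    simp only [mem_insert, mem_singleton] at hk
    omega
  · rw [mul_pow, ← pow_mul, ← map_pow, coeff_X_pow_mul']
    split_ifs with h7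
    · rw [coeff_expand_of_not_dvd]
      omega
    · rfl

theorem coeff_pentagonalSeries_pow_thirteen (n : ℕ) :
    (if 13 ∣ 6 * 13 + n then coeff n (pentagonalSeries (ZMod 2) ^ 13) else 0) =
      coeff n ((X ^ 7 * expand (13 ^ 2) (by decide) (pentagonalSeries (ZMod 2))) ^ 13 +
        expand 13 (by decide) (pentagonalSeries (ZMod 2))) := by
  rw [map_add]
  split_ifs with hn
  · obtain ⟨M, rfl⟩ : 13 ∣ n := by omega
    have theta := coeff_thirteen_mul_thetaSeries_pow_thirteen (N := 24 * M + 1) (by omega)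
    rw [coeff_expand_mul, coeff_pentagonalSeries_pow,
      coeff_X_pow_seven_mul_expand_pentagonalSeries_pow, ← pow_one (pentagonalSeries _),
      coeff_pentagonalSeries_pow 1 M, pow_one]
    convert theta using 2 <;> ring_nf
  · rw [mul_pow, ← pow_mul, ← map_pow, coeff_X_pow_mul',
      coeff_expand_of_not_dvd 13 _ _ (by omega), add_zero]
    split_ifs with h7
    · rw [coeff_expand_of_not_dvd]
      omega
    · rfl

section CharTwo

theorem charP_powerSeries (R : Type*) [CommRing R] (p : ℕ) [CharP R p] : CharP R⟦X⟧ p :=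
  charP_of_injective_ringHom C_injective p

theorem natCast_eq_one_of_odd {A : Type*} [AddCommGroupWithOne A] [CharP A 2] {n : ℕ} (hn : Odd n) :
    (n : A) = 1 := by
  rw [CharTwo.natCast_eq_ite, if_neg (Nat.not_even_iff_odd.2 hn)]

theorem sum_pow_add_pow_eq_zero_of_odd {A σ : Type*} [CommRing A] [CharP A 2] [Fintype σ]
    {r : σ → A} {w : A} {m : ℕ} (h : ∀ k < m, Odd k → ∑ i, r i ^ k + w ^ k = 0) {k : ℕ}
    (hk : 0 < k) (hkm : k < m) : ∑ i, r i ^ k + w ^ k = 0 := by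
  induction k using Nat.strong_induction_on with
  | _ k ih =>
    rcases k.even_or_odd' with ⟨l, rfl | rfl⟩
    · have half := ih l (by omega) (by omega) (by omega)
      simp_rw [mul_comm 2 l, pow_mul, ← sum_pow_char 2, ← add_pow_char, half]
      exact zero_pow two_ne_zero
    · exact h _ hkm (odd_two_mul_add_one l)

end CharTwo

section Dissection

variable {F : Type*} [CommRing F] {ζ : F}

theorem C_mul_rescale_pentagonalSeries_mul_partitionSeries (hζ : IsPrimitiveRoot ζ 13) (j : ℕ) :
    (C (ζ ^ (6 * j)) * rescale (ζ ^ j) (pentagonalSeries F)) *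
      (C (ζ ^ (7 * j)) * rescale (ζ ^ j) (partitionSeries F)) = 1 := by
  rw [mul_mul_mul_comm, ← map_mul, ← map_mul, ← pow_add, ← add_mul, pow_mul, hζ.pow_eq_one,
    one_pow, map_one, mul_comm (pentagonalSeries F), partitionSeries_mul_pentagonalSeries, map_one,
    one_mul]

theorem prod_C_mul_rescale_pentagonalSeries_mul_expand [IsDomain F]
    (hζ : IsPrimitiveRoot ζ 13) :
    (∏ j : Fin 13, C (ζ ^ (6 * (j : ℕ))) * rescale (ζ ^ (j : ℕ)) (pentagonalSeries F)) *
      expand (13 ^ 2) (by decide) (pentagonalSeries F) =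
        expand 13 (by decide) (pentagonalSeries F) ^ 14 := by
  have prod_root : ∏ j : Fin 13, C (ζ ^ (6 * (j : ℕ))) = (1 : F⟦X⟧) := by
    rw [← map_prod, prod_pow_eq_pow_sum, show ∑ j : Fin 13, 6 * (j : ℕ) = 13 * 36 from rfl,
      pow_mul, hζ.pow_eq_one, one_pow, map_one]
  rw [prod_mul_distrib, prod_root, one_mul,
    ← prod_rescale_pentagonalSeries_mul_expand prime_thirteen hζ, ← expand_mul]
  rfl

variable [CharP F 2] [IsDomain F]

theorem sum_pow_C_mul_rescale_pentagonalSeries (hζ : IsPrimitiveRoot ζ 13) (φ : ZMod 2 →+* F)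
    (k : ℕ) {ψ : (ZMod 2)⟦X⟧}
    (hψ : ∀ n, (if 13 ∣ 6 * k + n then coeff n (pentagonalSeries (ZMod 2) ^ k) else 0) =
      coeff n ψ) :
    ∑ j : Fin 13, (C (ζ ^ (6 * (j : ℕ))) * rescale (ζ ^ (j : ℕ)) (pentagonalSeries F)) ^ k =
      map φ ψ := by
  have pow_root (j : Fin 13) :
      (C (ζ ^ (6 * (j : ℕ))) * rescale (ζ ^ (j : ℕ)) (pentagonalSeries F)) ^ k =
        C (ζ ^ (6 * k * (j : ℕ))) *
          rescale (ζ ^ (j : ℕ)) (map φ (pentagonalSeries (ZMod 2) ^ k)) := by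
    rw [mul_pow, ← map_pow, ← map_pow, map_pow (map φ), map_pentagonalSeries]
    ring_nf
  simp_rw [pow_root]
  ext n
  rw [coeff_sum_C_mul_rescale hζ, coeff_map, coeff_map, ← hψ, natCast_eq_one_of_odd (by decide)]
  split_ifs <;> simp

theorem sum_pow_add_pow_eq_zero (hζ : IsPrimitiveRoot ζ 13) {k : ℕ} (hk : 0 < k) (hk13 : k < 13) :
    ∑ j : Fin 13, (C (ζ ^ (6 * (j : ℕ))) * rescale (ζ ^ (j : ℕ)) (pentagonalSeries F)) ^ k +
      (X ^ 7 * expand (13 ^ 2) (by decide) (pentagonalSeries F)) ^ k = 0 := by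
  have : CharP F⟦X⟧ 2 := charP_powerSeries F 2
  refine sum_pow_add_pow_eq_zero_of_odd (fun k hk hodd => ?_) hk hk13
  have hk : k ∈ ({1, 3, 5, 7, 9, 11} : Finset ℕ) := by
    revert hodd
    decide +revert
  rw [sum_pow_C_mul_rescale_pentagonalSeries hζ (ZMod.castHom dvd_rfl F) k
    (coeff_pentagonalSeries_pow_eq_ite hk)]
  simp [map_expand, map_pentagonalSeries, CharTwo.add_self_eq_zero]

theorem sum_pow_thirteen_add_pow_thirteen (hζ : IsPrimitiveRoot ζ 13) :
    ∑ j : Fin 13, (C (ζ ^ (6 * (j : ℕ))) * rescale (ζ ^ (j : ℕ)) (pentagonalSeries F)) ^ 13 +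
      (X ^ 7 * expand (13 ^ 2) (by decide) (pentagonalSeries F)) ^ 13 =
        expand 13 (by decide) (pentagonalSeries F) := by
  have : CharP F⟦X⟧ 2 := charP_powerSeries F 2
  rw [sum_pow_C_mul_rescale_pentagonalSeries hζ (ZMod.castHom dvd_rfl F) 13
    coeff_pentagonalSeries_pow_thirteen]
  simp only [map_add, map_mul, map_pow, map_X, map_expand, map_pentagonalSeries]
  rw [add_right_comm, CharTwo.add_self_eq_zero, zero_add]

theorem X_pow_seven_mul_sum_rescale_partitionSeries_add_expand (hζ : IsPrimitiveRoot ζ 13) :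
    X ^ 7 * ∑ j : Fin 13, C (ζ ^ (7 * (j : ℕ))) * rescale (ζ ^ (j : ℕ)) (partitionSeries F) +
      expand (13 ^ 2) (by decide) (partitionSeries F) =
        expand 13 (by decide) (partitionSeries F) ^ 13 := by
  have : CharP F⟦X⟧ 2 := charP_powerSeries F 2
  have inverse := partitionSeries_mul_pentagonalSeries F
  set Y := expand 13 (by decide) (pentagonalSeries F)
  set Y' := expand 13 (by decide) (partitionSeries F)
  set W := expand (13 ^ 2) (by decide) (pentagonalSeries F)
  set W' := expand (13 ^ 2) (by decide) (partitionSeries F)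
  set S := ∑ j : Fin 13, C (ζ ^ (7 * (j : ℕ))) * rescale (ζ ^ (j : ℕ)) (partitionSeries F)
  set N := ∏ j : Fin 13, C (ζ ^ (6 * (j : ℕ))) * rescale (ζ ^ (j : ℕ)) (pentagonalSeries F)
  have Y_inv : Y' * Y = 1 := by rw [← map_mul, inverse, map_one]
  have W_inv : W' * W = 1 := by rw [← map_mul, inverse, map_one]
  have norm : N * W = Y ^ 14 := prod_C_mul_rescale_pentagonalSeries_mul_expand hζ
  have newton : N * (1 + X ^ 7 * W * S) = Y := by
    have := card_mul_prod_mul_one_add_of_sum_pow_eq_zero (w := X ^ 7 * W)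
      (fun j : Fin 13 => C_mul_rescale_pentagonalSeries_mul_partitionSeries hζ j)
      fun k hk hk13 => sum_pow_add_pow_eq_zero hζ hk (by simpa using hk13)
    rw [Fintype.card_fin, sum_pow_thirteen_add_pow_thirteen hζ,
      natCast_eq_one_of_odd (by decide)] at this
    linear_combination this
  calc X ^ 7 * S + W' = W' * (1 + X ^ 7 * W * S) := by linear_combination (-X ^ 7 * S) * W_inv
    _ = W' * (Y' * Y) ^ 14 * (1 + X ^ 7 * W * S) := by rw [Y_inv]; ring
    _ = Y' ^ 14 * (W' * W) * (N * (1 + X ^ 7 * W * S)) := by rw [mul_pow, ← norm]; ring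
    _ = Y' ^ 13 * (Y' * Y) := by rw [newton, W_inv]; ring
    _ = Y' ^ 13 := by rw [Y_inv, mul_one]

theorem coeff_expand_mul_partitionSeries_of_isPrimitiveRoot (hζ : IsPrimitiveRoot ζ 13)
    (G : F⟦X⟧) {m : ℕ} (hm : 0 < m) :
    coeff (13 * m - 7) (expand 13 (by decide) G * partitionSeries F) +
      coeff m (G * expand 13 (by decide) (partitionSeries F)) =
        coeff m (G * partitionSeries F ^ 13) := by
  have expand_sq : expand (13 ^ 2) (by decide) (partitionSeries F) =
      expand 13 (by decide) (expand 13 (by decide) (partitionSeries F)) := expand_mul ..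
  have key := congrArg (coeff (13 * m) <| · * expand 13 (by decide) G)
    (X_pow_seven_mul_sum_rescale_partitionSeries_add_expand hζ)
  simp only [add_mul, mul_assoc (X ^ 7)] at key
  rw [sum_C_mul_rescale_mul_expand _ hζ.pow_eq_one, map_add, coeff_X_pow_mul', if_pos (by omega),
    coeff_sum_C_mul_rescale hζ, if_pos (by omega), natCast_eq_one_of_odd (by decide), one_mul,
    expand_sq, ← map_mul, ← map_pow, ← map_mul, coeff_expand_mul, coeff_expand_mul] at key
  rwa [mul_comm (expand _ _ G), mul_comm G, mul_comm G]

theorem coeff_expand_mul_partitionSeries (G : (ZMod 2)⟦X⟧) {m : ℕ} (hm : 0 < m) :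
    coeff (13 * m - 7) (expand 13 (by decide) G * partitionSeries (ZMod 2)) +
      coeff m (G * expand 13 (by decide) (partitionSeries (ZMod 2))) =
        coeff m (G * partitionSeries (ZMod 2) ^ 13) := by
  have : NeZero ((13 : ℕ) : ZMod 2) := ⟨by decide⟩
  obtain ⟨ζ, hζ⟩ := HasEnoughRootsOfUnity.exists_primitiveRoot (AlgebraicClosure (ZMod 2)) 13
  let φ := algebraMap (ZMod 2) (AlgebraicClosure (ZMod 2))
  apply φ.injective
  simpa [φ, ← coeff_map, map_expand, map_partitionSeries] using
    coeff_expand_mul_partitionSeries_of_isPrimitiveRoot hζ (map φ G) hm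

theorem numRegularPartitions_modEq_numMultipartitions (i s n B : ℕ) (hs : 2 ^ i + s = 13)
    (hB : 0 < B) (h : ∀ x : ZMod 13, 24 * (B : ZMod 13) + 2 ^ i ≠ 2 ^ i * x ^ 2) :
    numRegularPartitions (13 * 2 ^ i) (169 * n + 13 * B - 7) ≡
      numMultipartitions s (13 * n + B) [MOD 2] := by
  set f := pentagonalSeries (ZMod 2)
  set q := partitionSeries (ZMod 2)
  have inverse : q * f = 1 := partitionSeries_mul_pentagonalSeries _
  have regular : (mk fun k => (numRegularPartitions (13 * 2 ^ i) k : ZMod 2)) =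
      expand 13 (by decide) (f ^ 2 ^ i) * q := by
    rw [pow_prime_pow_eq_expand, ← expand_mul, ← mk_numRegularPartitions_mul_pentagonalSeries,
      mul_assoc, mul_comm f, inverse, mul_one]
  have vanishing : coeff (13 * n + B) (f ^ 2 ^ i * expand 13 (by decide) q) = 0 := by
    rw [pow_prime_pow_eq_expand]
    refine coeff_expand_pentagonalSeries_mul_expand_partitionSeries_eq_zero _ _ fun x => ?_
    simpa [show (13 : ZMod 13) = 0 from rfl] using h x
  rw [← ZMod.natCast_eq_natCast_iff]
  calc (numRegularPartitions (13 * 2 ^ i) (169 * n + 13 * B - 7) : ZMod 2)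
      = coeff (13 * (13 * n + B) - 7) (expand 13 (by decide) (f ^ 2 ^ i) * q) := by
        rw [← regular, coeff_mk]
        congr 2
        omega
    _ = coeff (13 * n + B) (f ^ 2 ^ i * q ^ 13) := by
        rw [← coeff_expand_mul_partitionSeries _ (by omega), vanishing, add_zero]
    _ = coeff (13 * n + B) (q ^ s) := by
        rw [← hs, pow_add, ← mul_assoc, ← mul_pow, mul_comm f, inverse, one_pow, one_mul]
    _ = numMultipartitions s (13 * n + B) := (natCast_numMultipartitions s _).symm

end Dissection

end RegularPartitionParity

theorem stmt_3 (n : ℕ) :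
    (∀ B ∈ ({3, 6, 7, 8, 9, 12} : Finset ℕ),
      numRegularPartitions 26 (169 * n + 13 * B - 7) ≡
        numMultipartitions 11 (13 * n + B) [MOD 2]) ∧
    (∀ B ∈ ({1, 3, 5, 6, 11, 12} : Finset ℕ),
      numRegularPartitions 52 (169 * n + 13 * B - 7) ≡
        numMultipartitions 9 (13 * n + B) [MOD 2]) ∧
    (∀ B ∈ ({2, 6, 9, 10, 11, 12} : Finset ℕ),
      numRegularPartitions 104 (169 * n + 13 * B - 7) ≡
        numMultipartitions 5 (13 * n + B) [MOD 2]) := by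
  refine ⟨fun B hB => ?_, fun B hB => ?_, fun B hB => ?_⟩
  · refine RegularPartitionParity.numRegularPartitions_modEq_numMultipartitions
      1 11 n B rfl ?_ ?_ <;> decide +revert
  · refine RegularPartitionParity.numRegularPartitions_modEq_numMultipartitions
      2 9 n B rfl ?_ ?_ <;> decide +revert
  · refine RegularPartitionParity.numRegularPartitions_modEq_numMultipartitions
      3 5 n B rfl ?_ ?_ <;> decide +revert
end
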